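/- arXiv:1204.4694 — 2 statements merged into one kernel-verified Lean document; each statement's English description precedes it below -/
import Mathlib

section
/- Fix a Hamiltonian H as in the context. For each n ≥ 1 let S_n ≤ 0 and τ_n ∈ [0,1) be real numbers and let z_n : [S_n,∞)×ℝ → D be a C^∞ map satisfying: z_n(s,t+n) = z_n(s,t); the Floer equation ∂_s z_n + i·(∂_t z_n − X_H(t+τ_n, z_n)) = 0; and |z_n(S_n,t)| = 1 for all t. Assume the Floer energies E_n := (1/2)·∫_{S_n}^∞ ∫_0^n |∂_s z_n|² + |∂_t z_n − X_H(t+τ_n, z_n)|² dt ds converge to 0 as n → ∞. Then there exist a subsequence n_j, a value S ∈ [−∞,0], a constant τ₀ ∈ [0,1], and a C^∞ curve γ : ℝ → D solving γ'(t) = X_H(t+τ₀, γ(t)) for all t ∈ ℝ, such that S_{n_j} → S, τ_{n_j} → τ₀, and the maps z_{n_j}, together with all their partial derivatives, converge uniformly on every compact subset of the interior of Σ to the map (s,t) ↦ γ(t) and its corresponding derivatives, where Σ = [S,∞)×ℝ if S is finite and Σ = ℝ² if S = −∞. -/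
open Complex Set MeasureTheory ENNReal Filter

def Disk : Set ℂ := Metric.closedBall 0 1

/-- The Hamiltonian vector field `X_H(t,z) = (−∂_y H, ∂_x H)`, written in complex
notation as `i · (∂_x H + i ∂_y H)`. -/
noncomputable def XH (H : ℝ → ℂ → ℝ) (t : ℝ) (w : ℂ) : ℂ :=
  Complex.I * ((fderiv ℝ (H t) w 1 : ℝ) + (fderiv ℝ (H t) w Complex.I : ℝ) * Complex.I)

/-- Admissible Hamiltonians: smooth, 1-periodic in time, constant on the boundary circle. -/
structure IsAdmissible (H : ℝ → ℂ → ℝ) : Prop where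
  smooth : ContDiff ℝ (⊤ : ℕ∞) (fun p : ℝ × ℂ => H p.1 p.2)
  periodic : ∀ (t : ℝ) (z : ℂ), H (t + 1) z = H t z
  bdry_const : ∀ (t : ℝ), ∀ z w : ℂ, ‖z‖ = 1 → ‖w‖ = 1 → H t z = H t w

/-- The half plane `[S,∞) × ℝ`. -/
def HalfPlaneFrom (S : ℝ) : Set (ℝ × ℝ) := Set.Ici S ×ˢ Set.univ

/-- Partial derivative in the `s`-direction, taken within a set `A`. -/
noncomputable def pds {E : Type*} [NormedAddCommGroup E] [NormedSpace ℝ E]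
    (A : Set (ℝ × ℝ)) (f : ℝ × ℝ → E) (p : ℝ × ℝ) : E :=
  fderivWithin ℝ f A p (1, 0)

/-- Partial derivative in the `t`-direction, taken within a set `A`. -/
noncomputable def pdt {E : Type*} [NormedAddCommGroup E] [NormedSpace ℝ E]
    (A : Set (ℝ × ℝ)) (f : ℝ × ℝ → E) (p : ℝ × ℝ) : E :=
  fderivWithin ℝ f A p (0, 1)

/-- The Floer energy of `z : [S,∞) × ℝ → D`, periodic of period `n`. -/
noncomputable def floerEnergyFrom (H : ℝ → ℂ → ℝ) (S : ℝ) (n : ℕ) (τ₀ : ℝ)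
    (z : ℝ × ℝ → ℂ) : ℝ≥0∞ :=
  (1/2 : ℝ≥0∞) *
    ∫⁻ p in Set.Ici S ×ˢ Set.Ioc (0:ℝ) (n:ℝ),
      ENNReal.ofReal (‖pds (HalfPlaneFrom S) z p‖ ^ 2 +
        ‖pdt (HalfPlaneFrom S) z p - XH H (p.2 + τ₀) (z p)‖ ^ 2)

/-- `C^∞_loc` convergence on a set `Sig`: each iterated derivative converges uniformly
on every compact subset of `Sig` to the corresponding derivative of the limit map. -/
def CinftyLocConv (Sig : Set (ℝ × ℝ)) (S : ℕ → ℝ) (ns : ℕ → ℕ)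
    (z : ℕ → ℝ × ℝ → ℂ) (γ : ℝ → ℂ) : Prop :=
  ∀ K : Set (ℝ × ℝ), IsCompact K → K ⊆ Sig → ∀ m : ℕ,
    TendstoUniformlyOn
      (fun j p => iteratedFDerivWithin ℝ m (z (ns j)) (HalfPlaneFrom (S (ns j))) p)
      (fun p => iteratedFDeriv ℝ m (fun q : ℝ × ℝ => γ q.2) p) atTop K

/-!
Where `∂_s z` is small, Floer's equation says that `t ↦ z (s, t)` nearly solves `γ' = X(γ)`, so the
matter is to pass from small energy to pointwise smallness and from there to convergence of all
derivatives. Both rest on interior estimates for `∂_s u + i ∂_t u = Φ(u)`. Stokes' formula on small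
annuli, in logarithmic polar coordinates, bounds `Du` at the centre of a disk by `sup |u|` plus a
term `r · Lip Φ · sup |Du|`; maximizing the distance to the boundary times `|Du|` absorbs this term.
The pair `(Du, u)` solves an equation of the same kind, so all derivatives are bounded. Adding time
as a further unknown makes Floer's equation autonomous.

Since `∂_s z` is Lipschitz, one large value costs a fixed amount of energy; hence `∂_s z_n → 0`
uniformly away from the boundary. By Arzelà–Ascoli the restrictions to the line `s = 1` subconverge,
their limit solves the Hamiltonian equation, and `z_n` converges to it locally uniformly. Landau's
inequality upgrades this to convergence of all derivatives.
-/

section CauchyRiemann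

open Metric

open scoped ContDiff Topology ComplexConjugate Interval

variable {E : Type*} [NormedAddCommGroup E] [NormedSpace ℂ E]

/-- The Cauchy–Riemann operator `∂_s u + i ∂_t u` of a map `u` of the variables `(s, t)`, as a
linear function of the derivative `L = Du`. -/
noncomputable def delBar : (ℝ × ℝ →L[ℝ] E) →L[ℝ] E :=
  ContinuousLinearMap.apply ℝ E (1, 0) + I • ContinuousLinearMap.apply ℝ E (0, 1)

/-- The conjugate operator `∂_s u - i ∂_t u`, as a linear function of `L = Du`. -/
noncomputable def del : (ℝ × ℝ →L[ℝ] E) →L[ℝ] E :=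
  ContinuousLinearMap.apply ℝ E (1, 0) - I • ContinuousLinearMap.apply ℝ E (0, 1)

lemma delBar_apply (L : ℝ × ℝ →L[ℝ] E) : delBar L = L (1, 0) + I • L (0, 1) := rfl

lemma del_apply (L : ℝ × ℝ →L[ℝ] E) : del L = L (1, 0) - I • L (0, 1) := rfl

lemma apply_equivRealProdCLM (L : ℝ × ℝ →L[ℝ] E) (w : ℂ) :
    L (equivRealProdCLM w) = (2 : ℂ)⁻¹ • (w • del L + conj w • delBar L) := by
  have hL : L (equivRealProdCLM w) = (w.re : ℂ) • L (1, 0) + (w.im : ℂ) • L (0, 1) := by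
    rw [Complex.coe_smul, Complex.coe_smul, ← map_smul, ← map_smul, ← map_add]
    simp
  have hconj : conj w = w.re - w.im * I := by simp [Complex.ext_iff]
  rw [hL, hconj, del_apply, delBar_apply]
  nth_rw 3 [← re_add_im w]
  match_scalars
  · ring
  · linear_combination (w.im : ℂ) * I_sq

lemma apply_add_I_smul_apply_I_mul (L : ℝ × ℝ →L[ℝ] E) (w : ℂ) :
    L (equivRealProdCLM w) + I • L (equivRealProdCLM (I * w)) = conj w • delBar L := by
  rw [apply_equivRealProdCLM, apply_equivRealProdCLM, map_mul, conj_I]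
  match_scalars
  · linear_combination (2⁻¹ * w) * I_sq
  · linear_combination (-2⁻¹ * conj w) * I_sq

lemma norm_le_norm_del_add_norm_delBar (L : ℝ × ℝ →L[ℝ] E) : ‖L‖ ≤ ‖del L‖ + ‖delBar L‖ := by
  refine L.opNorm_le_bound (by positivity) fun h => ?_
  obtain ⟨w, rfl⟩ := equivRealProdCLM.surjective h
  have hw : ‖w‖ ≤ 2 * ‖equivRealProdCLM w‖ := by
    refine (norm_le_abs_re_add_abs_im w).trans ?_
    rw [two_mul]
    exact add_le_add (norm_fst_le (equivRealProdCLM w)) (norm_snd_le (equivRealProdCLM w))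
  calc ‖L (equivRealProdCLM w)‖ ≤ 2⁻¹ * (‖w‖ * ‖del L‖ + ‖w‖ * ‖delBar L‖) := by
        rw [apply_equivRealProdCLM, norm_smul, norm_inv, RCLike.norm_ofNat]
        gcongr
        simpa only [norm_smul, norm_conj] using norm_add_le (w • del L) (conj w • delBar L)
    _ ≤ (‖del L‖ + ‖delBar L‖) * ‖equivRealProdCLM w‖ := by
        nlinarith [norm_nonneg (del L), norm_nonneg (delBar L)]

/-- The map `v` in logarithmic polar coordinates `ζ = log r + i θ` about `p`, weighted by
`exp (-ζ)`; the weight turns the linear part of `v` at `p` into a function of `θ` alone. -/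
noncomputable def logPolar (v : ℝ × ℝ → E) (p : ℝ × ℝ) (ζ : ℂ) : E :=
  exp (-ζ) • v (p + equivRealProdCLM (exp ζ))

variable {v : ℝ × ℝ → E} {p : ℝ × ℝ}

lemma dist_add_equivRealProdCLM_exp_le (p : ℝ × ℝ) (ζ : ℂ) :
    dist (p + equivRealProdCLM (exp ζ)) p ≤ Real.exp ζ.re := by
  rw [dist_eq_norm, add_sub_cancel_left, ← norm_exp]
  exact equivRealProd_apply_le _

lemma fderiv_logPolar_apply {ζ : ℂ}
    (hv : DifferentiableAt ℝ v (p + equivRealProdCLM (exp ζ))) (h : ℂ) :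
    fderiv ℝ (logPolar v p) ζ h =
      exp (-ζ) • fderiv ℝ v (p + equivRealProdCLM (exp ζ)) (equivRealProdCLM (exp ζ * h)) -
        (exp (-ζ) * h) • v (p + equivRealProdCLM (exp ζ)) := by
  have hexp := (hasDerivAt_exp ζ).complexToReal_fderiv
  have hweight := ((hasDerivAt_id ζ).neg.cexp).complexToReal_fderiv
  have hpolar := hv.hasFDerivAt.comp ζ ((equivRealProdCLM.hasFDerivAt.comp ζ hexp).const_add p)
  have hF : HasFDerivAt (logPolar v p) _ ζ := hweight.smul hpolar
  rw [hF.fderiv]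
  simp [sub_eq_add_neg]

lemma norm_I_smul_fderiv_logPolar_sub {ζ : ℂ}
    (hv : DifferentiableAt ℝ v (p + equivRealProdCLM (exp ζ))) :
    ‖I • fderiv ℝ (logPolar v p) ζ 1 - fderiv ℝ (logPolar v p) ζ I‖ =
      ‖delBar (fderiv ℝ v (p + equivRealProdCLM (exp ζ)))‖ := by
  set L := fderiv ℝ v (p + equivRealProdCLM (exp ζ)) with hL
  have key : I • fderiv ℝ (logPolar v p) ζ 1 - fderiv ℝ (logPolar v p) ζ I =
      (I * exp (-ζ) * conj (exp ζ)) • delBar L := by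
    rw [fderiv_logPolar_apply hv, fderiv_logPolar_apply hv, ← hL, mul_smul (I * exp (-ζ)),
      ← apply_add_I_smul_apply_I_mul, mul_one, mul_comm (exp ζ) I]
    match_scalars <;> ring_nf
    simp
  rw [key, norm_smul, norm_mul, norm_mul, norm_conj, norm_I, one_mul, ← norm_mul, ← exp_add]
  simp

lemma contDiffAt_logPolar {n : WithTop ℕ∞} {ζ : ℂ}
    (hv : ContDiffAt ℝ n v (p + equivRealProdCLM (exp ζ))) : ContDiffAt ℝ n (logPolar v p) ζ := by
  have hpolar : ContDiffAt ℝ n (fun ζ => p + equivRealProdCLM (exp ζ)) ζ :=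
    contDiffAt_const.add
      (equivRealProdCLM.contDiff.contDiffAt.comp ζ (contDiff_exp (𝕜 := ℝ)).contDiffAt)
  exact (contDiff_exp.comp contDiff_neg).contDiffAt.smul (hv.comp ζ hpolar)

lemma logPolar_sub (v w : ℝ × ℝ → E) (p : ℝ × ℝ) (ζ : ℂ) :
    logPolar (v - w) p ζ = logPolar v p ζ - logPolar w p ζ := smul_sub _ _ _

lemma logPolar_add_two_pi_mul_I (v : ℝ × ℝ → E) (p : ℝ × ℝ) (ζ : ℂ) :
    logPolar v p (ζ + 2 * Real.pi * I) = logPolar v p ζ := by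
  rw [logPolar, logPolar, exp_periodic, exp_neg, exp_periodic, ← exp_neg]

lemma add_equivRealProdCLM_exp_mem_closedBall {b : ℝ} (p : ℝ × ℝ) {ζ : ℂ} (hζ : ζ.re ≤ b) :
    p + equivRealProdCLM (exp ζ) ∈ closedBall p (Real.exp b) :=
  (dist_add_equivRealProdCLM_exp_le p ζ).trans (Real.exp_le_exp.2 hζ)

/-- Stokes' formula on the annulus `exp a ≤ r ≤ exp b`. -/
lemma I_smul_integral_logPolar_sub {a b : ℝ} (hab : a ≤ b)
    (hv : ∀ q ∈ closedBall p (Real.exp b), ContDiffAt ℝ 1 v q) :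
    I • ((∫ θ in 0..2 * Real.pi, logPolar v p (b + θ * I)) -
        ∫ θ in 0..2 * Real.pi, logPolar v p (a + θ * I)) =
      ∫ x in a..b, ∫ θ in 0..2 * Real.pi, (I • fderiv ℝ (logPolar v p) (x + θ * I) 1 -
        fderiv ℝ (logPolar v p) (x + θ * I) I) := by
  have hF {ζ : ℂ} (hζ : ζ ∈ [[a, b]] ×ℂ [[0, 2 * Real.pi]]) : ContDiffAt ℝ 1 (logPolar v p) ζ :=
    contDiffAt_logPolar (hv _ (add_equivRealProdCLM_exp_mem_closedBall p
      (uIcc_of_le hab ▸ (mem_reProdIm.1 hζ).1).2))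
  have hdbar : ContinuousOn (fun ζ => I • fderiv ℝ (logPolar v p) ζ 1 - fderiv ℝ (logPolar v p) ζ I)
      ([[a, b]] ×ℂ [[0, 2 * Real.pi]]) := fun ζ hζ => by
    have := ((hF hζ).fderiv_right (m := 0) (by simp)).continuousAt
    exact ContinuousAt.continuousWithinAt (by fun_prop)
  have hstokes := integral_boundary_rect_of_differentiableOn_real (logPolar v p) a
    (b + 2 * Real.pi * I)
    (fun ζ hζ => ((hF (by simpa using hζ)).differentiableAt (by simp)).differentiableWithinAt)
    (by simpa using hdbar.integrableOn_compact (isCompact_uIcc.reProdIm isCompact_uIcc))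
  have hper (x : ℝ) : logPolar v p (x + 2 * Real.pi * I) = logPolar v p x :=
    logPolar_add_two_pi_mul_I v p x
  simpa [hper, smul_sub] using hstokes

lemma norm_integral_logPolar_sub_le {a b G : ℝ} (hab : a ≤ b) (hG0 : 0 ≤ G)
    (hv : ∀ q ∈ closedBall p (Real.exp b), ContDiffAt ℝ 1 v q)
    (hG : ∀ q ∈ closedBall p (Real.exp b), ‖delBar (fderiv ℝ v q)‖ ≤ G * dist q p) :
    ‖(∫ θ in 0..2 * Real.pi, logPolar v p (b + θ * I)) -
      ∫ θ in 0..2 * Real.pi, logPolar v p (a + θ * I)‖ ≤ 2 * Real.pi * (G * Real.exp b) := by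
  have hpoint {x : ℝ} (hx : x ≤ b) (θ : ℝ) : ‖I • fderiv ℝ (logPolar v p) (x + θ * I) 1 -
      fderiv ℝ (logPolar v p) (x + θ * I) I‖ ≤ G * Real.exp x := by
    have hre : ((x : ℂ) + θ * I).re = x := by simp
    have hq := add_equivRealProdCLM_exp_mem_closedBall p (hre.trans_le hx)
    rw [norm_I_smul_fderiv_logPolar_sub ((hv _ hq).differentiableAt (by simp))]
    refine (hG _ hq).trans (mul_le_mul_of_nonneg_left ?_ hG0)
    exact (dist_add_equivRealProdCLM_exp_le p _).trans_eq (by rw [hre])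
  have hcircle {x : ℝ} (hx : x ≤ b) : ‖∫ θ in 0..2 * Real.pi,
      (I • fderiv ℝ (logPolar v p) (x + θ * I) 1 - fderiv ℝ (logPolar v p) (x + θ * I) I)‖ ≤
        G * Real.exp x * (2 * Real.pi) := by
    simpa [abs_of_pos Real.pi_pos] using
      intervalIntegral.norm_integral_le_of_norm_le_const (a := 0) (b := 2 * Real.pi)
        fun θ _ => hpoint hx θ
  rw [← one_mul ‖_‖, ← norm_I, ← norm_smul, I_smul_integral_logPolar_sub hab hv]
  calc _ ≤ ∫ x in a..b, G * Real.exp x * (2 * Real.pi) :=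
        intervalIntegral.norm_integral_le_of_norm_le hab
          (ae_of_all _ fun x hx => hcircle hx.2) (Continuous.intervalIntegrable (by fun_prop) _ _)
    _ = 2 * Real.pi * (G * (Real.exp b - Real.exp a)) := by
        rw [intervalIntegral.integral_mul_const, intervalIntegral.integral_const_mul, integral_exp]
        ring
    _ ≤ 2 * Real.pi * (G * Real.exp b) := by
        gcongr
        exact sub_le_self _ (Real.exp_nonneg a)

lemma norm_integral_logPolar_le_of_norm_delBar_le {b G : ℝ} (hG0 : 0 ≤ G)
    (hv : ∀ q ∈ closedBall p (Real.exp b), ContDiffAt ℝ 1 v q)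
    (hG : ∀ q ∈ closedBall p (Real.exp b), ‖delBar (fderiv ℝ v q)‖ ≤ G * dist q p)
    (hvp : v p = 0) (hDvp : fderiv ℝ v p = 0) :
    ‖∫ θ in 0..2 * Real.pi, logPolar v p (b + θ * I)‖ ≤ 2 * Real.pi * (G * Real.exp b) := by
  refine le_of_forall_pos_le_add fun ε hε => ?_
  have hlittleO : ∀ᶠ q in 𝓝 p, ‖v q‖ ≤ ε / (2 * Real.pi) * dist q p := by
    have h := ((hv p (mem_closedBall_self (Real.exp_nonneg b))).differentiableAt
      (by simp)).hasFDerivAt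
    simpa [hDvp, hvp, dist_eq_norm] using h.isLittleO.def (div_pos hε Real.two_pi_pos)
  obtain ⟨r, hr, hball⟩ := Metric.eventually_nhds_iff_ball.1 hlittleO
  obtain ⟨a, hab, har⟩ : ∃ a ≤ b, Real.exp a < r :=
    ((eventually_le_atBot b).and (Real.tendsto_exp_atBot.eventually_lt_const hr)).exists
  have hinner : ‖∫ θ in 0..2 * Real.pi, logPolar v p (a + θ * I)‖ ≤ ε := by
    calc _ ≤ ε / (2 * Real.pi) * |2 * Real.pi - 0| :=
          intervalIntegral.norm_integral_le_of_norm_le_const fun θ _ => ?_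
      _ = ε := by rw [sub_zero, abs_of_pos Real.two_pi_pos]; field_simp
    have hre : ((a : ℂ) + θ * I).re = a := by simp
    have hdist := hre ▸ dist_add_equivRealProdCLM_exp_le p (a + θ * I)
    rw [logPolar, norm_smul, norm_exp, neg_re, hre, Real.exp_neg,
      inv_mul_le_iff₀ (Real.exp_pos a), mul_comm (Real.exp a)]
    exact (hball _ (hdist.trans_lt har)).trans (by gcongr)
  calc _ ≤ ‖(∫ θ in 0..2 * Real.pi, logPolar v p (b + θ * I)) -
        ∫ θ in 0..2 * Real.pi, logPolar v p (a + θ * I)‖ +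
        ‖∫ θ in 0..2 * Real.pi, logPolar v p (a + θ * I)‖ := norm_le_norm_sub_add _ _
    _ ≤ _ := add_le_add (norm_integral_logPolar_sub_le hab hG0 hv hG) hinner

lemma intervalIntegrable_logPolar {b : ℝ}
    (hv : ∀ q ∈ closedBall p (Real.exp b), ContinuousAt v q) (α β : ℝ) :
    IntervalIntegrable (fun θ : ℝ => logPolar v p (b + θ * I)) volume α β := by
  refine Continuous.intervalIntegrable (continuous_iff_continuousAt.2 fun θ => ?_) _ _
  have hq := hv _ (add_equivRealProdCLM_exp_mem_closedBall p (ζ := b + θ * I) (by simp))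
  have hcirc : ContinuousAt (fun θ : ℝ => p + equivRealProdCLM (exp (b + θ * I))) θ := by fun_prop
  exact ContinuousAt.smul (by fun_prop) (ContinuousAt.comp (g := v) hq hcirc)

lemma integral_exp_int_mul_I {k : ℤ} (hk : k ≠ 0) :
    ∫ θ in 0..2 * Real.pi, exp (k * I * θ) = 0 := by
  have hper : exp (k * I * ((2 * Real.pi : ℝ) : ℂ)) = 1 :=
    exp_eq_one_iff.2 ⟨k, by push_cast; ring⟩
  rw [integral_exp_mul_complex (by simpa using hk), hper]
  simp

lemma integral_logPolar_affine [CompleteSpace E] (c : E) (A : ℝ × ℝ →L[ℝ] E) (b : ℝ) :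
    ∫ θ in 0..2 * Real.pi, logPolar (fun q => c + A (q - p)) p (b + θ * I) =
      (Real.pi : ℂ) • del A := by
  have hexpand (θ : ℝ) : logPolar (fun q => c + A (q - p)) p (b + θ * I) =
      exp ((-1 : ℤ) * I * θ) • exp (-b) • c + (2 : ℂ)⁻¹ • del A +
        exp ((-2 : ℤ) * I * θ) • (2 : ℂ)⁻¹ • delBar A := by
    simp only [logPolar, add_sub_cancel_left, apply_equivRealProdCLM, ← exp_conj]
    match_scalars
    · rw [mul_one, mul_one, ← exp_add]
      simp [add_comm, mul_comm]
    · rw [mul_one, mul_left_comm, ← exp_add]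
      simp
    · rw [mul_one, mul_one, mul_left_comm, ← exp_add, mul_comm]
      congr 2
      simp
      ring
  have hint (k : ℤ) (x : E) :
      IntervalIntegrable (fun θ : ℝ => exp (k * I * θ) • x) volume 0 (2 * Real.pi) :=
    Continuous.intervalIntegrable (by fun_prop) _ _
  simp_rw [hexpand]
  rw [intervalIntegral.integral_add ((hint _ _).add (by simp)) (hint _ _),
    intervalIntegral.integral_add (hint _ _) (by simp), intervalIntegral.integral_const]
  simp only [intervalIntegral.integral_smul_const, integral_exp_int_mul_I (k := -1) (by simp),
    integral_exp_int_mul_I (k := -2) (by simp), zero_smul, zero_add, add_zero, sub_zero]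
  rw [← Complex.coe_smul, smul_smul]
  congr 1
  push_cast
  ring

lemma norm_integral_logPolar_le_of_norm_le {b M : ℝ}
    (hM : ∀ q ∈ closedBall p (Real.exp b), ‖v q‖ ≤ M) :
    ‖∫ θ in 0..2 * Real.pi, logPolar v p (b + θ * I)‖ ≤ 2 * Real.pi * (M / Real.exp b) := by
  have hpoint (θ : ℝ) : ‖logPolar v p (b + θ * I)‖ ≤ M / Real.exp b := by
    have hre : ((b : ℂ) + θ * I).re = b := by simp
    rw [logPolar, norm_smul, norm_exp, neg_re, hre, Real.exp_neg, inv_mul_eq_div]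
    gcongr
    exact hM _ (add_equivRealProdCLM_exp_mem_closedBall p hre.le)
  simpa [abs_of_pos Real.pi_pos, mul_comm] using
    intervalIntegral.norm_integral_le_of_norm_le_const (a := 0) (b := 2 * Real.pi)
      fun θ _ => hpoint θ

/-- Cauchy's estimate for the inhomogeneous Cauchy–Riemann equation. -/
lemma norm_del_fderiv_le [CompleteSpace E] {r M G : ℝ} (hr : 0 < r) (hG0 : 0 ≤ G)
    (hv : ∀ q ∈ closedBall p r, ContDiffAt ℝ 1 v q) (hM : ∀ q ∈ closedBall p r, ‖v q‖ ≤ M)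
    (hG : ∀ q ∈ closedBall p r,
      ‖delBar (fderiv ℝ v q) - delBar (fderiv ℝ v p)‖ ≤ G * dist q p) :
    ‖del (fderiv ℝ v p)‖ ≤ 2 * (M / r + G * r) := by
  obtain ⟨b, rfl⟩ : ∃ b, Real.exp b = r := ⟨Real.log r, Real.exp_log hr⟩
  set A := fderiv ℝ v p
  set ℓ : ℝ × ℝ → E := fun q => v p + A (q - p)
  have hℓ (q : ℝ × ℝ) : HasFDerivAt ℓ A q :=
    ((A.hasFDerivAt.comp q ((hasFDerivAt_id q).sub_const p))).const_add (v p)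
  have hsub : ∀ q ∈ closedBall p (Real.exp b), fderiv ℝ (v - ℓ) q = fderiv ℝ v q - A :=
    fun q hq => (((hv q hq).differentiableAt (by simp)).hasFDerivAt.sub (hℓ q)).fderiv
  have hremainder := norm_integral_logPolar_le_of_norm_delBar_le (v := v - ℓ) (p := p) hG0
    (fun q hq => (hv q hq).sub (by simp only [ℓ]; fun_prop))
    (fun q hq => by rw [hsub q hq, map_sub]; exact hG q hq)
    (by simp [ℓ]) (by rw [hsub p (mem_closedBall_self hr.le), sub_self])
  have hsplit : (∫ θ in 0..2 * Real.pi, logPolar (v - ℓ) p (b + θ * I)) =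
      (∫ θ in 0..2 * Real.pi, logPolar v p (b + θ * I)) - (Real.pi : ℂ) • del A := by
    simp_rw [logPolar_sub]
    rw [← integral_logPolar_affine (p := p) (v p) A b]
    exact intervalIntegral.integral_sub
      (intervalIntegrable_logPolar (fun q hq => (hv q hq).continuousAt) _ _)
      (intervalIntegrable_logPolar (fun q _ => (hℓ q).continuousAt) _ _)
  refine le_of_mul_le_mul_left ?_ Real.pi_pos
  calc Real.pi * ‖del A‖ = ‖(Real.pi : ℂ) • del A‖ := by simp [norm_smul, abs_of_pos Real.pi_pos]
    _ ≤ 2 * Real.pi * (M / Real.exp b) + 2 * Real.pi * (G * Real.exp b) :=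
      (norm_le_norm_add_norm_sub _ _).trans
        (add_le_add (norm_integral_logPolar_le_of_norm_le hM) (hsplit ▸ hremainder))
    _ = Real.pi * (2 * (M / Real.exp b + G * Real.exp b)) := by ring

lemma le_of_interior_estimate {X : Type*} [PseudoMetricSpace X] [ProperSpace X] {a b c R : ℝ}
    (ha : 0 ≤ a) (hb : 0 ≤ b) (hc : 0 ≤ c) (hR : 0 < R) {φ : X → ℝ} {p : X}
    (hφ : ContinuousOn φ (closedBall p R))
    (h : ∀ x r N, 0 < r → closedBall x r ⊆ closedBall p R → (∀ y ∈ closedBall x r, φ y ≤ N) →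
      φ x ≤ a / r + b + c * r * N) :
    φ p ≤ 2 * (a * (4 * c * R + 2) / R + b) := by
  obtain ⟨x, hx, hmax⟩ := (isCompact_closedBall p R).exists_isMaxOn
    ⟨p, mem_closedBall_self hR.le⟩
    (f := fun q => (R - dist q p) * φ q) (by fun_prop)
  set A := (R - dist x p) * φ x with hA
  have hAp : R * φ p ≤ A := by simpa using hmax (mem_closedBall_self hR.le)
  suffices hbound : A ≤ 2 * (a * (4 * c * R + 2) + b * R) by
    rw [← mul_le_mul_iff_right₀ hR]
    calc R * φ p ≤ 2 * (a * (4 * c * R + 2) + b * R) := hAp.trans hbound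
      _ = _ := by field_simp
  rcases le_or_gt A 0 with hA0 | hA0
  · exact hA0.trans (by positivity)
  have hd : 0 < R - dist x p :=
    (sub_nonneg.2 hx).lt_of_ne fun h0 => hA0.ne' (by rw [hA, ← h0, zero_mul])
  set d := R - dist x p
  set k := 4 * c * R + 2 with hk
  have hk0 : 2 ≤ k := by rw [hk]; linarith [show 0 ≤ 4 * c * R by positivity]
  have hr : d / k ≤ d / 2 := by gcongr
  have hy {y : X} (hy : y ∈ closedBall x (d / k)) : d / 2 ≤ R - dist y p := by
    linarith [dist_triangle y x p, mem_closedBall.1 hy]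
  have hsub : closedBall x (d / k) ⊆ closedBall p R := fun y hyx =>
    mem_closedBall.2 (by linarith [hy hyx])
  have hest := h x (d / k) (A / (d / 2)) (by positivity) hsub fun y hyx => by
    rw [le_div_iff₀ (by positivity)]
    by_contra! hlt
    have : (R - dist y p) * φ y ≤ A := hmax (hsub hyx)
    nlinarith [hy hyx]
  have hdR : d ≤ R := by linarith [dist_nonneg (x := x) (y := p)]
  have hscaled : A ≤ a * k + b * d + 2 * c * d * A / k := by
    calc A ≤ d * (a / (d / k) + b + c * (d / k) * (A / (d / 2))) :=
          mul_le_mul_of_nonneg_left hest hd.le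
      _ = _ := by field_simp
  have habsorb : 2 * c * d * A / k ≤ A / 2 := by
    rw [div_le_div_iff₀ (by positivity) two_pos, hk]
    nlinarith [mul_nonneg hc hA0.le]
  nlinarith

/-- `u` is a smooth solution on `U` of the autonomous semilinear Cauchy–Riemann equation
`∂_s u + i ∂_t u = Φ(u)`. -/
structure IsCRSolutionOn (Φ : E → E) (u : ℝ × ℝ → E) (U : Set (ℝ × ℝ)) : Prop where
  contDiffAt : ∀ q ∈ U, ContDiffAt ℝ ∞ u q
  delBar_eq : ∀ q ∈ U, delBar (fderiv ℝ u q) = Φ (u q)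

namespace IsCRSolutionOn

variable {Φ : E → E} {u : ℝ × ℝ → E} {U V : Set (ℝ × ℝ)}

lemma mono (hu : IsCRSolutionOn Φ u V) (hUV : U ⊆ V) : IsCRSolutionOn Φ u U :=
  ⟨fun q hq => hu.contDiffAt q (hUV hq), fun q hq => hu.delBar_eq q (hUV hq)⟩

lemma differentiableAt (hu : IsCRSolutionOn Φ u U) {q : ℝ × ℝ} (hq : q ∈ U) :
    DifferentiableAt ℝ u q :=
  (hu.contDiffAt q hq).differentiableAt (by simp)

lemma norm_fderiv_le [CompleteSpace E] {r M B N : ℝ} {L : NNReal}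
    (hu : IsCRSolutionOn Φ u (closedBall p r)) (hr : 0 < r)
    (hM : ∀ q ∈ closedBall p r, ‖u q‖ ≤ M) (hL : LipschitzOnWith L Φ (closedBall 0 M))
    (hB : ∀ x ∈ closedBall (0 : E) M, ‖Φ x‖ ≤ B)
    (hN : ∀ q ∈ closedBall p r, ‖fderiv ℝ u q‖ ≤ N) :
    ‖fderiv ℝ u p‖ ≤ 2 * M / r + B + 2 * L * r * N := by
  have hp : p ∈ closedBall p r := mem_closedBall_self hr.le
  have hmem {q : ℝ × ℝ} (hq : q ∈ closedBall p r) : u q ∈ closedBall (0 : E) M :=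
    mem_closedBall_zero_iff.2 (hM q hq)
  have hN0 : 0 ≤ N := (norm_nonneg _).trans (hN p hp)
  have hdel : ‖del (fderiv ℝ u p)‖ ≤ 2 * (M / r + L * N * r) := by
    refine norm_del_fderiv_le hr (by positivity)
      (fun q hq => (hu.contDiffAt q hq).of_le (by simp)) hM fun q hq => ?_
    rw [hu.delBar_eq q hq, hu.delBar_eq p hp, mul_assoc, dist_eq_norm]
    refine (hL.norm_sub_le (hmem hq) (hmem hp)).trans ?_
    gcongr
    exact (convex_closedBall p r).norm_image_sub_le_of_norm_fderiv_le
      (fun x hx => hu.differentiableAt hx) hN hp hq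
  have hdelBar : ‖delBar (fderiv ℝ u p)‖ ≤ B := hu.delBar_eq p hp ▸ hB _ (hmem hp)
  calc ‖fderiv ℝ u p‖ ≤ 2 * (M / r + L * N * r) + B :=
        (norm_le_norm_del_add_norm_delBar _).trans (add_le_add hdel hdelBar)
    _ = 2 * M / r + B + 2 * L * r * N := by ring

lemma exists_norm_fderiv_le [FiniteDimensional ℝ E] (hΦ : ContDiff ℝ 1 Φ) (M : ℝ) {R : ℝ}
    (hR : 0 < R) : ∃ C, ∀ u p, IsCRSolutionOn Φ u (closedBall p R) →
      (∀ q ∈ closedBall p R, ‖u q‖ ≤ M) → ‖fderiv ℝ u p‖ ≤ C := by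
  have hcpt := isCompact_closedBall (0 : E) M
  obtain ⟨B, hB⟩ := hcpt.exists_bound_of_continuousOn hΦ.continuous.continuousOn
  obtain ⟨L, hL⟩ := hΦ.locallyLipschitz.locallyLipschitzOn.exists_lipschitzOnWith_of_compact hcpt
  have := FiniteDimensional.complete ℝ E
  refine ⟨2 * (2 * M * (4 * (2 * L) * R + 2) / R + B), fun u p hu hM => ?_⟩
  have hp : p ∈ closedBall p R := mem_closedBall_self hR.le
  have hM0 : 0 ≤ M := (norm_nonneg _).trans (hM p hp)
  have hB0 : 0 ≤ B := (norm_nonneg _).trans (hB (u p) (mem_closedBall_zero_iff.2 (hM p hp)))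
  refine le_of_interior_estimate (φ := fun q => ‖fderiv ℝ u q‖) (by positivity) hB0 (by positivity)
    hR (fun q hq => ?_) fun q r N hr hsub hN => (hu.mono hsub).norm_fderiv_le hr
      (fun x hx => hM x (hsub hx)) hL hB hN
  exact ((hu.contDiffAt q hq).fderiv_right (m := 0) (by simp)).continuousAt.norm.continuousWithinAt

end IsCRSolutionOn

/-- The right-hand side of the autonomous equation satisfied by the pair `(Du, u)`. -/
noncomputable def prolongation (Φ : E → E) (x : (ℝ × ℝ →L[ℝ] E) × E) : (ℝ × ℝ →L[ℝ] E) × E :=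
  ((fderiv ℝ Φ x.2).comp x.1, Φ x.2)

lemma contDiff_prolongation {Φ : E → E} (hΦ : ContDiff ℝ ∞ Φ) :
    ContDiff ℝ ∞ (prolongation Φ) := by
  have hDΦ : ContDiff ℝ ∞ (fderiv ℝ Φ) := hΦ.fderiv_right (by simp)
  exact ((hDΦ.comp contDiff_snd).clm_comp contDiff_fst).prodMk (hΦ.comp contDiff_snd)

lemma IsCRSolutionOn.prolong {Φ : E → E} {u : ℝ × ℝ → E} {U : Set (ℝ × ℝ)}
    (hu : IsCRSolutionOn Φ u U) (hU : IsOpen U) (hΦ : ContDiff ℝ ∞ Φ) :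
    IsCRSolutionOn (prolongation Φ) (fun q => (fderiv ℝ u q, u q)) U := by
  have hDu : ∀ q ∈ U, ContDiffAt ℝ ∞ (fderiv ℝ u) q := fun q hq =>
    (hu.contDiffAt q hq).fderiv_right (by simp)
  refine ⟨fun q hq => (hDu q hq).prodMk (hu.contDiffAt q hq), fun q hq => ?_⟩
  have hD2u_q := ((hDu q hq).differentiableAt (by simp)).hasFDerivAt
  have hDu_q := (hu.differentiableAt hq).hasFDerivAt
  have hsymm : IsSymmSndFDerivAt ℝ u q := (hu.contDiffAt q hq).isSymmSndFDerivAt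
    (by rw [minSmoothness_of_isRCLikeNormedField]; exact WithTop.coe_le_coe.2 le_top)
  have hdiff : delBar ∘L fderiv ℝ (fderiv ℝ u) q = (fderiv ℝ Φ (u q)) ∘L (fderiv ℝ u q) := by
    refine (delBar.hasFDerivAt.comp q hD2u_q).unique ?_
    refine (((hΦ.differentiable (by simp) _).hasFDerivAt.comp q hDu_q)).congr_of_eventuallyEq ?_
    filter_upwards [hU.mem_nhds hq] with x hx using hu.delBar_eq x hx
  rw [(hD2u_q.prodMk hDu_q).fderiv]
  refine Prod.ext (ContinuousLinearMap.ext fun h => ?_) (hu.delBar_eq q hq)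
  calc fderiv ℝ (fderiv ℝ u) q (1, 0) h + I • fderiv ℝ (fderiv ℝ u) q (0, 1) h
      = delBar (fderiv ℝ (fderiv ℝ u) q h) := by
        rw [hsymm.eq, hsymm.eq (0, 1), delBar_apply]
    _ = fderiv ℝ Φ (u q) (fderiv ℝ u q h) := DFunLike.congr_fun hdiff h

lemma norm_iteratedFDeriv_succ_le_prodMk {F G : Type*} [NormedAddCommGroup F]
    [NormedSpace ℝ F] [NormedAddCommGroup G] [NormedSpace ℝ G] {f : G → F} {x : G}
    (hf : ContDiffAt ℝ ∞ f x) (k : ℕ) :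
    ‖iteratedFDeriv ℝ (k + 1) f x‖ ≤ ‖iteratedFDeriv ℝ k (fun y => (fderiv ℝ f y, f y)) x‖ := by
  have hDf : ContDiffAt ℝ k (fderiv ℝ f) x := hf.fderiv_right (mod_cast le_top)
  have h := (ContinuousLinearMap.fst ℝ (G →L[ℝ] F) F).norm_iteratedFDeriv_comp_left
    (hDf.prodMk (hf.of_le (mod_cast le_top))) le_rfl
  rw [← norm_iteratedFDeriv_fderiv]
  refine h.trans (mul_le_of_le_one_left (norm_nonneg _) (ContinuousLinearMap.norm_fst_le _ _ _))

lemma IsCRSolutionOn.exists_norm_iteratedFDeriv_le [FiniteDimensional ℝ E] {Φ : E → E}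
    (hΦ : ContDiff ℝ ∞ Φ) (k : ℕ) (M : ℝ) {R : ℝ} (hR : 0 < R) :
    ∃ C, ∀ u p, IsCRSolutionOn Φ u (ball p R) → (∀ q ∈ ball p R, ‖u q‖ ≤ M) →
      ‖iteratedFDeriv ℝ k u p‖ ≤ C := by
  induction k generalizing E M R with
  | zero => exact ⟨M, fun u p _ hM => by simpa using hM p (mem_ball_self hR)⟩
  | succ k ih =>
    obtain ⟨C₁, hC₁⟩ := exists_norm_fderiv_le (hΦ.of_le (by simp)) M (R := R / 2) (by positivity)
    obtain ⟨C, hC⟩ := ih (contDiff_prolongation hΦ) (max C₁ M) (R := R / 2) (by positivity)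
    refine ⟨C, fun u p hu hM => ?_⟩
    refine (norm_iteratedFDeriv_succ_le_prodMk (hu.contDiffAt p (mem_ball_self hR)) k).trans
      (hC _ p ((hu.mono (ball_subset_ball (by linarith))).prolong isOpen_ball hΦ) fun q hq => ?_)
    have hsub : closedBall q (R / 2) ⊆ ball p R := fun x hx => by
      rw [mem_ball] at hq ⊢
      linarith [dist_triangle x q p, mem_closedBall.1 hx]
    exact norm_prod_le_iff.2 ⟨(hC₁ u q (hu.mono hsub) fun x hx => hM x (hsub hx)).trans
      (le_max_left _ _), (hM q (hsub (mem_closedBall_self (by positivity)))).trans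
      (le_max_right _ _)⟩

end CauchyRiemann

section Landau

open Metric

open scoped ContDiff Topology

variable {E F : Type*} [NormedAddCommGroup E] [NormedSpace ℝ E] [NormedAddCommGroup F]
  [NormedSpace ℝ F]

/-- Landau's interpolation inequality. -/
lemma norm_fderiv_le_of_norm_le_of_norm_iteratedFDeriv_two_le {f : E → F} {q : E} {δ η C : ℝ}
    (hη : 0 < η) (hf : ∀ x ∈ closedBall q η, ContDiffAt ℝ 2 f x)
    (hδ : ∀ x ∈ closedBall q η, ‖f x‖ ≤ δ)
    (hC : ∀ x ∈ closedBall q η, ‖iteratedFDeriv ℝ 2 f x‖ ≤ C) :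
    ‖fderiv ℝ f q‖ ≤ 2 * δ / η + C * η := by
  have hq : q ∈ closedBall q η := mem_closedBall_self hη.le
  have hδ0 : 0 ≤ δ := (norm_nonneg _).trans (hδ q hq)
  have hC0 : 0 ≤ C := (norm_nonneg _).trans (hC q hq)
  have hosc : ∀ x ∈ closedBall q η, ‖fderiv ℝ f x - fderiv ℝ f q‖ ≤ C * η := fun x hx =>
    ((convex_closedBall q η).norm_image_sub_le_of_norm_fderiv_le
      (fun y hy => ((hf y hy).fderiv_right (m := 1) (by norm_num)).differentiableAt (by simp))
      (fun y hy => by rw [← norm_iteratedFDeriv_one, norm_iteratedFDeriv_fderiv]; exact hC y hy)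
      hq hx).trans (by gcongr; exact mem_closedBall_iff_norm.1 hx)
  refine ContinuousLinearMap.opNorm_le_of_unit_norm (by positivity) fun h hh => ?_
  have hnorm : ‖η • h‖ = η := by rw [norm_smul, hh, mul_one, Real.norm_of_nonneg hη.le]
  have hx : q + η • h ∈ closedBall q η := by simp [hnorm]
  have htaylor : ‖f (q + η • h) - f q - η • fderiv ℝ f q h‖ ≤ C * η * η := by
    simpa [hnorm] using (convex_closedBall q η).norm_image_sub_le_of_norm_fderiv_le'
      (fun y hy => (hf y hy).differentiableAt (by simp)) hosc hq hx
  refine le_of_mul_le_mul_left ?_ hη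
  calc η * ‖fderiv ℝ f q h‖ = ‖η • fderiv ℝ f q h‖ := by
        rw [norm_smul, Real.norm_of_nonneg hη.le]
    _ ≤ ‖f (q + η • h) - f q‖ + ‖f (q + η • h) - f q - η • fderiv ℝ f q h‖ :=
        norm_le_norm_add_norm_sub _ _
    _ ≤ (δ + δ) + C * η * η :=
        add_le_add ((norm_sub_le _ _).trans (add_le_add (hδ _ hx) (hδ _ hq))) htaylor
    _ = η * (2 * δ / η + C * η) := by field_simp; ring

lemma norm_iteratedFDeriv_iteratedFDeriv (f : E → F) (j k : ℕ) (x : E) :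
    ‖iteratedFDeriv ℝ j (iteratedFDeriv ℝ k f) x‖ = ‖iteratedFDeriv ℝ (j + k) f x‖ := by
  induction j generalizing k with
  | zero => rw [norm_iteratedFDeriv_zero, zero_add]
  | succ j ih =>
    rw [← norm_iteratedFDeriv_fderiv, fderiv_iteratedFDeriv,
      LinearIsometryEquiv.norm_iteratedFDeriv_comp_left, ih, Nat.add_right_comm, Nat.add_assoc]

variable [ProperSpace E] {ι : Type*} {l : Filter ι} {U : Set E}

lemma tendstoLocallyUniformlyOn_fderiv_zero {w : ι → E → F} (hU : IsOpen U)
    (hw : ∀ p ∈ U, ∀ᶠ x : ι × E in l ×ˢ 𝓝 p, ContDiffAt ℝ 2 (w x.1) x.2)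
    (hbdd : ∀ p ∈ U, ∃ C, ∀ᶠ x : ι × E in l ×ˢ 𝓝 p, ‖iteratedFDeriv ℝ 2 (w x.1) x.2‖ ≤ C)
    (h0 : TendstoLocallyUniformlyOn w 0 l U) :
    TendstoLocallyUniformlyOn (fun i => fderiv ℝ (w i)) 0 l U := by
  refine tendstoLocallyUniformlyOn_iff.2 fun ε hε p hp => ?_
  obtain ⟨C, hC⟩ := hbdd p hp
  obtain ⟨good, hgood, r, hr, hball⟩ := Metric.eventually_prod_nhds_iff.1 ((hw p hp).and hC)
  obtain ⟨ρ, hρ, hρU⟩ := nhds_basis_closedBall.mem_iff.1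
    (inter_mem (hU.mem_nhds hp) (ball_mem_nhds p hr))
  obtain ⟨η, ⟨hCη, hηρ⟩, hη⟩ : ∃ η, (C * η < ε / 2 ∧ η < ρ / 2) ∧ 0 < η := by
    have htend : Tendsto (fun η => C * η) (𝓝 0) (𝓝 0) := by
      simpa using (continuous_const_mul C).tendsto 0
    exact ((((htend.eventually_lt_const (half_pos hε)).and
      (eventually_lt_nhds (half_pos hρ))).filter_mono nhdsWithin_le_nhds).and
        (self_mem_nhdsWithin (s := Ioi 0))).exists
  have hsmall := Metric.tendstoUniformlyOn_iff.1
    ((tendstoLocallyUniformlyOn_iff_forall_isCompact hU).1 h0 _ (hρU.trans inter_subset_left)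
      (isCompact_closedBall p ρ)) (ε * η / 8) (by positivity)
  refine ⟨ball p (ρ / 2), mem_nhdsWithin_of_mem_nhds (ball_mem_nhds p (by positivity)), ?_⟩
  filter_upwards [hgood, hsmall] with i hi hsmall_i q hq
  have hsub : closedBall q η ⊆ closedBall p ρ := closedBall_subset_closedBall' (by
    rw [mem_ball] at hq; linarith)
  have hregular {x : E} (hx : x ∈ closedBall q η) := hball hi (hρU (hsub hx)).2
  have hest := norm_fderiv_le_of_norm_le_of_norm_iteratedFDeriv_two_le (f := w i)
    (δ := ε * η / 8) hη (fun x hx => (hregular hx).1)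
    (fun x hx => by simpa using (hsmall_i x (hsub hx)).le)
    fun x hx => (hregular hx).2
  have hδ : 2 * (ε * η / 8) / η = ε / 4 := by field_simp; norm_num
  rw [Pi.zero_apply, dist_zero_left]
  linarith

lemma tendstoLocallyUniformlyOn_iteratedFDeriv_zero {w : ι → E → F} (hU : IsOpen U)
    (hw : ∀ p ∈ U, ∀ᶠ x : ι × E in l ×ˢ 𝓝 p, ContDiffAt ℝ ∞ (w x.1) x.2)
    (hbdd : ∀ p ∈ U, ∀ k, ∃ C, ∀ᶠ x : ι × E in l ×ˢ 𝓝 p, ‖iteratedFDeriv ℝ k (w x.1) x.2‖ ≤ C)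
    (h0 : TendstoLocallyUniformlyOn w 0 l U) (k : ℕ) :
    TendstoLocallyUniformlyOn (fun i => iteratedFDeriv ℝ k (w i)) 0 l U := by
  induction k with
  | zero => simpa [Metric.tendstoLocallyUniformlyOn_iff] using h0
  | succ k ih =>
    have hderiv := tendstoLocallyUniformlyOn_fderiv_zero hU
      (fun p hp => (hw p hp).mono fun x hx => hx.iteratedFDeriv_right (m := 2) (i := k)
        (WithTop.coe_le_coe.2 le_top))
      (fun p hp => by simpa only [norm_iteratedFDeriv_iteratedFDeriv] using hbdd p hp (2 + k)) ih
    simpa [Metric.tendstoLocallyUniformlyOn_iff, norm_fderiv_iteratedFDeriv] using hderiv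

lemma tendstoLocallyUniformlyOn_iteratedFDeriv {f : ι → E → F} {g : E → F} (hU : IsOpen U)
    (hf : ∀ p ∈ U, ∀ᶠ x : ι × E in l ×ˢ 𝓝 p, ContDiffAt ℝ ∞ (f x.1) x.2)
    (hbdd : ∀ p ∈ U, ∀ k, ∃ C, ∀ᶠ x : ι × E in l ×ˢ 𝓝 p, ‖iteratedFDeriv ℝ k (f x.1) x.2‖ ≤ C)
    (hg : ContDiff ℝ ∞ g) (hfg : TendstoLocallyUniformlyOn f g l U) (k : ℕ) :
    TendstoLocallyUniformlyOn (fun i => iteratedFDeriv ℝ k (f i)) (iteratedFDeriv ℝ k g) l U := by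
  have hsub {p : E} (hp : p ∈ U) (k : ℕ) : ∀ᶠ x : ι × E in l ×ˢ 𝓝 p,
      iteratedFDeriv ℝ k (f x.1 - g) x.2 =
        iteratedFDeriv ℝ k (f x.1) x.2 - iteratedFDeriv ℝ k g x.2 :=
    (hf p hp).mono fun x hx => iteratedFDeriv_sub_apply (hx.of_le (by exact_mod_cast le_top))
      (hg.contDiffAt.of_le (by exact_mod_cast le_top))
  have hdiff := tendstoLocallyUniformlyOn_iteratedFDeriv_zero (w := fun i => f i - g) hU
    (fun p hp => (hf p hp).mono fun x hx => hx.sub hg.contDiffAt)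
    (fun p hp k => ?_) ?_ k
  · rw [tendstoLocallyUniformlyOn_iff_filter] at hdiff ⊢
    intro p hp
    have h := hdiff p hp
    rw [hU.nhdsWithin_eq hp, Metric.tendstoUniformlyOnFilter_iff] at h ⊢
    intro ε hε
    filter_upwards [h ε hε, hsub hp k] with x hx hxsub
    rwa [hxsub, Pi.zero_apply, dist_zero_left, norm_sub_rev, ← dist_eq_norm] at hx
  · obtain ⟨C, hC⟩ := hbdd p hp k
    have hgbdd := ((hg.continuous_iteratedFDeriv (m := k) (by exact_mod_cast le_top)).norm.tendsto
      p).eventually_le_const (lt_add_one _)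
    refine ⟨C + (‖iteratedFDeriv ℝ k g p‖ + 1), ?_⟩
    filter_upwards [hC, hgbdd.prod_inr l, hsub hp k] with x hxf hxg hx
    rw [hx]
    exact (norm_sub_le _ _).trans (add_le_add hxf hxg)
  · simpa [Metric.tendstoLocallyUniformlyOn_iff, dist_eq_norm, norm_sub_rev] using hfg

end Landau

lemma ofReal_le_lintegral_norm_sq_of_lipschitzOnWith {F : Type*} [NormedAddCommGroup F]
    {f : ℝ × ℝ → F} {K : NNReal} {s t ε ρ T : ℝ} (hf : LipschitzOnWith K f (Ici s ×ˢ univ))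
    (hper : ∀ t, f (s, t + T) = f (s, t)) (hε : 0 ≤ ε) (hρ : 0 < ρ) (hρT : ρ ≤ T)
    (hKρ : K * ρ ≤ ε) (h : 2 * ε ≤ ‖f (s, t)‖) :
    ENNReal.ofReal (ε ^ 2 * ρ ^ 2) ≤
      ∫⁻ p in Ici s ×ˢ Ioc 0 T, ENNReal.ofReal (‖f p‖ ^ 2) := by
  have hT : 0 < T := hρ.trans_le hρT
  set t' := toIocMod hT 0 t
  have ht' : t' ∈ Ioc 0 T := by simpa using toIocMod_mem_Ioc hT 0 t
  have hft' : f (s, t') = f (s, t) :=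
    Function.Periodic.sub_zsmul_eq (f := fun t => f (s, t)) hper _
  set a := min t' (T - ρ)
  have hlower : ∀ q ∈ Icc s (s + ρ) ×ˢ Ioc a (a + ρ), ε ≤ ‖f q‖ := fun q ⟨hqs, hqt⟩ => by
    have hdist : dist q (s, t') ≤ ρ := by
      refine max_le (abs_le.2 ?_) (abs_le.2 ?_)
      · constructor <;> dsimp only <;> linarith [hqs.1, hqs.2]
      · rcases min_cases t' (T - ρ) with h | h <;> constructor <;> dsimp only <;>
          linarith [hqt.1, hqt.2, ht'.2]
    have hosc := (hf.norm_sub_le (x := q) (y := (s, t')) ⟨hqs.1, mem_univ _⟩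
      ⟨self_mem_Ici, mem_univ _⟩).trans (mul_le_mul_of_nonneg_left (dist_eq_norm q _ ▸ hdist) K.2)
    rw [hft'] at hosc
    linarith [norm_sub_norm_le (f (s, t)) (f q), norm_sub_rev (f (s, t)) (f q),
      show (K : ℝ) * ρ ≤ ε from hKρ]
  have hsub : Icc s (s + ρ) ×ˢ Ioc a (a + ρ) ⊆ Ici s ×ˢ Ioc 0 T :=
    prod_mono Icc_subset_Ici_self (Ioc_subset_Ioc (le_min ht'.1.le (by linarith))
      (by linarith [min_le_right t' (T - ρ)]))
  calc ENNReal.ofReal (ε ^ 2 * ρ ^ 2)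
      = ∫⁻ _ in Icc s (s + ρ) ×ˢ Ioc a (a + ρ), ENNReal.ofReal (ε ^ 2) := by
        rw [setLIntegral_const, Measure.volume_eq_prod, Measure.prod_prod, Real.volume_Icc,
          Real.volume_Ioc, add_sub_cancel_left, add_sub_cancel_left,
          ← ENNReal.ofReal_mul hρ.le, ← ENNReal.ofReal_mul (by positivity), ← pow_two]
    _ ≤ ∫⁻ p in Icc s (s + ρ) ×ˢ Ioc a (a + ρ), ENNReal.ofReal (‖f p‖ ^ 2) :=
        setLIntegral_mono' (measurableSet_Icc.prod measurableSet_Ioc) fun q hq =>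
          ENNReal.ofReal_le_ofReal (pow_le_pow_left₀ hε (hlower q hq) 2)
    _ ≤ _ := lintegral_mono_set hsub

section HalfPlanes

open Metric

open scoped ContDiff Topology

variable {F ι : Type*} [NormedAddCommGroup F] [NormedSpace ℝ F] {l : Filter ι}

lemma ball_subset_Ioi_prod_univ {S R : ℝ} {p : ℝ × ℝ} (hp : S + R ≤ p.1) :
    ball p R ⊆ Ioi S ×ˢ univ := fun q hq => by
  have hdist : |q.1 - p.1| < R := (norm_fst_le (q - p)).trans_lt (mem_ball_iff_norm.1 hq)
  exact ⟨show S < q.1 by linarith [(abs_lt.1 hdist).1], mem_univ _⟩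

lemma fderiv_add_period {z : ℝ × ℝ → F} {S T s : ℝ}
    (hz : ∀ s > S, ∀ t, z (s, t + T) = z (s, t)) (hs : S < s) (t : ℝ) :
    fderiv ℝ z (s, t + T) = fderiv ℝ z (s, t) := by
  have hshift : (fun q => z (q + (0, T))) =ᶠ[𝓝 (s, t)] z := by
    filter_upwards [(isOpen_Ioi.preimage continuous_fst).mem_nhds hs] with ⟨s', t'⟩ hs'
    simpa using hz s' hs' t'
  rw [← hshift.fderiv_eq, fderiv_comp_add_right]
  simp

lemma hasDerivAt_comp_prodMk {z : ℝ × ℝ → F} {s t : ℝ} (hz : DifferentiableAt ℝ z (s, t)) :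
    HasDerivAt (fun t => z (s, t)) (fderiv ℝ z (s, t) (0, 1)) t :=
  hz.hasFDerivAt.comp_hasDerivAt t ((hasDerivAt_const t s).prodMk (hasDerivAt_id t))

lemma norm_sub_le_of_norm_fderiv_apply_le {z : ℝ × ℝ → F} {r s s' t ε : ℝ}
    (hz : ∀ q ∈ Ici r ×ˢ univ, DifferentiableAt ℝ z q)
    (hds : ∀ q ∈ Ici r ×ˢ univ, ‖fderiv ℝ z q (1, 0)‖ ≤ ε) (hs : r ≤ s) (hs' : r ≤ s') :
    ‖z (s', t) - z (s, t)‖ ≤ ε * |s' - s| :=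
  (convex_Ici r).norm_image_sub_le_of_norm_hasDerivWithin_le (f := fun s => z (s, t))
    (fun x hx => ((hz (x, t) ⟨hx, mem_univ t⟩).hasFDerivAt.comp_hasDerivAt x
      ((hasDerivAt_id x).prodMk (hasDerivAt_const x t))).hasDerivWithinAt)
    (fun x hx => hds (x, t) ⟨hx, mem_univ t⟩) hs hs'

lemma exists_eventually_add_le {S : ι → ℝ} {a : EReal}
    (hS : Tendsto (fun i => (S i : EReal)) l (𝓝 a)) {p : ℝ × ℝ} (hp : a < (p.1 : EReal)) :
    ∃ R > 0, R ≤ 1 ∧ ∀ᶠ x : ι × (ℝ × ℝ) in l ×ˢ 𝓝 p, S x.1 + R ≤ x.2.1 := by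
  obtain ⟨b, hab, hbp⟩ := EReal.lt_iff_exists_real_btwn.1 hp
  rw [EReal.coe_lt_coe_iff] at hbp
  refine ⟨min 1 ((p.1 - b) / 2), lt_min one_pos (by linarith), min_le_left _ _, ?_⟩
  have hq : ∀ᶠ q : ℝ × ℝ in 𝓝 p, (b + p.1) / 2 < q.1 :=
    continuous_fst.continuousAt.eventually_const_lt (by linarith)
  filter_upwards [(hS.eventually_lt_const hab).prod_mk hq] with x hx
  linarith [EReal.coe_lt_coe_iff.1 hx.1, hx.2, min_le_right 1 ((p.1 - b) / 2)]

/-- `∂_s z_i → 0` uniformly at every positive distance from the boundary `s = S_i`. -/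
def TendstoDsZero (z : ι → ℝ × ℝ → F) (S : ι → ℝ) (l : Filter ι) : Prop :=
  ∀ R > 0, ∀ ε > 0, ∀ᶠ i in l, ∀ q ∈ Ici (S i + R) ×ˢ univ, ‖fderiv ℝ (z i) q (1, 0)‖ < ε

lemma tendstoLocallyUniformlyOn_comp_snd {S : ι → ℝ} {a : EReal} {z : ι → ℝ × ℝ → F} {γ : ℝ → F}
    (hS : Tendsto (fun i => (S i : EReal)) l (𝓝 a)) (hS0 : ∀ i, S i ≤ 0)
    (hz : ∀ i, ∀ q ∈ Ioi (S i) ×ˢ univ, DifferentiableAt ℝ (z i) q)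
    (hds : TendstoDsZero z S l)
    (hγ : TendstoLocallyUniformly (fun i t => z i (1, t)) γ l) :
    TendstoLocallyUniformlyOn z (fun q => γ q.2) l {p | a < (p.1 : EReal)} := by
  rw [tendstoLocallyUniformlyOn_iff_filter]
  intro p hp
  refine TendstoUniformlyOnFilter.mono_right ?_ nhdsWithin_le_nhds
  refine Metric.tendstoUniformlyOnFilter_iff.2 fun ε hε => ?_
  obtain ⟨R, hR, hR1, hSR⟩ := exists_eventually_add_le hS hp
  set N := |p.1 - 1| + 1
  have hN : ∀ᶠ q : ℝ × ℝ in 𝓝 p, |q.1 - 1| < N :=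
    (by fun_prop : Continuous fun q : ℝ × ℝ => |q.1 - 1|).continuousAt.eventually_lt_const
      (lt_add_one _)
  have hlimit := (Metric.tendstoUniformlyOnFilter_iff.1
    ((tendstoLocallyUniformly_iff_filter.1 hγ) p.2)) (ε / 2) (by positivity)
  have hlimit' : ∀ᶠ x : ι × (ℝ × ℝ) in l ×ˢ 𝓝 p, dist (γ x.2.2) (z x.1 (1, x.2.2)) < ε / 2 :=
    (tendsto_id.prodMap continuous_snd.continuousAt).eventually hlimit
  filter_upwards [hSR, hN.prod_inr l, hlimit',
    (hds R hR (ε / 2 / N) (by positivity)).prod_inl _] with ⟨i, s, t⟩ hs hsN hlim hsmall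
  have hosc := norm_sub_le_of_norm_fderiv_apply_le (t := t)
    (fun q hq => hz i q ⟨(lt_add_of_pos_right _ hR).trans_le hq.1, mem_univ _⟩)
    (fun q hq => (hsmall q hq).le) (by linarith [hS0 i] : S i + R ≤ 1) hs
  calc dist (γ t) (z i (s, t)) ≤ dist (γ t) (z i (1, t)) + dist (z i (1, t)) (z i (s, t)) :=
        dist_triangle _ _ _
    _ < ε / 2 + ε / 2 := add_lt_add_of_lt_of_le hlim (by
      rw [dist_comm, dist_eq_norm]
      refine hosc.trans ?_
      rw [div_mul_comm]
      exact mul_le_of_le_one_left (by positivity) ((div_le_one (by positivity)).2 hsN.le))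
    _ = ε := add_halves ε

lemma TendstoDsZero.comp {κ : Type*} {l' : Filter κ} {z : ι → ℝ × ℝ → F} {S : ι → ℝ} {φ : κ → ι}
    (h : TendstoDsZero z S l) (hφ : Tendsto φ l' l) : TendstoDsZero (z ∘ φ) (S ∘ φ) l' :=
  fun R hR ε hε => hφ.eventually (h R hR ε hε)

end HalfPlanes

section Curves

open scoped ContDiff Topology

lemma isCompact_setOf_lipschitzWith_mapsTo {α β : Type*} [PseudoMetricSpace α] [MetricSpace β]
    (K : NNReal) {s : Set β} (hs : IsCompact s) :
    IsCompact {f : C(α, β) | LipschitzWith K f ∧ ∀ x, f x ∈ s} := by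
  refine ArzelaAscoli.isCompact_of_equicontinuous _ ?_
    (LipschitzWith.uniformEquicontinuous _ K fun f => f.2.1).equicontinuous
  have himage : ContinuousMap.toFun '' {f : C(α, β) | LipschitzWith K f ∧ ∀ x, f x ∈ s} =
      {f | LipschitzWith K f} ∩ univ.pi fun _ => s := by
    ext f
    exact ⟨by rintro ⟨g, ⟨hgK, hgs⟩, rfl⟩; exact ⟨hgK, fun x _ => hgs x⟩,
      fun ⟨hfK, hfs⟩ => ⟨⟨f, hfK.continuous⟩, ⟨hfK, fun x => hfs x trivial⟩, rfl⟩⟩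
  rw [himage]
  exact (isCompact_univ_pi fun _ => hs).inter_left (isClosed_setOfPred_lipschitzWith K)

lemma contDiff_of_hasDerivAt_comp {F : Type*} [NormedAddCommGroup F] [NormedSpace ℝ F]
    {Y : ℝ → F → F} {γ : ℝ → F} (hY : ContDiff ℝ ∞ (fun x : ℝ × F => Y x.1 x.2))
    (hγ : ∀ t, HasDerivAt γ (Y t (γ t)) t) : ContDiff ℝ ∞ γ := by
  have hderiv : deriv γ = (fun x : ℝ × F => Y x.1 x.2) ∘ fun t => (t, γ t) :=
    funext fun t => (hγ t).deriv
  refine contDiff_infty.2 fun n => ?_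
  induction n with
  | zero => exact contDiff_zero.2 (continuous_iff_continuousAt.2 fun t => (hγ t).continuousAt)
  | succ n ih =>
    rw [Nat.cast_succ]
    refine contDiff_succ_iff_deriv.2 ⟨fun t => (hγ t).differentiableAt, by simp, ?_⟩
    rw [hderiv]
    exact (hY.of_le (mod_cast le_top)).comp (contDiff_id.prodMk ih)

lemma tendstoLocallyUniformly_comp_time_shift {ι Y : Type*} {l : Filter ι} [UniformSpace Y]
    {X : ℝ → Y → Y} (hX : Continuous (fun x : ℝ × Y => X x.1 x.2)) {τ : ι → ℝ} {τ₀ : ℝ}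
    {c : ι → C(ℝ, Y)} {γ : C(ℝ, Y)} (hτ : Tendsto τ l (𝓝 τ₀)) (hc : Tendsto c l (𝓝 γ)) :
    TendstoLocallyUniformly (fun i t => X (t + τ i) (c i t)) (fun t => X (t + τ₀) (γ t)) l := by
  have hcont : Continuous fun x : ℝ × C(ℝ, Y) =>
      (⟨fun t => X (t + x.1) (x.2 t),
        hX.comp (by fun_prop : Continuous fun t => (t + x.1, x.2 t))⟩ : C(ℝ, Y)) :=
    ContinuousMap.continuous_of_continuous_uncurry _
      (hX.comp (by fun_prop : Continuous fun y : (ℝ × C(ℝ, Y)) × ℝ => (y.2 + y.1.1, y.1.2 y.2)))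
  exact ContinuousMap.tendsto_iff_tendstoLocallyUniformly.1
    ((hcont.tendsto (τ₀, γ)).comp (hτ.prodMk_nhds hc))

end Curves

section FloerSolutions

open Metric

open scoped ContDiff Topology

variable {E : Type*} [NormedAddCommGroup E] [NormedSpace ℂ E] {X : ℝ → E → E}

/-- `z` is a smooth solution on `U` of Floer's equation `∂_s z + i (∂_t z - X (t + τ) z) = 0`
for the time-dependent vector field `X`. -/
structure IsFloerSolutionOn (X : ℝ → E → E) (τ : ℝ) (z : ℝ × ℝ → E) (U : Set (ℝ × ℝ)) : Prop where
  contDiffAt : ∀ q ∈ U, ContDiffAt ℝ ∞ z q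
  delBar_eq : ∀ q ∈ U, delBar (fderiv ℝ z q) = I • X (q.2 + τ) (z q)

/-- Adding the time variable as a first component `w`, with `X` evaluated at time `re w`, makes
Floer's equation autonomous. -/
noncomputable def suspension (X : ℝ → E → E) (x : ℂ × E) : ℂ × E := (I, I • X x.1.re x.2)

lemma contDiff_suspension (hX : ContDiff ℝ ∞ (fun x : ℝ × E => X x.1 x.2)) :
    ContDiff ℝ ∞ (suspension X) :=
  contDiff_const.prodMk ((hX.comp (f := fun x : ℂ × E => (x.1.re, x.2))
    ((reCLM.contDiff.comp contDiff_fst).prodMk contDiff_snd)).const_smul I)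

namespace IsFloerSolutionOn

variable {τ : ℝ} {z : ℝ × ℝ → E} {U V : Set (ℝ × ℝ)}

lemma mono (hz : IsFloerSolutionOn X τ z V) (hUV : U ⊆ V) : IsFloerSolutionOn X τ z U :=
  ⟨fun q hq => hz.contDiffAt q (hUV hq), fun q hq => hz.delBar_eq q (hUV hq)⟩

lemma differentiableAt (hz : IsFloerSolutionOn X τ z U) {q : ℝ × ℝ} (hq : q ∈ U) :
    DifferentiableAt ℝ z q :=
  (hz.contDiffAt q hq).differentiableAt (by simp)

lemma sub_intCast (hX : Function.Periodic X 1) (hz : IsFloerSolutionOn X τ z U) (m : ℤ) :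
    IsFloerSolutionOn X (τ - m) z U :=
  ⟨hz.contDiffAt, fun q hq => by
    rw [hz.delBar_eq q hq, ← add_sub_assoc, ← hX.sub_int_mul_eq m, mul_one]⟩

lemma suspend (hz : IsFloerSolutionOn X τ z U) :
    IsCRSolutionOn (suspension X) (fun q => (((q.2 + τ : ℝ) : ℂ), z q)) U := by
  have htime (q : ℝ × ℝ) : HasFDerivAt (fun q : ℝ × ℝ => ((q.2 + τ : ℝ) : ℂ))
      (ofRealCLM ∘L ContinuousLinearMap.snd ℝ ℝ ℝ) q :=
    ofRealCLM.hasFDerivAt.comp q (hasFDerivAt_snd.add_const τ)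
  refine ⟨fun q hq => ContDiffAt.prodMk ?_ (hz.contDiffAt q hq), fun q hq => ?_⟩
  · exact ofRealCLM.contDiff.contDiffAt.comp q (contDiffAt_snd.add contDiffAt_const)
  · rw [((htime q).prodMk (hz.differentiableAt hq).hasFDerivAt).fderiv]
    exact Prod.ext (by simp [delBar_apply, suspension]) (hz.delBar_eq q hq)

lemma exists_norm_iteratedFDeriv_le [FiniteDimensional ℝ E]
    (hX : ContDiff ℝ ∞ (fun x : ℝ × E => X x.1 x.2)) (hper : Function.Periodic X 1) (k : ℕ)
    (M : ℝ) {R : ℝ} (hR : 0 < R) : ∃ C, ∀ τ z p, IsFloerSolutionOn X τ z (ball p R) →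
      (∀ q ∈ ball p R, ‖z q‖ ≤ M) → ‖iteratedFDeriv ℝ k z p‖ ≤ C := by
  obtain ⟨C, hC⟩ := IsCRSolutionOn.exists_norm_iteratedFDeriv_le (contDiff_suspension hX) k
    (max (1 + R) M) hR
  refine ⟨C, fun τ z p hz hM => ?_⟩
  have hsol := (hz.sub_intCast hper ⌊p.2 + τ⌋).suspend
  have hproj := (ContinuousLinearMap.snd ℝ ℂ E).norm_iteratedFDeriv_comp_left
    ((hsol.contDiffAt p (mem_ball_self hR)).of_le (m := k) (mod_cast le_top)) le_rfl
  refine hproj.trans ((mul_le_of_le_one_left (norm_nonneg _)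
    (ContinuousLinearMap.norm_snd_le _ _ _)).trans (hC _ p hsol fun q hq => ?_))
  refine norm_prod_le_iff.2 ⟨le_max_of_le_left ?_, (hM q hq).trans (le_max_right _ _)⟩
  have hfract : |p.2 + τ - ⌊p.2 + τ⌋| ≤ 1 := by
    rw [Int.self_sub_floor, abs_of_nonneg (Int.fract_nonneg _)]
    exact (Int.fract_lt_one _).le
  have hdist : |q.2 - p.2| ≤ R := (norm_snd_le (q - p)).trans (mem_ball_iff_norm.1 hq).le
  rw [norm_real, Real.norm_eq_abs]
  calc |q.2 + (τ - ⌊p.2 + τ⌋)| = |(p.2 + τ - ⌊p.2 + τ⌋) + (q.2 - p.2)| := by congr 1; ring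
    _ ≤ 1 + R := (abs_add_le _ _).trans (add_le_add hfract hdist)

end IsFloerSolutionOn

/-- `z` is a solution of Floer's equation on the half plane `s > S` bounded by `M`. -/
structure IsBoundedFloerSolution (X : ℝ → E → E) (M τ S : ℝ) (z : ℝ × ℝ → E) : Prop
    extends IsFloerSolutionOn X τ z (Ioi S ×ˢ univ) where
  norm_le : ∀ q ∈ Ioi S ×ˢ univ, ‖z q‖ ≤ M

namespace IsBoundedFloerSolution

variable [FiniteDimensional ℝ E]

lemma exists_norm_iteratedFDeriv_le (hX : ContDiff ℝ ∞ (fun x : ℝ × E => X x.1 x.2))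
    (hper : Function.Periodic X 1) (k : ℕ) (M : ℝ) {R : ℝ} (hR : 0 < R) :
    ∃ C, ∀ τ S z, IsBoundedFloerSolution X M τ S z → ∀ p ∈ Ici (S + R) ×ˢ univ,
      ‖iteratedFDeriv ℝ k z p‖ ≤ C := by
  obtain ⟨C, hC⟩ := IsFloerSolutionOn.exists_norm_iteratedFDeriv_le hX hper k M hR
  refine ⟨C, fun τ S z hz p hp => ?_⟩
  have hball := ball_subset_Ioi_prod_univ hp.1
  exact hC τ z p (hz.toIsFloerSolutionOn.mono hball) fun q hq => hz.norm_le q (hball hq)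

lemma exists_lipschitzOnWith (hX : ContDiff ℝ ∞ (fun x : ℝ × E => X x.1 x.2))
    (hper : Function.Periodic X 1) (M : ℝ) {R : ℝ} (hR : 0 < R) :
    ∃ K : NNReal, ∀ τ S z, IsBoundedFloerSolution X M τ S z →
      LipschitzOnWith K z (Ici (S + R) ×ˢ univ) ∧
        LipschitzOnWith K (fderiv ℝ z) (Ici (S + R) ×ˢ univ) := by
  obtain ⟨C₁, hC₁⟩ := exists_norm_iteratedFDeriv_le hX hper 1 M hR
  obtain ⟨C₂, hC₂⟩ := exists_norm_iteratedFDeriv_le hX hper 2 M hR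
  refine ⟨(max C₁ C₂).toNNReal, fun τ S z hz => ?_⟩
  have hmem {q : ℝ × ℝ} (hq : q ∈ Ici (S + R) ×ˢ univ) : q ∈ Ioi S ×ˢ univ :=
    ball_subset_Ioi_prod_univ hq.1 (mem_ball_self hR)
  have hconv : Convex ℝ (Ici (S + R) ×ˢ (univ : Set ℝ)) := (convex_Ici _).prod convex_univ
  refine ⟨Convex.lipschitzOnWith_of_nnnorm_fderiv_le (𝕜 := ℝ)
      (fun q hq => hz.differentiableAt (hmem hq))
      (fun q hq => NNReal.le_toNNReal_of_coe_le ?_) hconv,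
    Convex.lipschitzOnWith_of_nnnorm_fderiv_le (𝕜 := ℝ)
      (fun q hq => ((hz.contDiffAt q (hmem hq)).fderiv_right (m := 1)
        (WithTop.coe_le_coe.2 le_top)).differentiableAt (by simp))
      (fun q hq => NNReal.le_toNNReal_of_coe_le ?_) hconv⟩
  · rw [coe_nnnorm, ← norm_iteratedFDeriv_one]
    exact (hC₁ τ S z hz q hq).trans (le_max_left _ _)
  · rw [coe_nnnorm, ← norm_iteratedFDeriv_one, norm_iteratedFDeriv_fderiv]
    exact (hC₂ τ S z hz q hq).trans (le_max_right _ _)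

/-- `ε`-regularity: by the a priori Lipschitz bound on `∂_s z`, a large value of `∂_s z` at a single
point costs a definite amount of energy. -/
lemma exists_norm_fderiv_apply_lt_of_lintegral_lt
    (hX : ContDiff ℝ ∞ (fun x : ℝ × E => X x.1 x.2)) (hper : Function.Periodic X 1) (M : ℝ)
    {R ε : ℝ} (hR : 0 < R) (hε : 0 < ε) :
    ∃ δ > 0, ∀ τ S z, IsBoundedFloerSolution X M τ S z → ∀ T ≥ 1,
      (∀ s > S, ∀ t, z (s, t + T) = z (s, t)) →
      ∫⁻ p in Ioi S ×ˢ Ioc 0 T, ENNReal.ofReal (‖fderiv ℝ z p (1, 0)‖ ^ 2) < δ →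
      ∀ q ∈ Ici (S + R) ×ˢ univ, ‖fderiv ℝ z q (1, 0)‖ < ε := by
  obtain ⟨K, hK⟩ := exists_lipschitzOnWith hX hper M hR
  set ds := ContinuousLinearMap.apply ℝ E ((1, 0) : ℝ × ℝ)
  set k : NNReal := ‖ds‖₊ * K
  set ρ := ε / 2 / (k + ε / 2) with hρ_def
  have hρ1 : ρ ≤ 1 := div_le_one_of_le₀ (le_add_of_nonneg_left k.2) (by positivity)
  have hkρ : k * ρ ≤ ε / 2 := by
    rw [hρ_def, mul_div_assoc', div_le_iff₀ (by positivity)]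
    nlinarith
  refine ⟨ENNReal.ofReal ((ε / 2) ^ 2 * ρ ^ 2), by positivity,
    fun τ S z hz T hT hzper hE q hq => ?_⟩
  by_contra! hlarge
  have hSq : S < q.1 := (ball_subset_Ioi_prod_univ hq.1 (mem_ball_self hR)).1
  have hlip : LipschitzOnWith k (fun x => fderiv ℝ z x (1, 0)) (Ici q.1 ×ˢ univ) :=
    (ds.lipschitz.comp_lipschitzOnWith (hK τ S z hz).2).mono
      (prod_mono_left (Ici_subset_Ici.2 hq.1))
  have henergy := ofReal_le_lintegral_norm_sq_of_lipschitzOnWith hlip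
    (fun t => by rw [fderiv_add_period hzper hSq]) (by positivity) (by positivity) (hρ1.trans hT)
    hkρ (t := q.2) (by linarith)
  exact hE.not_ge (henergy.trans
    (lintegral_mono_set (prod_mono_left (Ici_subset_Ioi.2 hSq))))

end IsBoundedFloerSolution

lemma IsFloerSolutionOn.fderiv_apply_zero_one {τ : ℝ} {z : ℝ × ℝ → E} {U : Set (ℝ × ℝ)}
    (hz : IsFloerSolutionOn X τ z U) {q : ℝ × ℝ} (hq : q ∈ U) :
    fderiv ℝ z q (0, 1) = X (q.2 + τ) (z q) + I • fderiv ℝ z q (1, 0) := by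
  have h := congrArg (I • ·) (hz.delBar_eq q hq)
  simp only [delBar_apply, smul_add, smul_smul, I_mul_I, neg_smul, one_smul] at h
  rw [← sub_eq_iff_eq_add, ← neg_inj, ← h]
  abel

lemma hasDerivAt_of_tendsto_of_tendstoDsZero {ι : Type*} {l : Filter ι} [l.NeBot] {τ S : ι → ℝ}
    {z : ι → ℝ × ℝ → E} {c : ι → C(ℝ, E)} {τ₀ : ℝ} {γ : C(ℝ, E)}
    (hX : Continuous (fun x : ℝ × E => X x.1 x.2))
    (hz : ∀ i, IsFloerSolutionOn X (τ i) (z i) (Ioi (S i) ×ˢ univ)) (hS : ∀ i, S i ≤ 0)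
    (hds : TendstoDsZero z S l) (hzc : ∀ i t, c i t = z i (1, t)) (hτ : Tendsto τ l (𝓝 τ₀))
    (hc : Tendsto c l (𝓝 γ)) (t : ℝ) : HasDerivAt γ (X (t + τ₀) (γ t)) t := by
  have hmem (i : ι) (t : ℝ) : ((1, t) : ℝ × ℝ) ∈ Ioi (S i) ×ˢ univ :=
    ⟨(hS i).trans_lt one_pos, mem_univ t⟩
  have hsmall : TendstoLocallyUniformly (fun i t => I • fderiv ℝ (z i) (1, t) (1, 0)) 0 l := by
    refine TendstoUniformly.tendstoLocallyUniformly (Metric.tendstoUniformly_iff.2 fun ε hε => ?_)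
    filter_upwards [hds 1 one_pos ε hε] with i hi t
    simpa [norm_smul] using hi (1, t) ⟨by simpa using hS i, mem_univ t⟩
  have hderiv : TendstoLocallyUniformly (fun i t => fderiv ℝ (z i) (1, t) (0, 1))
      (fun t => X (t + τ₀) (γ t)) l := by
    simpa [Pi.add_def, (hz _).fderiv_apply_zero_one (hmem _ _), hzc] using
      (tendstoLocallyUniformly_comp_time_shift hX hτ hc).add hsmall
  refine hasDerivAt_of_tendstoLocallyUniformlyOn isOpen_univ
    hderiv.tendstoLocallyUniformlyOn (Eventually.of_forall fun i t _ => ?_)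
    (fun t _ => ((continuous_eval_const t).tendsto γ).comp hc) (mem_univ t)
  simp only [Function.comp_apply, hzc]
  exact hasDerivAt_comp_prodMk ((hz i).differentiableAt (hmem i t))

namespace IsBoundedFloerSolution

variable [FiniteDimensional ℝ E] {M : ℝ}

lemma tendstoDsZero {ι : Type*} {l : Filter ι} {τ S T : ι → ℝ} {z : ι → ℝ × ℝ → E}
    (hX : ContDiff ℝ ∞ (fun x : ℝ × E => X x.1 x.2)) (hper : Function.Periodic X 1)
    (hz : ∀ i, IsBoundedFloerSolution X M (τ i) (S i) (z i)) (hT : ∀ i, 1 ≤ T i)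
    (hzT : ∀ i, ∀ s > S i, ∀ t, z i (s, t + T i) = z i (s, t))
    (hE : Tendsto (fun i => ∫⁻ p in Ioi (S i) ×ˢ Ioc 0 (T i),
      ENNReal.ofReal (‖fderiv ℝ (z i) p (1, 0)‖ ^ 2)) l (𝓝 0)) :
    TendstoDsZero z S l := fun R hR ε hε => by
  obtain ⟨δ, hδ, h⟩ := exists_norm_fderiv_apply_lt_of_lintegral_lt hX hper M hR hε
  filter_upwards [hE.eventually_lt_const hδ] with i hi
  exact h _ _ _ (hz i) _ (hT i) (hzT i) hi

lemma exists_restriction_lipschitzWith (hX : ContDiff ℝ ∞ (fun x : ℝ × E => X x.1 x.2))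
    (hper : Function.Periodic X 1) (M : ℝ) : ∃ K : NNReal, ∀ τ S z,
      IsBoundedFloerSolution X M τ S z → S ≤ 0 → ∃ c : C(ℝ, E), (∀ t, c t = z (1, t)) ∧
        c ∈ {f : C(ℝ, E) | LipschitzWith K f ∧ ∀ t, f t ∈ closedBall 0 M} := by
  obtain ⟨K, hK⟩ := exists_lipschitzOnWith hX hper M one_pos
  refine ⟨K, fun τ S z hz hS => ?_⟩
  have hlip : LipschitzWith K fun t => z (1, t) := by
    have hline : MapsTo (Prod.mk (1 : ℝ)) univ (Ici (S + 1) ×ˢ (univ : Set ℝ)) :=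
      fun t _ => ⟨by simpa using hS, mem_univ t⟩
    simpa [Function.comp_def] using lipschitzOnWith_univ.1
      ((hK τ S z hz).1.comp (LipschitzWith.prodMk_left 1).lipschitzOnWith hline)
  exact ⟨⟨_, hlip.continuous⟩, fun t => rfl, hlip, fun t =>
    mem_closedBall_zero_iff.2 (hz.norm_le (1, t) ⟨hS.trans_lt one_pos, mem_univ t⟩)⟩

lemma tendstoLocallyUniformlyOn_iteratedFDeriv {ι : Type*} {l : Filter ι} {τ S : ι → ℝ}
    {z : ι → ℝ × ℝ → E} {a : EReal} {γ : ℝ → E} (hX : ContDiff ℝ ∞ (fun x : ℝ × E => X x.1 x.2))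
    (hper : Function.Periodic X 1) (hz : ∀ i, IsBoundedFloerSolution X M (τ i) (S i) (z i))
    (hS : Tendsto (fun i => (S i : EReal)) l (𝓝 a)) (hγ : ContDiff ℝ ∞ γ)
    (hzγ : TendstoLocallyUniformlyOn z (fun q => γ q.2) l {p | a < (p.1 : EReal)}) (k : ℕ) :
    TendstoLocallyUniformlyOn (fun i => iteratedFDeriv ℝ k (z i))
      (iteratedFDeriv ℝ k fun q : ℝ × ℝ => γ q.2) l {p | a < (p.1 : EReal)} := by
  have hopen : IsOpen {p : ℝ × ℝ | a < (p.1 : EReal)} :=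
    isOpen_lt continuous_const (continuous_coe_real_ereal.comp continuous_fst)
  refine _root_.tendstoLocallyUniformlyOn_iteratedFDeriv hopen (fun p hp => ?_) (fun p hp k => ?_)
    (hγ.comp contDiff_snd) hzγ k
  all_goals obtain ⟨R, hR, -, hSR⟩ := exists_eventually_add_le hS hp
  · filter_upwards [hSR] with x hx
    exact (hz x.1).contDiffAt x.2 (ball_subset_Ioi_prod_univ hx (mem_ball_self hR))
  · obtain ⟨C, hC⟩ := exists_norm_iteratedFDeriv_le hX hper k M hR
    exact ⟨C, hSR.mono fun x hx => hC _ _ _ (hz x.1) x.2 ⟨hx, mem_univ _⟩⟩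

theorem exists_subseq_tendstoLocallyUniformlyOn {τ S : ℕ → ℝ} {z : ℕ → ℝ × ℝ → E}
    (hX : ContDiff ℝ ∞ (fun x : ℝ × E => X x.1 x.2)) (hper : Function.Periodic X 1)
    (hz : ∀ n, IsBoundedFloerSolution X M (τ n) (S n) (z n)) (hS : ∀ n, S n ≤ 0)
    (hτ : ∀ n, τ n ∈ Icc 0 1) (hds : TendstoDsZero z S atTop) :
    ∃ φ : ℕ → ℕ, StrictMono φ ∧ ∃ a ≤ (0 : EReal), ∃ τ₀ ∈ Icc (0 : ℝ) 1, ∃ γ : ℝ → E,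
      ContDiff ℝ ∞ γ ∧ (∀ t, γ t ∈ closedBall 0 M) ∧ (∀ t, HasDerivAt γ (X (t + τ₀) (γ t)) t) ∧
      Tendsto (τ ∘ φ) atTop (𝓝 τ₀) ∧ Tendsto (fun j => (S (φ j) : EReal)) atTop (𝓝 a) ∧
      ∀ k, TendstoLocallyUniformlyOn (fun j => iteratedFDeriv ℝ k (z (φ j)))
        (iteratedFDeriv ℝ k fun q : ℝ × ℝ => γ q.2) atTop {p | a < (p.1 : EReal)} := by
  have := FiniteDimensional.proper ℝ E
  obtain ⟨K, hK⟩ := exists_restriction_lipschitzWith hX hper M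
  choose c hzc hc using fun n => hK _ _ _ (hz n) (hS n)
  obtain ⟨⟨a, τ₀, γ⟩, ⟨ha, hτ₀, -, hγM⟩, φ, hφ, hlim⟩ :=
    (isClosed_Iic.isCompact.prod (isCompact_Icc.prod (isCompact_setOf_lipschitzWith_mapsTo K
      (isCompact_closedBall (0 : E) M)))).tendsto_subseq (x := fun n => ((S n : EReal), τ n, c n))
      fun n => ⟨EReal.coe_nonpos.2 (hS n), hτ n, hc n⟩
  simp only [Prod.tendsto_iff, Function.comp_apply] at hlim
  obtain ⟨hSa, hττ₀, hcγ⟩ := hlim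
  have hds' := hds.comp hφ.tendsto_atTop
  have hγ := hasDerivAt_of_tendsto_of_tendstoDsZero hX.continuous
    (fun j => (hz (φ j)).toIsFloerSolutionOn) (fun j => hS (φ j)) hds' (fun j => hzc (φ j)) hττ₀ hcγ
  have hγ_smooth : ContDiff ℝ ∞ γ := contDiff_of_hasDerivAt_comp
    (Y := fun t => X (t + τ₀)) (hX.comp (by fun_prop : ContDiff ℝ ∞ fun x : ℝ × E =>
      (x.1 + τ₀, x.2))) hγ
  have hcγ' : TendstoLocallyUniformly (fun j t => z (φ j) (1, t)) γ atTop := by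
    simpa only [hzc] using ContinuousMap.tendsto_iff_tendstoLocallyUniformly.1 hcγ
  have hzγ := tendstoLocallyUniformlyOn_comp_snd hSa (fun j => hS (φ j))
    (fun j q => (hz (φ j)).differentiableAt) hds' hcγ'
  exact ⟨φ, hφ, a, ha, τ₀, hτ₀, γ, hγ_smooth, hγM, hγ, hττ₀, hSa,
    tendstoLocallyUniformlyOn_iteratedFDeriv hX hper (fun j => hz (φ j)) hSa hγ_smooth hzγ⟩

end IsBoundedFloerSolution

end FloerSolutions

section DiskSolutions

open scoped ContDiff Topology

lemma contDiff_XH {H : ℝ → ℂ → ℝ} (hH : ContDiff ℝ ∞ fun x : ℝ × ℂ => H x.1 x.2) :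
    ContDiff ℝ ∞ fun x : ℝ × ℂ => XH H x.1 x.2 := by
  have hfderiv : ContDiff ℝ ∞ fun x : ℝ × ℂ => fderiv ℝ (H x.1) x.2 :=
    ContDiff.fderiv (f := fun (x : ℝ × ℂ) w => H x.1 w)
      (hH.comp ((contDiff_fst.comp contDiff_fst).prodMk contDiff_snd)) contDiff_snd le_rfl
  have happly (v : ℂ) : ContDiff ℝ ∞ fun x : ℝ × ℂ => ((fderiv ℝ (H x.1) x.2 v : ℝ) : ℂ) :=
    ofRealCLM.contDiff.comp (hfderiv.clm_apply contDiff_const)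
  exact contDiff_const.mul ((happly 1).add ((happly I).mul contDiff_const))

lemma periodic_XH {H : ℝ → ℂ → ℝ} {T : ℝ} (hH : Function.Periodic H T) :
    Function.Periodic (XH H) T := fun t => by
  unfold XH
  rw [hH t]

lemma halfPlaneFrom_mem_nhds {S : ℝ} {p : ℝ × ℝ} (hp : S < p.1) : HalfPlaneFrom S ∈ 𝓝 p :=
  prod_mem_nhds (Ici_mem_nhds hp) univ_mem

lemma isBoundedFloerSolution_of_contDiffOn {H : ℝ → ℂ → ℝ} {τ S : ℝ} {z : ℝ × ℝ → ℂ}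
    (hz_smooth : ContDiffOn ℝ ∞ z (HalfPlaneFrom S)) (hz_disk : ∀ p ∈ HalfPlaneFrom S, z p ∈ Disk)
    (hfloer : ∀ p ∈ HalfPlaneFrom S, pds (HalfPlaneFrom S) z p +
      I * (pdt (HalfPlaneFrom S) z p - XH H (p.2 + τ) (z p)) = 0) :
    IsBoundedFloerSolution (XH H) 1 τ S z where
  contDiffAt q hq := hz_smooth.contDiffAt (halfPlaneFrom_mem_nhds hq.1)
  delBar_eq q hq := by
    have h := hfloer q ⟨Ioi_subset_Ici_self hq.1, mem_univ _⟩
    rw [pds, pdt, fderivWithin_of_mem_nhds (halfPlaneFrom_mem_nhds hq.1), mul_sub,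
      ← add_sub_assoc, sub_eq_zero] at h
    exact h
  norm_le q hq := mem_closedBall_zero_iff.1 (hz_disk q ⟨Ioi_subset_Ici_self hq.1, mem_univ _⟩)

lemma lintegral_norm_fderiv_le_two_mul_floerEnergyFrom (H : ℝ → ℂ → ℝ) (S : ℝ) (n : ℕ) (τ : ℝ)
    (z : ℝ × ℝ → ℂ) : ∫⁻ p in Ioi S ×ˢ Ioc 0 (n : ℝ), ENNReal.ofReal (‖fderiv ℝ z p (1, 0)‖ ^ 2) ≤
      2 * floerEnergyFrom H S n τ z := by
  rw [floerEnergyFrom, ← mul_assoc, one_div, ENNReal.mul_inv_cancel two_ne_zero ofNat_ne_top,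
    one_mul]
  refine (setLIntegral_mono' (measurableSet_Ioi.prod measurableSet_Ioc) fun p hp => ?_).trans
    (lintegral_mono_set (prod_mono_left Ioi_subset_Ici_self))
  rw [pds, fderivWithin_of_mem_nhds (halfPlaneFrom_mem_nhds hp.1)]
  exact ENNReal.ofReal_le_ofReal (le_add_of_nonneg_right (sq_nonneg _))

lemma tendsto_lintegral_norm_fderiv_zero {ι : Type*} {l : Filter ι} {H : ℝ → ℂ → ℝ} {S τ : ι → ℝ}
    {n : ι → ℕ} {z : ι → ℝ × ℝ → ℂ}
    (hE : Tendsto (fun i => floerEnergyFrom H (S i) (n i) (τ i) (z i)) l (𝓝 0)) :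
    Tendsto (fun i => ∫⁻ p in Ioi (S i) ×ˢ Ioc 0 (n i : ℝ),
      ENNReal.ofReal (‖fderiv ℝ (z i) p (1, 0)‖ ^ 2)) l (𝓝 0) := by
  have hE2 : Tendsto (fun i => 2 * floerEnergyFrom H (S i) (n i) (τ i) (z i)) l (𝓝 0) := by
    simpa using ENNReal.Tendsto.const_mul hE (.inr ofNat_ne_top)
  exact tendsto_of_tendsto_of_tendsto_of_le_of_le tendsto_const_nhds hE2 (fun _ => zero_le)
    fun i => lintegral_norm_fderiv_le_two_mul_floerEnergyFrom H _ _ _ _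

lemma cinftyLocConv_of_tendstoLocallyUniformlyOn {S : ℕ → ℝ} {ns : ℕ → ℕ} {z : ℕ → ℝ × ℝ → ℂ}
    {γ : ℝ → ℂ} {a : EReal} (hS : Tendsto (fun j => (S (ns j) : EReal)) atTop (𝓝 a))
    (hz : ∀ k, TendstoLocallyUniformlyOn (fun j => iteratedFDeriv ℝ k (z (ns j)))
      (iteratedFDeriv ℝ k fun q : ℝ × ℝ => γ q.2) atTop {p | a < (p.1 : EReal)}) :
    CinftyLocConv {p | a < (p.1 : EReal)} S ns z γ := by
  have hopen : IsOpen {p : ℝ × ℝ | a < (p.1 : EReal)} :=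
    isOpen_lt continuous_const (continuous_coe_real_ereal.comp continuous_fst)
  intro K hK hKU m
  refine (tendstoLocallyUniformlyOn_iff_forall_isCompact hopen).1 ?_ K hKU hK
  refine tendstoLocallyUniformlyOn_iff_filter.2 fun p hp => ?_
  obtain ⟨R, hR, -, hSR⟩ := exists_eventually_add_le hS hp
  rw [hopen.nhdsWithin_eq hp]
  have hzp := tendstoLocallyUniformlyOn_iff_filter.1 (hz m) p hp
  rw [hopen.nhdsWithin_eq hp] at hzp
  refine hzp.congr (hSR.mono fun x hx => ?_)
  rw [← iteratedFDerivWithin_univ]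
  exact (iteratedFDerivWithin_congr_set (eventuallyEq_univ.2
    (halfPlaneFrom_mem_nhds ((lt_add_of_pos_right _ hR).trans_le hx))) m).symm

lemma CinftyLocConv.exists_real_or_tendsto_atBot {S : ℕ → ℝ} {ns : ℕ → ℕ} {z : ℕ → ℝ × ℝ → ℂ}
    {γ : ℝ → ℂ} {a : EReal} (h : CinftyLocConv {p | a < (p.1 : EReal)} S ns z γ) (ha : a ≤ 0)
    (hS : Tendsto (fun j => (S (ns j) : EReal)) atTop (𝓝 a)) :
    (∃ Sl : ℝ, Sl ≤ 0 ∧ Tendsto (fun j => S (ns j)) atTop (𝓝 Sl) ∧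
      CinftyLocConv (Ioi Sl ×ˢ univ) S ns z γ) ∨
    (Tendsto (fun j => S (ns j)) atTop atBot ∧ CinftyLocConv univ S ns z γ) := by
  induction a with
  | bot => exact .inr ⟨EReal.tendsto_coe_nhds_bot_iff.1 hS, by simpa using h⟩
  | coe x =>
    exact .inl ⟨x, EReal.coe_nonpos.1 ha, EReal.tendsto_coe.1 hS,
      by simpa [prod_univ, preimage] using h⟩
  | top => simp at ha

end DiskSolutions

theorem compactness_of_low_energy_sequences_general
    (H : ℝ → ℂ → ℝ) (hH_smooth : ContDiff ℝ (⊤ : ℕ∞) fun p : ℝ × ℂ => H p.1 p.2)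
    (hH_per : ∀ t z, H (t + 1) z = H t z)
    (S : ℕ → ℝ) (τ : ℕ → ℝ) (z : ℕ → ℝ × ℝ → ℂ)
    (hS : ∀ n, 1 ≤ n → S n ≤ 0)
    (hτ : ∀ n, 1 ≤ n → τ n ∈ Set.Ico (0:ℝ) 1)
    (hz_smooth : ∀ n, 1 ≤ n → ContDiffOn ℝ (⊤ : ℕ∞) (z n) (HalfPlaneFrom (S n)))
    (hz_disk : ∀ n, 1 ≤ n → ∀ p ∈ HalfPlaneFrom (S n), z n p ∈ Disk)
    (hz_per : ∀ n, 1 ≤ n → ∀ s t : ℝ, S n ≤ s → z n (s, t + n) = z n (s, t))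
    (hfloer : ∀ n, 1 ≤ n → ∀ p ∈ HalfPlaneFrom (S n),
      pds (HalfPlaneFrom (S n)) (z n) p +
        Complex.I * (pdt (HalfPlaneFrom (S n)) (z n) p - XH H (p.2 + τ n) (z n p)) = 0)
    (hE : Tendsto (fun n => floerEnergyFrom H (S n) n (τ n) (z n)) atTop (nhds 0)) :
    ∃ ns : ℕ → ℕ, StrictMono ns ∧ (∀ j, 1 ≤ ns j) ∧
      ∃ τ₀ ∈ Set.Icc (0:ℝ) 1, ∃ γ : ℝ → ℂ,
        ContDiff ℝ (⊤ : ℕ∞) γ ∧ (∀ t, γ t ∈ Disk) ∧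
        (∀ t : ℝ, deriv γ t = XH H (t + τ₀) (γ t)) ∧
        Tendsto (fun j => τ (ns j)) atTop (nhds τ₀) ∧
        ((∃ Sl : ℝ, Sl ≤ 0 ∧ Tendsto (fun j => S (ns j)) atTop (nhds Sl) ∧
            CinftyLocConv (Set.Ioi Sl ×ˢ Set.univ) S ns z γ) ∨
         (Tendsto (fun j => S (ns j)) atTop atBot ∧
            CinftyLocConv Set.univ S ns z γ)) := by
  have hX := contDiff_XH hH_smooth
  have hper : Function.Periodic (XH H) 1 := periodic_XH fun t => funext (hH_per t)
  have hpos (n : ℕ) : 1 ≤ n + 1 := Nat.le_add_left 1 n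
  have hz (n : ℕ) : IsBoundedFloerSolution (XH H) 1 (τ (n + 1)) (S (n + 1)) (z (n + 1)) :=
    isBoundedFloerSolution_of_contDiffOn (hz_smooth _ (hpos n)) (hz_disk _ (hpos n))
      (hfloer _ (hpos n))
  have hds := IsBoundedFloerSolution.tendstoDsZero hX hper hz
    (fun n => Nat.one_le_cast.2 (hpos n)) (fun n s hs t => hz_per _ (hpos n) s t hs.le)
    (tendsto_lintegral_norm_fderiv_zero ((tendsto_add_atTop_iff_nat 1).2 hE))
  obtain ⟨φ, hφ, a, ha, τ₀, hτ₀, γ, hγ_smooth, hγ_disk, hγ, hτφ, hSφ, hconv⟩ :=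
    IsBoundedFloerSolution.exists_subseq_tendstoLocallyUniformlyOn hX hper hz
      (fun n => hS _ (hpos n)) (fun n => Ico_subset_Icc_self (hτ _ (hpos n))) hds
  have hlim := cinftyLocConv_of_tendstoLocallyUniformlyOn (ns := fun j => φ j + 1) hSφ hconv
  exact ⟨fun j => φ j + 1, hφ.add_const 1, fun j => hpos (φ j), τ₀, hτ₀, γ, hγ_smooth, hγ_disk,
    fun t => (hγ t).deriv, hτφ, hlim.exists_real_or_tendsto_atBot ha hSφ⟩

/-- **Compactness.**  If `z_n : [S_n,∞) × ℝ → D` are `n`-periodic solutions of the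
Floer equation with unit-circle boundary values and Floer energies tending to zero,
then a subsequence converges in `C^∞_loc` on the interior of the limit domain to a
trajectory `(s,t) ↦ γ(t)` of the Hamiltonian vector field. -/
theorem compactness_of_low_energy_sequences
    (H : ℝ → ℂ → ℝ) (hH : IsAdmissible H)
    (S : ℕ → ℝ) (τ : ℕ → ℝ) (z : ℕ → ℝ × ℝ → ℂ)
    (hS : ∀ n, 1 ≤ n → S n ≤ 0)
    (hτ : ∀ n, 1 ≤ n → τ n ∈ Set.Ico (0:ℝ) 1)
    (hz_smooth : ∀ n, 1 ≤ n → ContDiffOn ℝ (⊤ : ℕ∞) (z n) (HalfPlaneFrom (S n)))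
    (hz_disk : ∀ n, 1 ≤ n → ∀ p ∈ HalfPlaneFrom (S n), z n p ∈ Disk)
    (hz_per : ∀ n, 1 ≤ n → ∀ s t : ℝ, S n ≤ s → z n (s, t + n) = z n (s, t))
    (hfloer : ∀ n, 1 ≤ n → ∀ p ∈ HalfPlaneFrom (S n),
      pds (HalfPlaneFrom (S n)) (z n) p +
        Complex.I * (pdt (HalfPlaneFrom (S n)) (z n) p - XH H (p.2 + τ n) (z n p)) = 0)
    (hbdry : ∀ n, 1 ≤ n → ∀ t : ℝ, ‖z n (S n, t)‖ = 1)
    (hE : Tendsto (fun n => floerEnergyFrom H (S n) n (τ n) (z n)) atTop (nhds 0)) :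
    ∃ ns : ℕ → ℕ, StrictMono ns ∧ (∀ j, 1 ≤ ns j) ∧
      ∃ τ₀ ∈ Set.Icc (0:ℝ) 1, ∃ γ : ℝ → ℂ,
        ContDiff ℝ (⊤ : ℕ∞) γ ∧ (∀ t, γ t ∈ Disk) ∧
        (∀ t : ℝ, deriv γ t = XH H (t + τ₀) (γ t)) ∧
        Tendsto (fun j => τ (ns j)) atTop (nhds τ₀) ∧
        ((∃ Sl : ℝ, Sl ≤ 0 ∧ Tendsto (fun j => S (ns j)) atTop (nhds Sl) ∧
            CinftyLocConv (Set.Ioi Sl ×ˢ Set.univ) S ns z γ) ∨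
         (Tendsto (fun j => S (ns j)) atTop atBot ∧
            CinftyLocConv Set.univ S ns z γ)) :=
  compactness_of_low_energy_sequences_general H hH.smooth hH.periodic S τ z hS hτ hz_smooth hz_disk
    hz_per hfloer hE
end

section
/- Let φ : D → D be an irrational pseudo-rotation. Let f : ℝ → ℝ be any continuous lift of the boundary restriction φ|_{∂D}, i.e. f is continuous, f(x+1) = f(x)+1, and φ(e^{2πix}) = e^{2πi f(x)} for all x ∈ ℝ, and let α := lim_{n→∞} (fⁿ(x) − x)/n be its translation number (which exists and is independent of x). Then the eigenvalues over ℂ of the linearization Dφ(0) are exactly e^{2πiα} and e^{−2πiα}. -/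
open Complex Metric Set Filter Polynomial

/-- A `C^∞`-smooth diffeomorphism of the closed unit disk: a bijection of `Disk`
which is `C^∞` up to the boundary together with its inverse. -/
structure SmoothDiskDiffeo where
  toFun : ℂ → ℂ
  invFun : ℂ → ℂ
  mapsTo : Set.MapsTo toFun Disk Disk
  mapsTo_inv : Set.MapsTo invFun Disk Disk
  left_inv : ∀ z ∈ Disk, invFun (toFun z) = z
  right_inv : ∀ z ∈ Disk, toFun (invFun z) = z
  smooth : ContDiffOn ℝ (⊤ : ℕ∞) toFun Disk
  smooth_inv : ContDiffOn ℝ (⊤ : ℕ∞) invFun Disk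

/-- The matrix of the derivative `Dφ(0)` in the real basis `(1, i)` of `ℂ`. -/
noncomputable def derivMatrix (φ : SmoothDiskDiffeo) : Matrix (Fin 2) (Fin 2) ℝ :=
  LinearMap.toMatrix Complex.basisOneI Complex.basisOneI
    (fderivWithin ℝ φ.toFun Disk 0 : ℂ →ₗ[ℝ] ℂ)

/-!
In area-normalized polar coordinates `φ` lifts to a homeomorphism of the strip `0 ≤ im z ≤ 1` which
preserves area and commutes with `z ↦ z + 1`. On the upper boundary line it is the lift `f`, with
translation number `α`; on the lower one, the blown-up origin, it is a lift of the action of `Dφ(0)`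
on directions. If the two translation numbers differed, some iterate of the lift, composed with an
integer translation, would move the two boundary lines in opposite directions, and the fixed point
given by the Poincaré–Birkhoff theorem would be a periodic point of `φ`.

For Poincaré–Birkhoff, push a fixed point free strip map `F` upwards by a small `ε`. By area
preservation some orbit of the new map goes from below the strip to above it. Along a curve through
this orbit on which the new map acts as a shift, the total rotation of `F z - z` is determined by
the signs of the boundary displacements alone: it is a half turn, always in the same direction when
`F` moves the lower line to the left and the upper line to the right, and in the other direction for
`F⁻¹`. But `F⁻¹ w - w = -(F z - z)` for `w = F z`, so `F` and `F⁻¹` have the same rotation.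

Finally `2 * α` is not an integer, as otherwise `φ` would have a periodic point on the boundary
circle. Hence `Dφ(0)` has no real eigenvalue; having determinant `1`, it is conjugate to a rotation,
whose angle is `2πα` because translation numbers are invariant under conjugation.
-/

open scoped FourierTransform

section Angles

/-- The real number `x` is an angle of `v ∈ ℂ`, measured in turns; every `x` is an angle of `0`. -/
def HasAngle (v : ℂ) (x : ℝ) : Prop := v = ‖v‖ * 𝐞 x

lemma hasAngle_of_eq_real_mul {v : ℂ} {r x : ℝ} (hr : 0 ≤ r) (h : v = r * 𝐞 x) :
    HasAngle v x := by
  have hv : ‖v‖ = r := by rw [h, norm_mul, Circle.norm_coe, mul_one, Complex.norm_of_nonneg hr]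
  rw [HasAngle, hv, h]

lemma hasAngle_fourierChar (x : ℝ) : HasAngle (𝐞 x) x :=
  hasAngle_of_eq_real_mul zero_le_one (by simp)

lemma hasAngle_arg (v : ℂ) : HasAngle v (v.arg / (2 * Real.pi)) := by
  rw [HasAngle, Real.fourierChar_apply, mul_div_cancel₀ _ Real.two_pi_pos.ne',
    norm_mul_exp_arg_mul_I]

lemma HasAngle.mul {v w : ℂ} {x y : ℝ} (hv : HasAngle v x) (hw : HasAngle w y) :
    HasAngle (v * w) (x + y) := by
  refine hasAngle_of_eq_real_mul (r := ‖v‖ * ‖w‖) (by positivity) ?_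
  rw [AddChar.map_add_eq_mul, Circle.coe_mul]
  nth_rewrite 1 [hv, hw]
  push_cast
  ring

lemma fourierChar_int (n : ℤ) : 𝐞 (n : ℝ) = 1 := by
  ext
  rw [Real.fourierChar_apply, Circle.coe_one, exp_eq_one_iff]
  exact ⟨n, by push_cast; ring⟩

lemma fourierChar_half : (𝐞 (1 / 2 : ℝ) : ℂ) = -1 := by
  rw [Real.fourierChar_apply, show 2 * Real.pi * (1 / 2) = Real.pi by ring, exp_pi_mul_I]

lemma fourierChar_add_one (x : ℝ) : 𝐞 (x + 1) = 𝐞 x := by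
  rw [AddChar.map_add_eq_mul, show (1 : ℝ) = ((1 : ℤ) : ℝ) by simp, fourierChar_int, mul_one]

lemma fourierChar_add_int (x : ℝ) (n : ℤ) : 𝐞 (x + n) = 𝐞 x := by
  rw [AddChar.map_add_eq_mul, fourierChar_int, mul_one]

lemma fourierChar_eq_iff {x y : ℝ} : 𝐞 x = 𝐞 y ↔ ∃ n : ℤ, x = y + n := by
  refine ⟨fun h => ?_, fun ⟨n, h⟩ => h ▸ fourierChar_add_int y n⟩
  obtain ⟨n, hn⟩ := Circle.exp_eq_exp.mp h
  exact ⟨n, mul_left_cancel₀ Real.two_pi_pos.ne' (by linear_combination hn)⟩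

lemma HasAngle.neg {v : ℂ} {x : ℝ} (h : HasAngle v x) : HasAngle (-v) (x + 1 / 2) := by
  rw [← mul_neg_one, ← fourierChar_half]
  exact h.mul (hasAngle_fourierChar (1 / 2))

lemma HasAngle.exists_int {v : ℂ} {x y : ℝ} (hx : HasAngle v x) (hy : HasAngle v y) (hv : v ≠ 0) :
    ∃ n : ℤ, x = y + n :=
  fourierChar_eq_iff.mp <| Subtype.ext <|
    mul_left_cancel₀ (ofReal_ne_zero.mpr (norm_ne_zero_iff.mpr hv)) (hx.symm.trans hy)

variable {Y : Type*} [TopologicalSpace Y]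

lemma eq_of_continuous_of_forall_int [PreconnectedSpace Y] {g : Y → ℝ} (hg : Continuous g)
    (hZ : ∀ a, ∃ n : ℤ, g a = n) (a b : Y) : g a = g b := by
  choose n hn using hZ
  have hnc : Continuous n := by
    rwa [Int.isClosedEmbedding_coe_real.isEmbedding.continuous_iff,
      show ((↑) : ℤ → ℝ) ∘ n = g from funext fun a => (hn a).symm]
  rw [hn, hn, PreconnectedSpace.constant inferInstance hnc]

lemma angle_sub_eq_angle_sub [PreconnectedSpace Y] {V : Y → ℂ} (hV : ∀ a, V a ≠ 0) {x y : Y → ℝ}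
    (hxc : Continuous x) (hx : ∀ a, HasAngle (V a) (x a))
    (hyc : Continuous y) (hy : ∀ a, HasAngle (V a) (y a)) (a b : Y) : x a - x b = y a - y b := by
  have hconst : x a - y a = x b - y b := eq_of_continuous_of_forall_int (hxc.sub hyc) (fun a =>
    ((hx a).exists_int (hy a) (hV a)).imp fun n hn => sub_eq_iff_eq_add'.mpr hn) a b
  linarith

lemma continuous_arg_comp {V : Y → ℂ} (hVc : Continuous V) (hV : ∀ a, V a ∈ slitPlane) :
    Continuous fun a => (V a).arg :=
  continuous_iff_continuousAt.mpr fun a => (continuousAt_arg (hV a)).comp hVc.continuousAt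

lemma angle_sub_eq_arg_sub [PreconnectedSpace Y] {V : Y → ℂ} (hVc : Continuous V)
    (hV : ∀ a, V a ∈ slitPlane) {x : Y → ℝ} (hxc : Continuous x) (hx : ∀ a, HasAngle (V a) (x a))
    (a b : Y) : x a - x b = ((V a).arg - (V b).arg) / (2 * Real.pi) := by
  rw [sub_div]
  exact angle_sub_eq_angle_sub (fun a => slitPlane_ne_zero (hV a)) hxc hx
    ((continuous_arg_comp hVc hV).div_const _) (fun a => hasAngle_arg (V a)) a b

lemma angle_eq_of_isPreconnected {s : Set Y} (hs : IsPreconnected s) {V : Y → ℂ}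
    (hV : ∀ a ∈ s, V a ≠ 0) {c : ℝ} (hc : ∀ a ∈ s, HasAngle (V a) c) {x : Y → ℝ}
    (hxc : Continuous x) (hx : ∀ a ∈ s, HasAngle (V a) (x a)) {a b : Y} (ha : a ∈ s) (hb : b ∈ s) :
    x a = x b := by
  have := isPreconnected_iff_preconnectedSpace.mp hs
  have h := angle_sub_eq_angle_sub (Y := s) (fun a => hV a a.2)
    (hxc.comp continuous_subtype_val) (fun a => hx a a.2) continuous_const (fun a => hc a a.2)
    ⟨a, ha⟩ ⟨b, hb⟩
  exact sub_eq_zero.mp (h.trans (sub_self c))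

lemma exists_continuous_angle [SimplyConnectedSpace Y] [LocallyPathConnectedSpace Y] {V : Y → ℂ}
    (hVc : Continuous V) (hV : ∀ a, V a ≠ 0) :
    ∃ x : Y → ℝ, Continuous x ∧ ∀ a, HasAngle (V a) (x a) := by
  obtain ⟨a⟩ : Nonempty Y := inferInstance
  obtain ⟨L, ⟨-, hL⟩, -⟩ := isCoveringMapOn_exp.existsUnique_continuousMap_lifts
    (f := ⟨V, hVc⟩) (a₀ := a) (e₀ := Complex.log (V a)) (exp_log (hV a)) (by simp [hV])
  refine ⟨fun b => (L b).im / (2 * Real.pi), by fun_prop, fun b => ?_⟩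
  have hLb : V b = cexp (L b) := (congrFun hL b).symm
  refine hasAngle_of_eq_real_mul (Real.exp_pos (L b).re).le ?_
  rw [hLb, Real.fourierChar_apply, mul_div_cancel₀ _ Real.two_pi_pos.ne', ofReal_exp, ← exp_add,
    re_add_im]

end Angles

section Strip

/-- The open strip `0 < im z < 1`. Modulo `z ↦ z + 1` it is an open annulus. -/
def strip : Set ℂ := im ⁻¹' Ioo 0 1

/-- The nearest point retraction of the plane onto the closed strip `0 ≤ im z ≤ 1`. -/
def clampStrip (z : ℂ) : ℂ := ⟨z.re, max 0 (min z.im 1)⟩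

lemma mem_strip {z : ℂ} : z ∈ strip ↔ 0 < z.im ∧ z.im < 1 := Iff.rfl

lemma isOpen_strip : IsOpen strip := isOpen_Ioo.preimage continuous_im

lemma continuous_clampStrip : Continuous clampStrip :=
  equivRealProdCLM.symm.continuous.comp (by fun_prop : Continuous fun z : ℂ =>
    ((z.re, max 0 (min z.im 1)) : ℝ × ℝ))

lemma clampStrip_im_mem (z : ℂ) : (clampStrip z).im ∈ Icc (0 : ℝ) 1 :=
  ⟨le_max_left _ _, max_le zero_le_one (min_le_right _ _)⟩

lemma clampStrip_of_im_mem {z : ℂ} (h : z.im ∈ Icc (0 : ℝ) 1) : clampStrip z = z := by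
  simp [clampStrip, h.1, h.2]

lemma clampStrip_of_im_nonpos {z : ℂ} (h : z.im ≤ 0) : clampStrip z = z.re := by
  apply Complex.ext <;> simp [clampStrip, h]

lemma clampStrip_of_one_le_im {z : ℂ} (h : 1 ≤ z.im) : clampStrip z = z.re + I := by
  apply Complex.ext <;> simp [clampStrip, h]

lemma clampStrip_add_one (z : ℂ) : clampStrip (z + 1) = clampStrip z + 1 := by
  apply Complex.ext <;> simp [clampStrip]

lemma clampStrip_clampStrip (z : ℂ) : clampStrip (clampStrip z) = clampStrip z :=
  clampStrip_of_im_mem (clampStrip_im_mem z)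

lemma map_mem_strip_iff {F : ℂ → ℂ} (him : ∀ z ∉ strip, (F z).im = z.im)
    (hmaps : MapsTo F strip strip) {z : ℂ} : F z ∈ strip ↔ z ∈ strip := by
  refine ⟨fun h => ?_, fun h => hmaps h⟩
  by_contra hz
  rw [mem_strip, him z hz, ← mem_strip] at h
  exact hz h

lemma clampStrip_map_of_map_sub_self {F : ℂ → ℂ}
    (hsub : ∀ z, F z - z = F (clampStrip z) - clampStrip z) (him : ∀ z ∉ strip, (F z).im = z.im)
    (hmaps : MapsTo F strip strip) (z : ℂ) : clampStrip (F z) = F (clampStrip z) := by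
  by_cases hz : z ∈ strip
  · rw [clampStrip_of_im_mem (Ioo_subset_Icc_self hz),
      clampStrip_of_im_mem (Ioo_subset_Icc_self (hmaps hz))]
  · have hclamp : F (clampStrip z) = F z - (z - clampStrip z) := by
      linear_combination -(hsub z)
    rw [hclamp]
    apply Complex.ext <;> simp [clampStrip, him z hz]

lemma isCompact_range_of_periodic_of_clampStrip {Y : Type*} [TopologicalSpace Y] {h : ℂ → Y}
    (hc : Continuous h) (hper : Function.Periodic h 1) (hclamp : ∀ z, h (clampStrip z) = h z) :
    IsCompact (range h) := by
  have hK : IsCompact (Icc (0 : ℝ) 1 ×ℂ Icc (0 : ℝ) 1) := isCompact_Icc.reProdIm isCompact_Icc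
  have hrange : range h = h '' (Icc (0 : ℝ) 1 ×ℂ Icc (0 : ℝ) 1) := by
    refine Subset.antisymm (range_subset_iff.mpr fun z => ?_) (image_subset_range _ _)
    refine ⟨clampStrip z - ⌊z.re⌋, ⟨⟨?_, ?_⟩, ?_⟩, ?_⟩
    · simp [clampStrip]
    · simpa [clampStrip] using (Int.fract_lt_one z.re).le
    · simpa using clampStrip_im_mem z
    · rw [← hclamp z]
      simpa using hper.sub_int_mul_eq (x := clampStrip z) ⌊z.re⌋
  exact hrange ▸ hK.image hc

end Strip

section DegreeOne

lemma map_add_intCast_of_map_add_one {R S : Type*} [Ring R] [Ring S] {f : R → S}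
    (hf : ∀ x, f (x + 1) = f x + 1) (x : R) (n : ℤ) : f (x + n) = f x + n := by
  simpa using AddConstMapClass.map_add_int' (⟨f, hf⟩ : AddConstMap R S 1 1) x n

lemma surjective_of_map_add_one {f : ℝ → ℝ} (hc : Continuous f)
    (hf : ∀ x, f (x + 1) = f x + 1) : Function.Surjective f := by
  have hZ (n : ℤ) : f n = f 0 + n := by
    simpa using map_add_intCast_of_map_add_one hf 0 n
  refine fun a => mem_range_of_exists_le_of_exists_ge hc ⟨⌊a - f 0⌋, ?_⟩ ⟨⌈a - f 0⌉, ?_⟩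
  · linarith [hZ ⌊a - f 0⌋, Int.floor_le (a - f 0)]
  · linarith [hZ ⌈a - f 0⌉, Int.le_ceil (a - f 0)]

lemma strictMono_of_injective_of_map_add_one {f : ℝ → ℝ} (hc : Continuous f)
    (hinj : Function.Injective f) (hf : ∀ x, f (x + 1) = f x + 1) : StrictMono f :=
  (hc.strictMono_of_inj hinj).resolve_right fun hanti => by
    linarith [hanti (zero_lt_one' ℝ), zero_add (1 : ℝ) ▸ hf 0]

/-- An injective continuous map of `ℝ` commuting with `x ↦ x + 1`, as a `CircleDeg1Lift`. -/
def circleDeg1LiftOfInjective (f : ℝ → ℝ) (hc : Continuous f) (hinj : Function.Injective f)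
    (hf : ∀ x, f (x + 1) = f x + 1) : CircleDeg1Lift where
  toFun := f
  monotone' := (strictMono_of_injective_of_map_add_one hc hinj hf).monotone
  map_add_one' := hf

end DegreeOne

section StripMaps

open MeasureTheory

/-- A homeomorphism of the plane is a strip map if it is the lift of an area preserving
homeomorphism of the annulus `strip / ℤ`, extended to the plane by
`F z = F (clampStrip z) + (z - clampStrip z)`. -/
structure IsStripMap (F : ℂ ≃ₜ ℂ) : Prop where
  map_add_one : ∀ z, F (z + 1) = F z + 1
  map_sub_self : ∀ z, F z - z = F (clampStrip z) - clampStrip z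
  im_map_of_notMem : ∀ z ∉ strip, (F z).im = z.im
  mapsTo_strip : MapsTo F strip strip
  measurePreserving : MeasurePreserving F (volume.restrict strip) (volume.restrict strip)

namespace IsStripMap

variable {F G : ℂ ≃ₜ ℂ}

lemma map_mem_strip_iff (hF : IsStripMap F) {z : ℂ} : F z ∈ strip ↔ z ∈ strip :=
  _root_.map_mem_strip_iff hF.im_map_of_notMem hF.mapsTo_strip

lemma map_add_int (hF : IsStripMap F) (z : ℂ) (n : ℤ) : F (z + n) = F z + n :=
  map_add_intCast_of_map_add_one hF.map_add_one z n

lemma clampStrip_map (hF : IsStripMap F) (z : ℂ) : clampStrip (F z) = F (clampStrip z) :=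
  clampStrip_map_of_map_sub_self hF.map_sub_self hF.im_map_of_notMem hF.mapsTo_strip z

lemma one : IsStripMap 1 where
  map_add_one _ := rfl
  map_sub_self z := by simp
  im_map_of_notMem _ _ := rfl
  mapsTo_strip := mapsTo_id _
  measurePreserving := MeasurePreserving.id _

lemma mul (hF : IsStripMap F) (hG : IsStripMap G) : IsStripMap (F * G) where
  map_add_one z := by simp [hG.map_add_one, hF.map_add_one]
  map_sub_self z := by
    have h := hF.map_sub_self (G z)
    rw [hG.clampStrip_map] at h
    simp only [Homeomorph.mul_apply]
    linear_combination h + hG.map_sub_self z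
  im_map_of_notMem z hz := by
    simp only [Homeomorph.mul_apply]
    rw [hF.im_map_of_notMem _ (hG.map_mem_strip_iff.not.mpr hz), hG.im_map_of_notMem z hz]
  mapsTo_strip := hF.mapsTo_strip.comp hG.mapsTo_strip
  measurePreserving := hF.measurePreserving.comp hG.measurePreserving

lemma inv (hF : IsStripMap F) : IsStripMap F⁻¹ where
  map_add_one z := F.injective (by simp [hF.map_add_one])
  map_sub_self z := by
    obtain ⟨w, rfl⟩ := F.surjective z
    rw [hF.clampStrip_map]
    simp only [Homeomorph.inv_apply, F.symm_apply_apply]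
    linear_combination -(hF.map_sub_self w)
  im_map_of_notMem z hz := by
    obtain ⟨w, rfl⟩ := F.surjective z
    rw [hF.im_map_of_notMem w (hF.map_mem_strip_iff.not.mp hz)]
    simp
  mapsTo_strip z hz := by
    obtain ⟨w, rfl⟩ := F.surjective z
    simpa using hF.map_mem_strip_iff.mp hz
  measurePreserving := hF.measurePreserving.symm F.toMeasurableEquiv

lemma addRight_intCast (n : ℤ) : IsStripMap (Homeomorph.addRight (n : ℂ)) where
  map_add_one z := by simp; ring
  map_sub_self z := by simp
  im_map_of_notMem z _ := by simp
  mapsTo_strip z hz := by simpa [mem_strip] using hz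
  measurePreserving := by
    have h := (measurePreserving_add_right volume (n : ℂ)).restrict_preimage
      isOpen_strip.measurableSet
    have hpre : (· + (n : ℂ)) ⁻¹' strip = strip := by ext z; simp [mem_strip]
    rwa [hpre] at h

end IsStripMap

/-- The group of strip maps, under composition. -/
def stripGroup : Subgroup (ℂ ≃ₜ ℂ) where
  carrier := {F | IsStripMap F}
  one_mem' := IsStripMap.one
  mul_mem' := IsStripMap.mul
  inv_mem' := IsStripMap.inv

lemma IsStripMap.map_ofReal_add_mul_I {F : ℂ ≃ₜ ℂ} (hF : IsStripMap F) {y : ℝ}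
    (hy : y ∉ Ioo (0 : ℝ) 1) (x : ℝ) : F (x + y * I) = (F (x + y * I)).re + y * I :=
  Complex.ext (by simp) (by simpa using hF.im_map_of_notMem (x + y * I) (by simpa [strip] using hy))

/-- The action of a strip map on the coordinate of the horizontal line `im z = y`, which it
preserves when `y` is not in `(0, 1)`. -/
noncomputable def lineLift (y : ℝ) (hy : y ∉ Ioo (0 : ℝ) 1) : stripGroup →* CircleDeg1Lift where
  toFun F := circleDeg1LiftOfInjective (fun x => (F.1 (x + y * I)).re) (by fun_prop)
    (fun x x' h => by
      dsimp only at h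
      have heq : F.1 (x + y * I) = F.1 (x' + y * I) := by
        rw [F.2.map_ofReal_add_mul_I hy, h, ← F.2.map_ofReal_add_mul_I hy]
      simpa using F.1.injective heq)
    (fun x => by
      rw [ofReal_add, ofReal_one, add_right_comm, F.2.map_add_one, add_re, one_re])
  map_one' := CircleDeg1Lift.ext fun x => by simp [circleDeg1LiftOfInjective]
  map_mul' F G := CircleDeg1Lift.ext fun x => by
    change (F.1 (G.1 (x + y * I))).re = (F.1 ((G.1 (x + y * I)).re + y * I)).re
    rw [← G.2.map_ofReal_add_mul_I hy]

lemma map_ofReal_add_mul_I_eq_lineLift {y : ℝ} (hy : y ∉ Ioo (0 : ℝ) 1) (F : stripGroup) (x : ℝ) :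
    F.1 (x + y * I) = lineLift y hy F x + y * I :=
  F.2.map_ofReal_add_mul_I hy x

end StripMaps

section Wandering

open MeasureTheory

lemma isAddFundamentalDomain_of_existsUnique_int {s : Set ℂ} (hs : MeasurableSet s)
    (h : ∀ z : ℂ, ∃! n : ℤ, z + n ∈ s) :
    IsAddFundamentalDomain (AddSubgroup.zmultiples (1 : ℂ)) s := by
  refine IsAddFundamentalDomain.mk' hs.nullMeasurableSet fun z => ?_
  have hbij : Function.Bijective (codRestrict (fun n : ℤ => n • (1 : ℂ))
      (AddSubgroup.zmultiples (1 : ℂ)) fun n => ⟨n, rfl⟩) :=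
    (Equiv.ofInjective (fun n : ℤ => n • (1 : ℂ)) fun m n h => by simpa using h).bijective
  refine hbij.existsUnique_iff.mpr ?_
  simpa [AddSubgroup.vadd_def, add_comm] using h z

lemma existsUnique_add_int_re_mem_Ico (z : ℂ) : ∃! n : ℤ, z + n ∈ re ⁻¹' Ico (0 : ℝ) 1 := by
  simpa using existsUnique_add_zsmul_mem_Ico (zero_lt_one' ℝ) z.re 0

lemma measurableSet_re_preimage_Ico : MeasurableSet (re ⁻¹' Ico (0 : ℝ) 1) :=
  measurable_re measurableSet_Ico

lemma volume_strip_inter_re_preimage_Ico_lt_top : volume (strip ∩ re ⁻¹' Ico (0 : ℝ) 1) < ⊤ :=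
  (measure_mono (t := Icc (0 : ℝ) 1 ×ℂ Icc (0 : ℝ) 1) fun _ hz =>
    ⟨Ico_subset_Icc_self hz.2, Ioo_subset_Icc_self hz.1⟩).trans_lt
    (isCompact_Icc.reProdIm isCompact_Icc).measure_lt_top

namespace IsStripMap

variable {F : ℂ ≃ₜ ℂ}

lemma volume_image_of_subset_strip (hF : IsStripMap F) {S : Set ℂ} (hS : S ⊆ strip) :
    volume (F '' S) = volume S := by
  have h := hF.measurePreserving.measure_preimage_equiv (f := F.toMeasurableEquiv) (F '' S)
  rwa [Homeomorph.toMeasurableEquiv_coe, preimage_image_eq _ F.injective,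
    Measure.restrict_eq_self _ hS,
    Measure.restrict_eq_self _ (hF.mapsTo_strip.mono_left hS).image_subset, eq_comm] at h

lemma volume_image_inter_re_preimage_Ico (hF : IsStripMap F) {S : Set ℂ} (hS : S ⊆ strip)
    (hSm : MeasurableSet S) (hper : ∀ (n : ℤ) (z : ℂ), z + n ∈ S ↔ z ∈ S) :
    volume (F '' S ∩ re ⁻¹' Ico 0 1) = volume (S ∩ re ⁻¹' Ico 0 1) := by
  rw [← image_inter_preimage, hF.volume_image_of_subset_strip (inter_subset_left.trans hS)]
  refine (isAddFundamentalDomain_of_existsUnique_int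
    (F.continuous.measurable measurableSet_re_preimage_Ico) fun z => ?_).measure_set_eq
    (isAddFundamentalDomain_of_existsUnique_int measurableSet_re_preimage_Ico
      existsUnique_add_int_re_mem_Ico) hSm ?_
  · simpa only [mem_preimage, hF.map_add_int] using existsUnique_add_int_re_mem_Ico (F z)
  · rintro ⟨_, n, rfl⟩
    ext z
    simpa [AddSubgroup.vadd_def, add_comm] using hper n z

end IsStripMap

/-- The homeomorphism `F` followed by the vertical translation by `ε`. -/
noncomputable def pushUp (ε : ℝ) (F : ℂ ≃ₜ ℂ) : ℂ ≃ₜ ℂ := Homeomorph.addRight (ε * I : ℂ) * F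

variable {F : ℂ ≃ₜ ℂ} {ε : ℝ}

lemma pushUp_apply (ε : ℝ) (F : ℂ ≃ₜ ℂ) (z : ℂ) : pushUp ε F z = F z + ε * I := rfl

lemma im_pushUp_apply (ε : ℝ) (F : ℂ ≃ₜ ℂ) (z : ℂ) : (pushUp ε F z).im = (F z).im + ε := by
  simp [pushUp_apply]

namespace IsStripMap

lemma pushUp_pow_add_int (hF : IsStripMap F) (ε : ℝ) (k : ℕ) (z : ℂ) (n : ℤ) :
    (pushUp ε F ^ k) (z + n) = (pushUp ε F ^ k) z + n := by
  induction k with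
  | zero => rfl
  | succ k ih =>
    simp only [pow_succ', Homeomorph.mul_apply, ih, pushUp_apply, hF.map_add_int]
    ring

lemma le_im_map (hF : IsStripMap F) {b : ℝ} (hb : b ≤ 0) {z : ℂ} (hz : b ≤ z.im) :
    b ≤ (F z).im := by
  by_cases h : z ∈ strip
  · exact hb.trans (hF.mapsTo_strip h).1.le
  · rwa [hF.im_map_of_notMem z h]

lemma im_map_pos (hF : IsStripMap F) {z : ℂ} (hz : 0 < z.im) : 0 < (F z).im := by
  by_cases h : z ∈ strip
  · exact (hF.mapsTo_strip h).1
  · rwa [hF.im_map_of_notMem z h]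

lemma im_pushUp_pow_pos (hF : IsStripMap F) (hε : 0 < ε) (k : ℕ) {z : ℂ} (hz : 0 < z.im) :
    0 < ((pushUp ε F ^ k) z).im := by
  induction k with
  | zero => exact hz
  | succ k ih =>
    rw [pow_succ', Homeomorph.mul_apply, im_pushUp_apply]
    linarith [hF.im_map_pos ih]

lemma volume_pushUp_pow_image_inter (hF : IsStripMap F) {S : Set ℂ} (hSo : IsOpen S)
    (hper : ∀ (n : ℤ) (z : ℂ), z + n ∈ S ↔ z ∈ S)
    (hS : ∀ k : ℕ, (pushUp ε F ^ k) '' S ⊆ strip) (k : ℕ) :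
    volume ((pushUp ε F ^ k) '' S ∩ re ⁻¹' Ico 0 1) = volume (S ∩ re ⁻¹' Ico 0 1) := by
  induction k with
  | zero =>
    change volume (id '' S ∩ _) = _
    rw [image_id]
  | succ k ih =>
    set T : Set ℂ := (pushUp ε F ^ k) '' S
    have hT : (pushUp ε F ^ (k + 1)) '' S = (· + ε * I) '' (F '' T) := by
      simp_rw [T, image_image, ← pushUp_apply, ← Homeomorph.mul_apply, ← pow_succ']
    have hTper (n : ℤ) (z : ℂ) : z + n ∈ T ↔ z ∈ T := by
      obtain ⟨w, rfl⟩ := (pushUp ε F ^ k).surjective z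
      rw [← hF.pushUp_pow_add_int, (pushUp ε F ^ k).injective.mem_set_image,
        (pushUp ε F ^ k).injective.mem_set_image, hper]
    have hvert : (· + ε * I) ⁻¹' (re ⁻¹' Ico (0 : ℝ) 1) = re ⁻¹' Ico (0 : ℝ) 1 := by
      ext z
      simp
    rw [hT, ← image_inter_preimage, hvert, image_add_right, measure_preimage_add_right,
      hF.volume_image_inter_re_preimage_Ico (hS k)
        ((pushUp ε F ^ k).isOpenMap _ hSo).measurableSet hTper, ih]

lemma exists_pushUp_pow_succ_mem (hF : IsStripMap F) {S : Set ℂ} (hSo : IsOpen S)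
    (hper : ∀ (n : ℤ) (z : ℂ), z + n ∈ S ↔ z ∈ S)
    (hS : ∀ k : ℕ, (pushUp ε F ^ k) '' S ⊆ strip) (hpos : volume (S ∩ re ⁻¹' Ico 0 1) ≠ 0) :
    ∃ z ∈ S, ∃ m : ℕ, (pushUp ε F ^ (m + 1)) z ∈ S := by
  set G := pushUp ε F
  have hmeas (k : ℕ) : MeasurableSet ((G ^ k) '' S) := ((G ^ k).isOpenMap _ hSo).measurableSet
  have hvol (k : ℕ) : volume.restrict (strip ∩ re ⁻¹' Ico 0 1) ((G ^ k) '' S) =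
      volume (S ∩ re ⁻¹' Ico 0 1) := by
    rw [Measure.restrict_apply (hmeas k), ← inter_assoc, inter_eq_left.mpr (hS k)]
    exact hF.volume_pushUp_pow_image_inter hSo hper hS k
  obtain ⟨i, j, hij, hmeet⟩ := exists_nonempty_inter_of_measure_univ_lt_tsum_measure
    (volume.restrict (strip ∩ re ⁻¹' Ico 0 1)) (s := fun k : ℕ => (G ^ k) '' S)
    (fun k => (hmeas k).nullMeasurableSet) (by
      simp only [hvol, ENNReal.tsum_const_eq_top_of_ne_zero hpos, Measure.restrict_apply_univ]
      exact volume_strip_inter_re_preimage_Ico_lt_top)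
  wlog hlt : i < j generalizing i j
  · exact this j i hij.symm (inter_comm _ _ ▸ hmeet) (hij.lt_or_gt.resolve_left hlt)
  obtain ⟨_, ⟨a, ha, rfl⟩, b, hb, hab⟩ := hmeet
  obtain ⟨m, rfl⟩ := Nat.exists_eq_add_of_lt hlt
  rw [add_assoc, pow_add, Homeomorph.mul_apply, (G ^ i).injective.eq_iff] at hab
  exact ⟨b, hb, m, hab ▸ ha⟩

/-- Otherwise the images of `{0 < im z < ε}` under the iterates of `pushUp ε F` would be pairwise
disjoint sets of equal positive area in an annulus of finite area. -/
theorem exists_one_le_im_pushUp_pow (hF : IsStripMap F) (hε : 0 < ε) :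
    ∃ w : ℂ, w.im < 0 ∧ ∃ n : ℕ, 1 ≤ ((pushUp ε F ^ n) w).im := by
  by_contra! hbelow
  set G := pushUp ε F
  set D : Set ℂ := im ⁻¹' Ioo 0 ε
  have hDo : IsOpen D := isOpen_Ioo.preimage continuous_im
  have hG_strip (k : ℕ) : (G ^ k) '' D ⊆ strip := by
    rintro _ ⟨z, hz, rfl⟩
    refine ⟨hF.im_pushUp_pow_pos hε k hz.1, ?_⟩
    obtain ⟨w, rfl⟩ := G.surjective z
    have hFw : (F w).im < 0 := by linarith [hz.2, im_pushUp_apply ε F w]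
    have hw : w.im < 0 := by
      by_contra! h
      exact hFw.not_ge (hF.le_im_map le_rfl h)
    exact hbelow w hw (k + 1)
  have hpos : volume (D ∩ re ⁻¹' Ico 0 1) ≠ 0 := by
    have hopen := (hDo.inter (isOpen_Ioo.preimage continuous_re :
      IsOpen (re ⁻¹' Ioo (0 : ℝ) 1))).measure_pos volume
        ⟨⟨1 / 2, ε / 2⟩, ⟨by simpa, by simpa⟩, by norm_num, by norm_num⟩
    exact (hopen.trans_le (measure_mono
      (inter_subset_inter_right _ (preimage_mono Ioo_subset_Ico_self)))).ne'
  obtain ⟨z, hz, m, hm⟩ := hF.exists_pushUp_pow_succ_mem hDo (fun n z => by simp [D]) hG_strip hpos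
  rw [pow_succ', Homeomorph.mul_apply] at hm
  have him : ε < (G ((G ^ m) z)).im := by
    rw [im_pushUp_apply]
    linarith [hF.im_map_pos (hF.im_pushUp_pow_pos hε m hz.1)]
  exact him.not_gt hm.2

end IsStripMap

end Wandering

section Curves

lemma exists_continuous_curve_map_eq_add_one {Y : Type*} [TopologicalSpace Y] (G : Y ≃ₜ Y)
    {c : ℝ → Y} (hc : Continuous c) (hc1 : c 1 = G (c 0)) :
    ∃ γ : ℝ → Y, Continuous γ ∧ EqOn γ c (Ico 0 1) ∧ ∀ t, γ (t + 1) = G (γ t) := by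
  set γ : ℝ → Y := fun t => (G ^ ⌊t⌋) (c (t - ⌊t⌋))
  have hγ (n : ℤ) : EqOn γ (fun t => (G ^ n) (c (t - n))) (Icc n (n + 1)) := by
    rintro t ⟨hnt, htn⟩
    rcases htn.lt_or_eq with hlt | rfl
    · simp only [γ, Int.floor_eq_iff.mpr ⟨hnt, hlt⟩]
    · have hfloor : ⌊(n : ℝ) + 1⌋ = n + 1 := by simp
      simp [γ, hfloor, zpow_add_one, hc1]
  refine ⟨γ, ?_, fun t ht => ?_, fun t => ?_⟩
  · refine (locallyFinite_Icc_of_tendsto (f := fun n : ℤ => (n : ℝ))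
      (g := fun n : ℤ => (n : ℝ) + 1) tendsto_intCast_atTop_atTop
      (tendsto_atBot_add_const_right _ _ (tendsto_intCast_atBot_iff.mpr tendsto_id))).continuous
      (iUnion_eq_univ_iff.mpr fun t => ⟨⌊t⌋, Int.floor_le t, (Int.lt_floor_add_one t).le⟩)
      (fun n => isClosed_Icc) fun n => ?_
    exact ((G ^ n).continuous.comp (hc.comp (continuous_sub_right _))).continuousOn.congr (hγ n)
  · simp [γ, Int.floor_eq_zero_iff.mpr ht, Int.fract_eq_self.mpr ht]
  · simp only [γ, Int.floor_add_one, add_comm ⌊t⌋, zpow_one_add, Homeomorph.mul_apply]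
    congr 3
    push_cast
    ring

lemma map_add_natCast_of_map_add_one {Y : Type*} [TopologicalSpace Y] {G : Y ≃ₜ Y} {γ : ℝ → Y}
    (hγ : ∀ t, γ (t + 1) = G (γ t)) (t : ℝ) (k : ℕ) : γ (t + k) = (G ^ k) (γ t) := by
  induction k with
  | zero => simp
  | succ k ih =>
    rw [Nat.cast_succ, ← add_assoc, hγ, ih, pow_succ', Homeomorph.mul_apply]

/-- The chord of `γ` from parameter `min a b` to parameter `1 + max a b` never vanishes. Moving
`(a, b)` along the diagonal, its angle varies as that of `γ (t + 1) - γ t`; moving it along the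
other two sides of the triangle `0 ≤ a ≤ b ≤ τ` the chord stays in the upper half plane. -/
theorem angle_sub_of_curve {γ : ℝ → ℂ} {τ : ℝ} (hγ : Continuous γ) (hτ : 0 ≤ τ)
    (hne : ∀ t s, 0 ≤ t → t + 1 ≤ s → γ s ≠ γ t) (hbot : ∀ s, 1 ≤ s → (γ 0).im < (γ s).im)
    (htop : ∀ t ∈ Icc 0 τ, (γ t).im < (γ (τ + 1)).im) {x : ℝ → ℝ} (hxc : Continuous x)
    (hx : ∀ t ∈ Icc 0 τ, HasAngle (γ (t + 1) - γ t) (x t)) :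
    x τ - x 0 = ((γ (τ + 1) - γ τ).arg - (γ 1 - γ 0).arg) / (2 * Real.pi) := by
  set c : ℝ → ℝ := fun t => max 0 (min t τ)
  have hc (t : ℝ) : c t ∈ Icc 0 τ := ⟨le_max_left _ _, max_le hτ (min_le_right _ _)⟩
  have hc0 : c 0 = 0 := by simp [c, hτ]
  have hcτ : c τ = τ := by simp [c, hτ]
  set V : ℝ × ℝ → ℂ := fun p => γ (max (c p.1) (c p.2) + 1) - γ (min (c p.1) (c p.2))
  have hVc : Continuous V := by fun_prop
  have hV (p : ℝ × ℝ) : V p ≠ 0 := sub_ne_zero.mpr <|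
    hne _ _ (le_min (hc p.1).1 (hc p.2).1) (add_le_add_left min_le_max 1)
  obtain ⟨y, hyc, hy⟩ := exists_continuous_angle hVc hV
  have hdiag (t : ℝ) : V (t, t) = γ (c t + 1) - γ (c t) := by simp only [V, max_self, min_self]
  have hside_bot : y (0, τ) - y (0, 0) = ((V (0, τ)).arg - (V (0, 0)).arg) / (2 * Real.pi) := by
    refine angle_sub_eq_arg_sub (V := fun b => V (0, b)) (x := fun b => y (0, b)) (by fun_prop)
      (fun b => Or.inr (ne_of_gt ?_)) (by fun_prop) (fun b => hy _) τ 0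
    simpa [V, hc0, (hc b).1] using hbot (c b + 1) (by linarith [(hc b).1])
  have hside_top : y (τ, τ) - y (0, τ) = ((V (τ, τ)).arg - (V (0, τ)).arg) / (2 * Real.pi) := by
    refine angle_sub_eq_arg_sub (V := fun a => V (a, τ)) (x := fun a => y (a, τ)) (by fun_prop)
      (fun a => Or.inr (ne_of_gt ?_)) (by fun_prop) (fun a => hy _) τ 0
    simpa [V, hcτ, (hc a).2] using htop (c a) (hc a)
  have hside_diag : y (τ, τ) - y (0, 0) = x τ - x 0 := by
    have h := angle_sub_eq_angle_sub (V := fun t => V (t, t)) (x := fun t => y (t, t))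
      (y := fun t => x (c t)) (fun t => hV _) (by fun_prop) (fun t => hy _) (by fun_prop)
      (fun t => hdiag t ▸ hx (c t) (hc t)) τ 0
    simpa only [hcτ, hc0] using h
  rw [hdiag, hc0, zero_add] at hside_bot
  rw [hdiag, hcτ] at hside_top
  linear_combination hside_bot + hside_top - hside_diag

lemma exists_lt_of_add_one_eq_add {u : ℝ → ℝ} (hu : Continuous u) {ε : ℝ} (hε : 0 < ε)
    (hu0 : ∀ t ∈ Ico (0 : ℝ) 1, u t < 1 + ε) (hlow : ∀ t, u t < 1 → u (t + 1) < 1 + ε)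
    (hhigh : ∀ t, 1 ≤ u t → u (t + 1) = u t + ε) {n : ℕ} (hn : 1 ≤ u n) :
    ∃ τ, 0 ≤ τ ∧ 1 ≤ u τ ∧ ∀ t ∈ Icc 0 τ, u t < u (τ + 1) := by
  have hn0 : (0 : ℝ) ≤ n + 1 := by positivity
  obtain ⟨T, hT, hTmax⟩ := (isCompact_Icc (a := 0) (b := (n : ℝ) + 1)).exists_isMaxOn
    ⟨0, left_mem_Icc.mpr hn0⟩ hu.continuousOn
  have hmax {t : ℝ} (ht : t ∈ Icc 0 ((n : ℝ) + 1)) : u t ≤ u T := hTmax ht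
  have huT : 1 + ε ≤ u T := by linarith [hhigh n hn, hmax (right_mem_Icc.mpr hn0)]
  have hT1 : 1 ≤ T := by
    by_contra! h
    exact (hu0 T ⟨hT.1, h⟩).not_ge huT
  refine ⟨T - 1, by linarith, ?_, fun t ht => ?_⟩
  · by_contra! h
    have hlt := hlow (T - 1) h
    rw [sub_add_cancel] at hlt
    exact hlt.not_ge huT
  · rw [sub_add_cancel]
    rcases lt_or_ge (u t) 1 with h | h
    · linarith
    · linarith [hhigh t h, hmax (t := t + 1) ⟨by linarith [ht.1], by linarith [ht.2, hT.2]⟩]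

namespace IsStripMap

variable {F : ℂ ≃ₜ ℂ} {ε : ℝ}

lemma im_map_lt_one (hF : IsStripMap F) {z : ℂ} (hz : z.im < 1) : (F z).im < 1 := by
  by_cases h : z ∈ strip
  · exact (hF.mapsTo_strip h).2
  · rwa [hF.im_map_of_notMem z h]

lemma le_im_pushUp_pow (hF : IsStripMap F) (hε : 0 ≤ ε) (k : ℕ) {b : ℝ} (hb : b ≤ 0) {z : ℂ}
    (hz : b ≤ z.im) : b ≤ ((pushUp ε F ^ k) z).im := by
  induction k with
  | zero => exact hz
  | succ k ih =>
    rw [pow_succ', Homeomorph.mul_apply, im_pushUp_apply]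
    linarith [hF.le_im_map hb ih]

lemma exists_curve_pushUp (hF : IsStripMap F) (hε : 0 < ε) :
    ∃ γ : ℝ → ℂ, Continuous γ ∧ (∀ t, γ (t + 1) = pushUp ε F (γ t)) ∧ (γ 0).im < 0 ∧
      (∀ t ∈ Ico (0 : ℝ) 1, (γ t).im = (γ 0).im + t * ε) ∧ ∃ n : ℕ, 1 ≤ (γ n).im := by
  obtain ⟨w, hw, n, hn⟩ := hF.exists_one_le_im_pushUp_pow hε
  obtain ⟨γ, hγc, hγ01, hγ1⟩ := exists_continuous_curve_map_eq_add_one (pushUp ε F)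
    (c := fun t : ℝ => w + t * (pushUp ε F w - w)) (by fun_prop) (by simp)
  have hγ0 : γ 0 = w := by simpa using hγ01 (left_mem_Ico.mpr one_pos)
  refine ⟨γ, hγc, hγ1, hγ0 ▸ hw, fun t ht => ?_, n, ?_⟩
  · rw [hγ01 ht, hγ0, add_im, im_ofReal_mul, sub_im, im_pushUp_apply,
      hF.im_map_of_notMem w fun h => h.1.not_gt hw]
    ring
  · have hγn := map_add_natCast_of_map_add_one hγ1 0 n
    rw [zero_add, hγ0] at hγn
    rwa [hγn]

lemma exists_curve_pushUp_of_im_lt (hF : IsStripMap F) (hε : 0 < ε) :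
    ∃ (γ : ℝ → ℂ) (τ : ℝ), Continuous γ ∧ (∀ t, γ (t + 1) = pushUp ε F (γ t)) ∧ 0 ≤ τ ∧
      (γ 0).im ≤ 0 ∧ 1 ≤ (γ τ).im ∧ (∀ t s, 0 ≤ t → t + 1 ≤ s → γ s ≠ γ t) ∧
      (∀ s, 1 ≤ s → (γ 0).im < (γ s).im) ∧ ∀ t ∈ Icc 0 τ, (γ t).im < (γ (τ + 1)).im := by
  obtain ⟨γ, hγc, hγ1, hγ0, hγ01, n, hn⟩ := hF.exists_curve_pushUp hε
  have hpow := map_add_natCast_of_map_add_one hγ1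
  have hfract {t : ℝ} (ht : 0 ≤ t) : Int.fract t + ⌊t⌋₊ = t := by
    rw [natCast_floor_eq_intCast_floor ht, Int.fract_add_floor]
  have hlow {t : ℝ} (ht : 0 ≤ t) : (γ 0).im ≤ (γ t).im := by
    rw [← hfract ht, hpow]
    refine hF.le_im_pushUp_pow hε.le _ hγ0.le ?_
    rw [hγ01 _ ⟨Int.fract_nonneg t, Int.fract_lt_one t⟩]
    linarith [mul_nonneg (Int.fract_nonneg t) hε.le]
  have hlow1 {s : ℝ} (hs : 1 ≤ s) : (γ 0).im + ε ≤ (γ s).im := by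
    rw [← sub_add_cancel s 1, hγ1, im_pushUp_apply]
    linarith [hF.le_im_map hγ0.le (hlow (sub_nonneg.mpr hs))]
  have hne (t s : ℝ) (ht : 0 ≤ t) (hts : t + 1 ≤ s) : γ s ≠ γ t := by
    have hγt := hpow (Int.fract t) ⌊t⌋₊
    have hγs := hpow (s - ⌊t⌋₊) ⌊t⌋₊
    rw [hfract ht] at hγt
    rw [sub_add_cancel] at hγs
    rw [hγt, hγs]
    refine (pushUp ε F ^ ⌊t⌋₊).injective.ne fun h => ?_
    have him := hlow1 (s := s - ⌊t⌋₊) (by linarith [Int.fract_nonneg t, hfract ht])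
    rw [h, hγ01 _ ⟨Int.fract_nonneg t, Int.fract_lt_one t⟩] at him
    nlinarith [Int.fract_lt_one t]
  obtain ⟨τ, hτ0, hτ1, hτ⟩ := exists_lt_of_add_one_eq_add (u := fun t => (γ t).im) (by fun_prop) hε
    (fun t ht => by nlinarith [hγ01 t ht, ht.2]) (fun t ht => by
      rw [hγ1, im_pushUp_apply]
      linarith [hF.im_map_lt_one ht]) (fun t ht => by
      rw [hγ1, im_pushUp_apply, hF.im_map_of_notMem _ fun h => h.2.not_ge ht]) hn
  exact ⟨γ, τ, hγc, hγ1, hτ0, hγ0.le, hτ1, hne, fun s hs => by linarith [hlow1 hs], hτ⟩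

end IsStripMap

end Curves

section FixedPoints

lemma arg_one_add_div_of_im_eq_zero {v w : ℂ} (hv : v ≠ 0) (him : v.im = 0) (hw : 0 < w.im) :
    (1 + w / v).arg = (v + w).arg - v.arg := by
  obtain ⟨r, rfl⟩ : ∃ r : ℝ, v = r := ⟨v.re, Complex.ext rfl him⟩
  have hmul : (r : ℂ) + w = r * (1 + w / r) := by rw [mul_add, mul_one, mul_div_cancel₀ _ hv]
  rcases (ofReal_ne_zero.mp hv).lt_or_gt with hr | hr
  · have him_neg : (1 + w / r).im < 0 := by
      simpa [div_ofReal_im] using div_neg_of_pos_of_neg hw hr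
    have hneg : (r : ℂ) + w = ((-r : ℝ) : ℂ) * -(1 + w / r) := by rw [hmul]; push_cast; ring
    rw [hneg, arg_real_mul _ (neg_pos.mpr hr), arg_ofReal_of_neg hr,
      arg_neg_eq_arg_add_pi_of_im_neg him_neg, add_sub_cancel_right]
  · rw [hmul, arg_real_mul _ hr, arg_ofReal_of_nonneg hr.le, sub_zero]

namespace IsStripMap

variable {F : ℂ ≃ₜ ℂ}

lemma exists_pos_le_norm_map_sub_self (hF : IsStripMap F) (hfix : ∀ z, F z ≠ z) :
    ∃ δ > 0, ∀ z, δ ≤ ‖F z - z‖ := by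
  have hcompact : IsCompact (range fun z => F z - z) :=
    isCompact_range_of_periodic_of_clampStrip (by fun_prop) (fun z => by simp [hF.map_add_one])
      fun z => (hF.map_sub_self z).symm
  obtain ⟨δ, hδ, hball⟩ := Metric.isOpen_iff.mp hcompact.isClosed.isOpen_compl 0
    fun ⟨z, hz⟩ => hfix z (sub_eq_zero.mp hz)
  refine ⟨δ, hδ, fun z => ?_⟩
  by_contra! hz
  exact hball (mem_ball_zero_iff.mpr hz) ⟨z, rfl⟩

/-- The total rotation of `F z - z` between the two ends of the strip is computed along the curve
of `exists_curve_pushUp_of_im_lt`, on which `pushUp ε F` is a translation of the parameter. -/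
theorem exists_angle_sub_eq_arg_sub (hF : IsStripMap F) (hfix : ∀ z, F z ≠ z) {x : ℂ → ℝ}
    (hxc : Continuous x) (hx : ∀ z, HasAngle (F z - z) (x z)) :
    ∃ p q : ℂ, p.im ≤ 0 ∧ 1 ≤ q.im ∧
      x q - x p = ((F q - q).arg - (F p - p).arg) / (2 * Real.pi) := by
  obtain ⟨δ, hδ, hδF⟩ := hF.exists_pos_le_norm_map_sub_self hfix
  set ε := δ / 2
  have hε : 0 < ε := half_pos hδ
  obtain ⟨γ, τ, hγc, hγ1, hτ, hγ0, hγτ, hne, hbot, htop⟩ := hF.exists_curve_pushUp_of_im_lt hε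
  have hv (z : ℂ) : F z - z ≠ 0 := sub_ne_zero.mpr (hfix z)
  have hslit (z : ℂ) : 1 + ε * I / (F z - z) ∈ slitPlane := by
    refine mem_slitPlane_of_norm_lt_one ?_
    rw [norm_div, norm_mul, norm_I, mul_one, Complex.norm_of_nonneg hε.le,
      div_lt_one (norm_pos_iff.mpr (hv z))]
    exact (half_lt_self hδ).trans_le (hδF z)
  have hchord (t : ℝ) :
      γ (t + 1) - γ t = (F (γ t) - γ t) * (1 + ε * I / (F (γ t) - γ t)) := by
    rw [mul_add, mul_one, mul_div_cancel₀ _ (hv _), hγ1, pushUp_apply]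
    ring
  have hquot (z : ℂ) (hz : z ∉ strip) :
      (1 + ε * I / (F z - z)).arg = (pushUp ε F z - z).arg - (F z - z).arg := by
    rw [arg_one_add_div_of_im_eq_zero (hv z) (by simp [hF.im_map_of_notMem z hz]) (by simpa),
      pushUp_apply, add_sub_right_comm]
  have hsum := angle_sub_of_curve (x := fun t => x (γ t) +
    (1 + ε * I / (F (γ t) - γ t)).arg / (2 * Real.pi)) hγc hτ hne hbot htop
    ((hxc.comp hγc).add ((continuous_arg_comp
      (by fun_prop (disch := exact fun _ => hv _)) fun t => hslit (γ t)).div_const _))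
    fun t _ => hchord t ▸ (hx _).mul (hasAngle_arg _)
  have hγ0_notMem : γ 0 ∉ strip := fun h => h.1.not_ge hγ0
  have hγτ_notMem : γ τ ∉ strip := fun h => h.2.not_ge hγτ
  have hγ01 : γ 1 = pushUp ε F (γ 0) := by rw [← hγ1, zero_add]
  rw [hquot _ hγ0_notMem, hquot _ hγτ_notMem, hγ1 τ, hγ01] at hsum
  exact ⟨γ 0, γ τ, hγ0, hγτ, by linear_combination hsum⟩

end IsStripMap

/-- The action of a strip map on the lower boundary line `im z = 0`. -/
noncomputable abbrev lowerLift : stripGroup →* CircleDeg1Lift := lineLift 0 (by simp)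

/-- The action of a strip map on the upper boundary line `im z = 1`. -/
noncomputable abbrev upperLift : stripGroup →* CircleDeg1Lift := lineLift 1 (by simp)

lemma map_sub_self_of_im_nonpos (F : stripGroup) {z : ℂ} (hz : z.im ≤ 0) :
    F.1 z - z = (lowerLift F z.re - z.re : ℝ) := by
  have h := map_ofReal_add_mul_I_eq_lineLift (y := 0) (by simp) F z.re
  rw [ofReal_zero, zero_mul, add_zero, add_zero] at h
  rw [F.2.map_sub_self, clampStrip_of_im_nonpos hz, h, ofReal_sub]

lemma map_sub_self_of_one_le_im (F : stripGroup) {z : ℂ} (hz : 1 ≤ z.im) :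
    F.1 z - z = (upperLift F z.re - z.re : ℝ) := by
  have h := map_ofReal_add_mul_I_eq_lineLift (y := 1) (by simp) F z.re
  rw [ofReal_one, one_mul] at h
  rw [F.2.map_sub_self, clampStrip_of_one_le_im hz, h, ofReal_sub, add_sub_add_right_eq_sub]

lemma hasAngle_ofReal_of_pos {r : ℝ} (hr : 0 < r) : HasAngle r 0 :=
  hasAngle_of_eq_real_mul hr.le (by simp)

lemma hasAngle_ofReal_of_neg {r : ℝ} (hr : r < 0) : HasAngle r (1 / 2) :=
  hasAngle_of_eq_real_mul (neg_pos.mpr hr).le (by rw [fourierChar_half]; simp)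

lemma mem_strip_of_map_eq {F : stripGroup} (hlow : ∀ x, lowerLift F x < x)
    (hup : ∀ x, x < upperLift F x) {z : ℂ} (h : F.1 z = z) : z ∈ strip := by
  by_contra hz
  rw [← sub_eq_zero] at h
  rcases le_or_gt z.im 0 with hz0 | hz0
  · rw [map_sub_self_of_im_nonpos F hz0, ofReal_eq_zero] at h
    exact (hlow z.re).ne (sub_eq_zero.mp h)
  · rw [map_sub_self_of_one_le_im F (not_lt.mp fun h1 => hz ⟨hz0, h1⟩), ofReal_eq_zero] at h
    exact (hup z.re).ne' (sub_eq_zero.mp h)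

/-- The **Poincaré–Birkhoff** fixed point theorem. -/
theorem exists_map_eq_of_twist (F : stripGroup) (hlow : ∀ x, lowerLift F x < x)
    (hup : ∀ x, x < upperLift F x) : ∃ z ∈ strip, F.1 z = z := by
  by_contra! hstrip
  have hfix (z : ℂ) : F.1 z ≠ z := fun h => hstrip z (mem_strip_of_map_eq hlow hup h) h
  have hne (z : ℂ) : F.1 z - z ≠ 0 := sub_ne_zero.mpr (hfix z)
  obtain ⟨x, hxc, hx⟩ := exists_continuous_angle (V := fun z => F.1 z - z) (by fun_prop) hne
  have hlow_eq {p q : ℂ} (hp : p.im ≤ 0) (hq : q.im ≤ 0) : x p = x q :=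
    angle_eq_of_isPreconnected (convex_halfSpace_im_le 0).isPreconnected (fun z _ => hne z)
      (fun z hz => map_sub_self_of_im_nonpos F hz ▸ hasAngle_ofReal_of_neg (sub_neg.mpr (hlow _)))
      hxc (fun z _ => hx z) hp hq
  have hup_eq {p q : ℂ} (hp : 1 ≤ p.im) (hq : 1 ≤ q.im) : x p = x q :=
    angle_eq_of_isPreconnected (convex_halfSpace_im_ge 1).isPreconnected (fun z _ => hne z)
      (fun z hz => map_sub_self_of_one_le_im F hz ▸ hasAngle_ofReal_of_pos (sub_pos.mpr (hup _)))
      hxc (fun z _ => hx z) hp hq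
  have hinv_sub (z : ℂ) : F.1⁻¹ z - z = -(F.1 (F.1⁻¹ z) - F.1⁻¹ z) := by simp
  obtain ⟨p, q, hp, hq, hpq⟩ := F.2.exists_angle_sub_eq_arg_sub hfix hxc hx
  obtain ⟨p', q', hp', hq', hpq'⟩ := F.2.inv.exists_angle_sub_eq_arg_sub
    (x := fun z => x (F.1⁻¹ z) + 1 / 2) (fun z h => hfix z (by nth_rewrite 1 [← h]; simp))
    (by fun_prop) (fun z => hinv_sub z ▸ (hx _).neg)
  have hp'' : (F.1⁻¹ p').im ≤ 0 := by
    rwa [F.2.inv.im_map_of_notMem p' fun h => h.1.not_ge hp']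
  have hq'' : 1 ≤ (F.1⁻¹ q').im := by
    rwa [F.2.inv.im_map_of_notMem q' fun h => h.2.not_ge hq']
  rw [map_sub_self_of_im_nonpos F hp, map_sub_self_of_one_le_im F hq,
    arg_ofReal_of_neg (sub_neg.mpr (hlow _)), arg_ofReal_of_nonneg (sub_pos.mpr (hup _)).le] at hpq
  rw [hinv_sub, hinv_sub, map_sub_self_of_im_nonpos F hp'', map_sub_self_of_one_le_im F hq'',
    ← ofReal_neg, ← ofReal_neg, arg_ofReal_of_nonneg (neg_pos.mpr (sub_neg.mpr (hlow _))).le,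
    arg_ofReal_of_neg (neg_neg_iff_pos.mpr (sub_pos.mpr (hup _))), hlow_eq hp'' hp,
    hup_eq hq'' hq] at hpq'
  have hsum : (0 - Real.pi) / (2 * Real.pi) = (Real.pi - 0) / (2 * Real.pi) := by
    linear_combination hpq' - hpq
  field_simp at hsum
  linarith [Real.pi_pos]

end FixedPoints

section RotationNumbers

open CircleDeg1Lift

/-- The translation by an integer, as a strip map. -/
noncomputable def intTranslation (p : ℤ) : stripGroup :=
  ⟨Homeomorph.addRight (p : ℂ), IsStripMap.addRight_intCast p⟩

lemma lineLift_intTranslation_mul {y : ℝ} (hy : y ∉ Ioo (0 : ℝ) 1) (p : ℤ) (F : stripGroup)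
    (x : ℝ) :
    lineLift y hy (intTranslation p * F) x = lineLift y hy F x + p := by
  have h := map_ofReal_add_mul_I_eq_lineLift hy (intTranslation p * F) x
  have hF := map_ofReal_add_mul_I_eq_lineLift hy F x
  change F.1 (x + y * I) + p = _ at h
  rw [hF] at h
  simpa using (congrArg re h).symm

lemma exists_pow_map_eq_add_int_of_translationNumber_lt (F : stripGroup)
    (hlt : translationNumber (lowerLift F) < translationNumber (upperLift F)) :
    ∃ q : ℕ, 1 ≤ q ∧ ∃ p : ℤ, ∃ z ∈ strip, (F.1 ^ q) z = z + p := by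
  obtain ⟨r, hr_low, hr_up⟩ := exists_rat_btwn hlt
  have hden : (0 : ℝ) < r.den := by exact_mod_cast r.den_pos
  rw [Rat.cast_def, lt_div_iff₀ hden, mul_comm, ← translationNumber_pow, ← map_pow] at hr_low
  rw [Rat.cast_def, div_lt_iff₀ hden, mul_comm, ← translationNumber_pow, ← map_pow] at hr_up
  obtain ⟨z, hz, hfix⟩ := exists_map_eq_of_twist (intTranslation (-r.num) * F ^ r.den)
    (fun x => by
      rw [lineLift_intTranslation_mul]
      push_cast
      linarith [map_lt_of_translationNumber_lt_int _ hr_low x])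
    (fun x => by
      rw [lineLift_intTranslation_mul]
      push_cast
      linarith [lt_map_of_int_lt_translationNumber _ hr_up x])
  refine ⟨r.den, r.den_pos, r.num, z, hz, ?_⟩
  change (F.1 ^ r.den) z + ((-r.num : ℤ) : ℂ) = z at hfix
  push_cast at hfix
  linear_combination hfix

lemma translationNumber_lineLift_inv {y : ℝ} (hy : y ∉ Ioo (0 : ℝ) 1) (F : stripGroup) :
    translationNumber (lineLift y hy F⁻¹) = -translationNumber (lineLift y hy F) :=
  translationNumber_units_inv ((lineLift y hy).toHomUnits F)

theorem translationNumber_lowerLift_eq_upperLift (F : stripGroup)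
    (hper : ∀ z ∈ strip, ∀ q : ℕ, 1 ≤ q → ∀ p : ℤ, (F.1 ^ q) z ≠ z + p) :
    translationNumber (lowerLift F) = translationNumber (upperLift F) := by
  rcases lt_trichotomy (translationNumber (lowerLift F)) (translationNumber (upperLift F)) with
    hlt | heq | hgt
  · obtain ⟨q, hq, p, z, hz, hzp⟩ := exists_pow_map_eq_add_int_of_translationNumber_lt F hlt
    exact absurd hzp (hper z hz q hq p)
  · exact heq
  · obtain ⟨q, hq, p, z, hz, hzp⟩ := exists_pow_map_eq_add_int_of_translationNumber_lt F⁻¹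
      (by rwa [translationNumber_lineLift_inv, translationNumber_lineLift_inv, neg_lt_neg_iff])
    refine absurd ?_ (hper z hz q hq (-p))
    have hz' : z = (F.1 ^ q) (z + p) := by
      rw [← hzp, ← Homeomorph.mul_apply]
      simp
    have hadd := (F ^ q).2.map_add_int z p
    change (F.1 ^ q) (z + p) = (F.1 ^ q) z + p at hadd
    push_cast
    linear_combination -hz' - hadd

end RotationNumbers

section PolarCoordinates

/-- Area preserving (up to the factor `π`) polar coordinates: the closed strip `0 ≤ im z ≤ 1` is
mapped to the closed disk, with the line `im z = 0` collapsed to the origin. -/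
noncomputable def polar (z : ℂ) : ℂ := √z.im * 𝐞 z.re

lemma norm_polar (z : ℂ) : ‖polar z‖ = √z.im := by
  rw [polar, norm_mul, Circle.norm_coe, mul_one, Complex.norm_of_nonneg (Real.sqrt_nonneg _)]

lemma continuous_polar : Continuous polar :=
  (by fun_prop : Continuous fun z : ℂ => (√z.im : ℂ)).mul <|
    continuous_subtype_val.comp (Real.continuous_fourierChar.comp continuous_re)

lemma polar_of_im_nonpos {z : ℂ} (hz : z.im ≤ 0) : polar z = 0 := by
  rw [polar, Real.sqrt_eq_zero_of_nonpos hz, ofReal_zero, zero_mul]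

lemma polar_ne_zero {z : ℂ} (hz : 0 < z.im) : polar z ≠ 0 := by
  rw [← norm_pos_iff, norm_polar]
  exact Real.sqrt_pos.mpr hz

lemma polar_mem_disk {z : ℂ} (hz : z.im ≤ 1) : polar z ∈ Disk := by
  rw [Disk, mem_closedBall_zero_iff, norm_polar]
  exact Real.sqrt_le_one.mpr hz

lemma fourierChar_mem_disk (x : ℝ) : (𝐞 x : ℂ) ∈ Disk :=
  mem_closedBall_zero_iff.mpr (Circle.norm_coe _).le

lemma polar_ofReal_add_I (x : ℝ) : polar (x + I) = 𝐞 x := by simp [polar]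

lemma polar_add_int (z : ℂ) (n : ℤ) : polar (z + n) = polar z := by
  simp [polar, fourierChar_add_int]

lemma polar_eq_of_hasAngle {v : ℂ} {x : ℝ} (hv : HasAngle v x) : polar ⟨x, ‖v‖ ^ 2⟩ = v := by
  rw [polar, Real.sqrt_sq (norm_nonneg v)]
  exact hv.symm

lemma exists_polar_eq {p : ℂ} (hp : p ∈ Disk) : ∃ z : ℂ, z.im ∈ Icc (0 : ℝ) 1 ∧ polar z = p := by
  rw [Disk, mem_closedBall_zero_iff] at hp
  exact ⟨_, ⟨by positivity, pow_le_one₀ (norm_nonneg p) hp⟩, polar_eq_of_hasAngle (hasAngle_arg p)⟩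

lemma exists_eq_add_int_of_polar_eq {z w : ℂ} (hz : 0 < z.im) (h : polar z = polar w) :
    ∃ n : ℤ, z = w + n := by
  have hsqrt : √z.im = √w.im := by rw [← norm_polar, ← norm_polar, h]
  have hw : 0 < w.im := Real.sqrt_pos.mp (hsqrt ▸ Real.sqrt_pos.mpr hz)
  have him : z.im = w.im := (Real.sqrt_inj hz.le hw.le).mp hsqrt
  have hangle : 𝐞 z.re = 𝐞 w.re := by
    refine Subtype.ext (mul_left_cancel₀ (ofReal_ne_zero.mpr (Real.sqrt_pos.mpr hz).ne') ?_)
    exact h.trans (by rw [polar, hsqrt])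
  obtain ⟨n, hn⟩ := fourierChar_eq_iff.mp hangle
  exact ⟨n, Complex.ext (by simpa using hn) (by simpa using him)⟩

lemma injOn_polar (n : ℤ) : InjOn polar (strip ∩ re ⁻¹' Ico (n : ℝ) (n + 1)) := by
  intro z hz w hw h
  obtain ⟨m, rfl⟩ := exists_eq_add_int_of_polar_eq hz.1.1 h
  have hz' := hz.2
  have hw' := hw.2
  simp only [mem_preimage, add_re, intCast_re, mem_Ico] at hz' hw'
  have hm : |(m : ℝ)| < 1 := abs_lt.mpr ⟨by linarith, by linarith⟩
  have hm0 : m = 0 := Int.abs_lt_one_iff.mp (by exact_mod_cast hm)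
  rw [hm0, Int.cast_zero, add_zero]

end PolarCoordinates

section Blowup

/-- The map induced by `φ` on the oriented blow-up of the origin: `φ (polar z)` divided by
`‖polar z‖`, extended by the derivative `A` on directions to the points above the origin. Writing it
as a perturbation of `A` makes the extension continuous. -/
noncomputable def blowup (φ : ℂ → ℂ) (A : ℂ →L[ℝ] ℂ) (z : ℂ) : ℂ :=
  A (𝐞 z.re) + ‖polar z‖⁻¹ • (φ (polar z) - A (polar z))

variable {φ : ℂ → ℂ} {A : ℂ →L[ℝ] ℂ}

lemma blowup_add_one (z : ℂ) : blowup φ A (z + 1) = blowup φ A z := by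
  have h : polar (z + 1) = polar z := by simpa using polar_add_int z 1
  rw [blowup, h, add_re, one_re, fourierChar_add_one, ← blowup]

lemma blowup_of_im_nonpos {z : ℂ} (hz : z.im ≤ 0) : blowup φ A z = A (𝐞 z.re) := by
  rw [blowup, polar_of_im_nonpos hz, norm_zero, inv_zero, zero_smul, add_zero]

lemma norm_polar_mul_blowup (h0 : φ 0 = 0) (z : ℂ) :
    ‖polar z‖ * blowup φ A z = φ (polar z) := by
  rcases le_or_gt z.im 0 with hz | hz
  · rw [polar_of_im_nonpos hz, norm_zero, ofReal_zero, zero_mul, h0]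
  have hA : A (polar z) = ‖polar z‖ • A (𝐞 z.re) := by
    rw [← map_smul, real_smul, norm_polar, polar]
  rw [blowup, ← real_smul, smul_add, smul_inv_smul₀ (norm_ne_zero_iff.mpr (polar_ne_zero hz)), hA,
    add_sub_cancel]

lemma continuousOn_inv_norm_smul_sub {E G : Type*} [NormedAddCommGroup E] [NormedSpace ℝ E]
    [NormedAddCommGroup G] [NormedSpace ℝ G] {ψ : E → G} {B : E →L[ℝ] G} {s : Set E}
    (hψ : ContinuousOn ψ s) (h0 : ψ 0 = 0) (hB : HasFDerivAt ψ B 0) :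
    ContinuousOn (fun w => ‖w‖⁻¹ • (ψ w - B w)) s := by
  intro w hw
  rcases eq_or_ne w 0 with rfl | hw0
  · refine ContinuousAt.continuousWithinAt ?_
    rw [ContinuousAt, norm_zero, inv_zero, zero_smul, tendsto_zero_iff_norm_tendsto_zero]
    simpa [h0, norm_smul] using hasFDerivAt_iff_tendsto.mp hB
  · exact (continuous_norm.continuousAt.inv₀ (norm_ne_zero_iff.mpr hw0)).continuousWithinAt.smul
      ((hψ w hw).sub B.continuous.continuousWithinAt)

/-- An area preserving homeomorphism `φ` of the closed disk which fixes the origin, together with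
its derivative `A` at the origin and a lift `f` of its restriction to the boundary circle. -/
structure IsAreaPreservingDiskHomeo (φ : ℂ → ℂ) (A : ℂ →L[ℝ] ℂ) (f : ℝ → ℝ) : Prop where
  continuousOn : ContinuousOn φ Disk
  bijOn : BijOn φ Disk Disk
  volume_image : ∀ B ⊆ Disk, MeasurableSet B →
    MeasureTheory.volume (φ '' B) = MeasureTheory.volume B
  map_zero : φ 0 = 0
  hasFDerivAt : HasFDerivAt φ A 0
  det_eq_one : A.det = 1
  continuous_lift : Continuous f
  lift_add_one : ∀ x, f (x + 1) = f x + 1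
  map_fourierChar : ∀ x, φ (𝐞 x) = 𝐞 (f x)

namespace IsAreaPreservingDiskHomeo

variable {f : ℝ → ℝ} (hφ : IsAreaPreservingDiskHomeo φ A f)
include hφ

lemma injective_derivative : Function.Injective A := by
  have hdet : A.det ≠ 0 := hφ.det_eq_one ▸ one_ne_zero
  exact (A.toContinuousLinearEquivOfDetNeZero hdet).injective

lemma map_derivative_fourierChar_ne_zero (x : ℝ) : A (𝐞 x) ≠ 0 :=
  (map_ne_zero_iff A hφ.injective_derivative).mpr (Circle.coe_ne_zero _)

lemma map_ne_zero {p : ℂ} (hp : p ∈ Disk) (hp0 : p ≠ 0) : φ p ≠ 0 := fun h =>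
  hp0 (hφ.bijOn.injOn hp (mem_closedBall_self zero_le_one) (h.trans hφ.map_zero.symm))

lemma surjective_lift : Function.Surjective f :=
  surjective_of_map_add_one hφ.continuous_lift hφ.lift_add_one

lemma lift_injective : Function.Injective f := by
  intro x y hxy
  have hcircle : 𝐞 x = 𝐞 y := Subtype.ext <|
    hφ.bijOn.injOn (fourierChar_mem_disk x) (fourierChar_mem_disk y) <| by
      rw [hφ.map_fourierChar, hφ.map_fourierChar, hxy]
  obtain ⟨n, rfl⟩ := fourierChar_eq_iff.mp hcircle
  rw [map_add_intCast_of_map_add_one hφ.lift_add_one, add_eq_left] at hxy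
  rw [hxy, add_zero]

lemma norm_map_lt_one {p : ℂ} (hp : ‖p‖ < 1) : ‖φ p‖ < 1 := by
  have hpD : p ∈ Disk := mem_closedBall_zero_iff.mpr hp.le
  refine lt_of_le_of_ne (mem_closedBall_zero_iff.mp (hφ.bijOn.mapsTo hpD)) fun h => ?_
  obtain ⟨x, hx⟩ := hφ.surjective_lift ((φ p).arg / (2 * Real.pi))
  have hangle := hasAngle_arg (φ p)
  rw [HasAngle, h, ofReal_one, one_mul, ← hx, ← hφ.map_fourierChar] at hangle
  have hpx : p = 𝐞 x := hφ.bijOn.injOn hpD (fourierChar_mem_disk x) hangle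
  rw [hpx, Circle.norm_coe] at hp
  exact hp.false

lemma blowup_ofReal_add_I (x : ℝ) : blowup φ A (x + I) = 𝐞 (f x) := by
  simpa [polar_ofReal_add_I, Circle.norm_coe, hφ.map_fourierChar] using
    norm_polar_mul_blowup (A := A) hφ.map_zero (x + I)

lemma blowup_ne_zero {z : ℂ} (hz : z.im ≤ 1) : blowup φ A z ≠ 0 := by
  rcases le_or_gt z.im 0 with h | h
  · rw [blowup_of_im_nonpos h]
    exact hφ.map_derivative_fourierChar_ne_zero _
  · refine right_ne_zero_of_mul (a := (‖polar z‖ : ℂ)) ?_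
    rw [norm_polar_mul_blowup hφ.map_zero]
    exact hφ.map_ne_zero (polar_mem_disk hz) (polar_ne_zero h)

lemma continuous_blowup_clampStrip : Continuous fun z => blowup φ A (clampStrip z) := by
  have hpolar : Continuous fun z => polar (clampStrip z) :=
    continuous_polar.comp continuous_clampStrip
  have hdir : Continuous fun z : ℂ => A (𝐞 (clampStrip z).re) :=
    A.continuous.comp <| continuous_subtype_val.comp <| Real.continuous_fourierChar.comp <|
      continuous_re.comp continuous_clampStrip
  exact hdir.add <| (continuousOn_inv_norm_smul_sub hφ.continuousOn hφ.map_zero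
    hφ.hasFDerivAt).comp_continuous hpolar fun z => polar_mem_disk (clampStrip_im_mem z).2

end IsAreaPreservingDiskHomeo

end Blowup

section BlowupAngle

/-- A lift of the action of `φ` on the angular coordinate of the blow-up, normalized to agree with
the lift `f` on the boundary line `im z = 1`. -/
structure IsBlowupAngle (φ : ℂ → ℂ) (A : ℂ →L[ℝ] ℂ) (f : ℝ → ℝ) (X : ℂ → ℝ) : Prop where
  continuous : Continuous X
  hasAngle : ∀ z, HasAngle (blowup φ A (clampStrip z)) (X z)
  map_add_one : ∀ z, X (z + 1) = X z + 1
  map_clampStrip : ∀ z, X (clampStrip z) = X z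
  map_ofReal_add_I : ∀ x : ℝ, X (x + I) = f x

theorem IsAreaPreservingDiskHomeo.exists_isBlowupAngle {φ : ℂ → ℂ} {A : ℂ →L[ℝ] ℂ} {f : ℝ → ℝ}
    (hφ : IsAreaPreservingDiskHomeo φ A f) : ∃ X, IsBlowupAngle φ A f X := by
  have hne (z : ℂ) : blowup φ A (clampStrip z) ≠ 0 := hφ.blowup_ne_zero (clampStrip_im_mem z).2
  obtain ⟨X₀, hX₀c, hX₀⟩ := exists_continuous_angle hφ.continuous_blowup_clampStrip hne
  have hbdry (x : ℝ) : clampStrip (x + I) = x + I := clampStrip_of_im_mem (by simp)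
  have hX₀f (x : ℝ) : ∃ n : ℤ, X₀ (x + I) = f x + n :=
    (hX₀ _).exists_int (by rw [hbdry, hφ.blowup_ofReal_add_I]; exact hasAngle_fourierChar _) (hne _)
  obtain ⟨m, hm⟩ := hX₀f 0
  have hI (x : ℝ) : X₀ (x + I) - m = f x := by
    have h := eq_of_continuous_of_forall_int (g := fun x : ℝ => X₀ (x + I) - f x)
      ((hX₀c.comp (by fun_prop)).sub hφ.continuous_lift)
      (fun x => (hX₀f x).imp fun n hn => sub_eq_iff_eq_add'.mpr hn) x 0
    linarith
  have hone (z : ℂ) : X₀ (z + 1) = X₀ z + 1 := by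
    have h := angle_sub_eq_angle_sub (x := fun z => X₀ (z + 1)) hne (by fun_prop)
      (fun z => by simpa only [clampStrip_add_one, blowup_add_one] using hX₀ (z + 1)) hX₀c hX₀
      z ((0 : ℝ) + I)
    have h1 := hI (0 + 1)
    rw [hφ.lift_add_one, ← hI 0, ofReal_add, ofReal_one, add_right_comm] at h1
    linarith
  have hclamp (z : ℂ) : X₀ (clampStrip z) = X₀ z := by
    have h := angle_sub_eq_angle_sub (x := fun z => X₀ (clampStrip z)) hne
      (hX₀c.comp continuous_clampStrip)
      (fun z => by simpa only [clampStrip_clampStrip] using hX₀ (clampStrip z)) hX₀c hX₀ z 0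
    rw [clampStrip_of_im_mem (z := 0) (by simp)] at h
    exact sub_left_injective h
  exact ⟨fun z => X₀ z - m, hX₀c.sub continuous_const,
    fun z => by simpa [HasAngle, AddChar.map_sub_eq_div, fourierChar_int] using hX₀ z,
    fun z => by rw [hone, sub_add_eq_add_sub], fun z => by rw [hclamp], hI⟩

end BlowupAngle

section StripExtension

lemma exists_int_of_hasAngle_map {A : ℂ →L[ℝ] ℂ} (hA : Function.Injective A) {x y t : ℝ}
    (hx : HasAngle (A (𝐞 x)) t) (hy : HasAngle (A (𝐞 y)) t) : ∃ n : ℤ, x = y + n := by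
  have hpos (s : ℝ) : 0 < ‖A (𝐞 s)‖ :=
    norm_pos_iff.mpr ((map_ne_zero_iff A hA).mpr (Circle.coe_ne_zero _))
  have hsmul : ‖A (𝐞 y)‖ • (𝐞 x : ℂ) = ‖A (𝐞 x)‖ • (𝐞 y : ℂ) := hA <| by
    rw [map_smul, map_smul, real_smul, real_smul]
    unfold HasAngle at hx hy
    linear_combination (‖A (𝐞 y)‖ : ℂ) * hx - (‖A (𝐞 x)‖ : ℂ) * hy
  refine HasAngle.exists_int (v := ‖A (𝐞 y)‖ • (𝐞 x : ℂ)) ?_ ?_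
    (smul_ne_zero (hpos y).ne' (Circle.coe_ne_zero _))
  · exact hasAngle_of_eq_real_mul (norm_nonneg _) real_smul
  · exact hsmul ▸ hasAngle_of_eq_real_mul (norm_nonneg _) real_smul

lemma isClosedMap_of_norm_sub_self_le {E : Type*} [NormedAddCommGroup E] [ProperSpace E]
    {F : E → E} (hc : Continuous F) {C : ℝ} (hC : ∀ z, ‖F z - z‖ ≤ C) : IsClosedMap F := by
  refine (isProperMap_iff_tendsto_cocompact.mpr ⟨hc, ?_⟩).isClosedMap
  rw [← Metric.cobounded_eq_cocompact, ← tendsto_norm_atTop_iff_cobounded]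
  refine tendsto_atTop_mono (fun z => ?_)
    (tendsto_atTop_add_const_right _ (-C) tendsto_norm_cobounded_atTop)
  have h := norm_sub_norm_le z (z - F z)
  rw [norm_sub_rev z (F z), sub_sub_cancel] at h
  linarith [hC z]

/-- The map of the plane which is conjugate to `φ` by `polar` on the closed strip, with angular
coordinate `X`, and is extended by `F z = F (clampStrip z) + (z - clampStrip z)`. -/
noncomputable def stripExtension (φ : ℂ → ℂ) (X : ℂ → ℝ) (z : ℂ) : ℂ :=
  ⟨X z, ‖φ (polar (clampStrip z))‖ ^ 2⟩ + (z - clampStrip z)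

variable {φ : ℂ → ℂ} {A : ℂ →L[ℝ] ℂ} {f : ℝ → ℝ} {X : ℂ → ℝ}

lemma stripExtension_re (z : ℂ) : (stripExtension φ X z).re = X z := by
  simp [stripExtension, clampStrip]

lemma stripExtension_im_of_im_mem {z : ℂ} (hz : z.im ∈ Icc (0 : ℝ) 1) :
    (stripExtension φ X z).im = ‖φ (polar z)‖ ^ 2 := by
  simp [stripExtension, clampStrip_of_im_mem hz]

lemma stripExtension_im_add_one (z : ℂ) :
    (stripExtension φ X (z + 1)).im = (stripExtension φ X z).im := by
  have h := polar_add_int (clampStrip z) 1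
  rw [Int.cast_one] at h
  simp [stripExtension, clampStrip_add_one, h]

namespace IsAreaPreservingDiskHomeo

variable (hφ : IsAreaPreservingDiskHomeo φ A f)
include hφ

lemma stripExtension_im_of_notMem_strip {z : ℂ} (hz : z ∉ strip) :
    (stripExtension φ X z).im = z.im := by
  have hbdry : ‖φ (polar (clampStrip z))‖ ^ 2 = (clampStrip z).im := by
    rcases le_or_gt z.im 0 with h0 | h0
    · rw [clampStrip_of_im_nonpos h0, polar_of_im_nonpos (by simp), hφ.map_zero]
      simp
    · rw [clampStrip_of_one_le_im (not_lt.mp fun h1 => hz ⟨h0, h1⟩), polar_ofReal_add_I,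
        hφ.map_fourierChar, Circle.norm_coe]
      simp
  simp [stripExtension, hbdry]

lemma mapsTo_stripExtension : MapsTo (stripExtension φ X) strip strip := by
  intro z hz
  have hpos : 0 < ‖φ (polar z)‖ :=
    norm_pos_iff.mpr (hφ.map_ne_zero (polar_mem_disk hz.2.le) (polar_ne_zero hz.1))
  have hlt : ‖φ (polar z)‖ < 1 := hφ.norm_map_lt_one <| by
    rw [norm_polar]
    exact (Real.sqrt_lt' one_pos).mpr (by simpa using hz.2)
  rw [mem_strip, stripExtension_im_of_im_mem (Ioo_subset_Icc_self hz)]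
  exact ⟨by positivity, pow_lt_one₀ hpos.le hlt two_ne_zero⟩

end IsAreaPreservingDiskHomeo

namespace IsBlowupAngle

variable (hX : IsBlowupAngle φ A f X)
include hX

lemma stripExtension_add_one (z : ℂ) :
    stripExtension φ X (z + 1) = stripExtension φ X z + 1 :=
  Complex.ext (by simp [stripExtension_re, hX.map_add_one]) (by simp [stripExtension_im_add_one])

lemma stripExtension_sub_self (z : ℂ) :
    stripExtension φ X z - z = stripExtension φ X (clampStrip z) - clampStrip z := by
  simp only [stripExtension, clampStrip_clampStrip, hX.map_clampStrip]
  ring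

lemma hasAngle_map_polar (h0 : φ 0 = 0) {z : ℂ} (hz : z.im ∈ Icc (0 : ℝ) 1) :
    HasAngle (φ (polar z)) (X z) := by
  have hangle := hX.hasAngle z
  rw [clampStrip_of_im_mem hz] at hangle
  have hnorm : HasAngle (‖polar z‖ : ℂ) 0 :=
    hasAngle_of_eq_real_mul (norm_nonneg (polar z)) (by simp)
  rw [← norm_polar_mul_blowup (A := A) h0, ← zero_add (X z)]
  exact hnorm.mul hangle

lemma polar_stripExtension (h0 : φ 0 = 0) {z : ℂ} (hz : z.im ∈ Icc (0 : ℝ) 1) :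
    polar (stripExtension φ X z) = φ (polar z) := by
  rw [← polar_eq_of_hasAngle (hX.hasAngle_map_polar h0 hz)]
  exact congrArg polar (Complex.ext (stripExtension_re z) (stripExtension_im_of_im_mem hz))

variable (hφ : IsAreaPreservingDiskHomeo φ A f)
include hφ

lemma continuous_stripExtension : Continuous (stripExtension φ X) := by
  have hpolar : Continuous fun z => φ (polar (clampStrip z)) :=
    hφ.continuousOn.comp_continuous (continuous_polar.comp continuous_clampStrip)
      fun z => polar_mem_disk (clampStrip_im_mem z).2
  exact (equivRealProdCLM.symm.continuous.comp (hX.continuous.prodMk (hpolar.norm.pow 2))).add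
    (continuous_id.sub continuous_clampStrip)

lemma exists_eq_add_int_of_stripExtension_eq {z w : ℂ} (hz : z.im ∈ Icc (0 : ℝ) 1)
    (hw : w.im ∈ Icc (0 : ℝ) 1) (h : stripExtension φ X z = stripExtension φ X w) :
    ∃ n : ℤ, z = w + n := by
  have hpolar : polar z = polar w :=
    hφ.bijOn.injOn (polar_mem_disk hz.2) (polar_mem_disk hw.2) <| by
      rw [← hX.polar_stripExtension hφ.map_zero hz, h, hX.polar_stripExtension hφ.map_zero hw]
  rcases hz.1.lt_or_eq with hz0 | hz0
  · exact exists_eq_add_int_of_polar_eq hz0 hpolar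
  have hw0 : w.im = 0 := Eq.symm <| hw.1.eq_of_not_lt fun hw0 =>
    polar_ne_zero hw0 (hpolar ▸ polar_of_im_nonpos hz0.ge)
  have hX_eq : X z = X w := by simpa only [stripExtension_re] using congrArg re h
  have hangle {u : ℂ} (hu : u.im = 0) : HasAngle (A (𝐞 u.re)) (X u) := by
    have h := hX.hasAngle u
    rwa [clampStrip_of_im_mem (by simp [hu]), blowup_of_im_nonpos hu.le] at h
  obtain ⟨n, hn⟩ := exists_int_of_hasAngle_map hφ.injective_derivative
    (hX_eq ▸ hangle hz0.symm) (hangle hw0)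
  exact ⟨n, Complex.ext (by simpa using hn) (by simp [hw0, hz0.symm])⟩

lemma stripExtension_injective : Function.Injective (stripExtension φ X) := by
  have hclosed {z w : ℂ} (hz : z.im ∈ Icc (0 : ℝ) 1) (hw : w.im ∈ Icc (0 : ℝ) 1)
      (h : stripExtension φ X z = stripExtension φ X w) : z = w := by
    obtain ⟨n, rfl⟩ := hX.exists_eq_add_int_of_stripExtension_eq hφ hz hw h
    rw [map_add_intCast_of_map_add_one hX.stripExtension_add_one, add_eq_left] at h
    rw [h, add_zero]
  intro z w h
  have hclamp_map (u : ℂ) : clampStrip (stripExtension φ X u) = stripExtension φ X (clampStrip u) :=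
    clampStrip_map_of_map_sub_self hX.stripExtension_sub_self
      (fun _ => hφ.stripExtension_im_of_notMem_strip) hφ.mapsTo_stripExtension u
  have hclamp : clampStrip z = clampStrip w :=
    hclosed (clampStrip_im_mem z) (clampStrip_im_mem w) (by rw [← hclamp_map, h, hclamp_map])
  have hz := hX.stripExtension_sub_self z
  have hw := hX.stripExtension_sub_self w
  rw [hclamp, ← hw, h] at hz
  exact sub_right_injective hz

lemma stripExtension_surjective : Function.Surjective (stripExtension φ X) := by
  intro w
  by_cases hw : w ∈ strip
  · obtain ⟨q, hq, hqw⟩ := hφ.bijOn.surjOn (polar_mem_disk hw.2.le)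
    obtain ⟨z, hz, rfl⟩ := exists_polar_eq hq
    rw [← hX.polar_stripExtension hφ.map_zero hz] at hqw
    obtain ⟨n, hn⟩ := exists_eq_add_int_of_polar_eq hw.1 hqw.symm
    exact ⟨z + n, by rw [hn, map_add_intCast_of_map_add_one hX.stripExtension_add_one]⟩
  · obtain ⟨x, hx⟩ := surjective_of_map_add_one (f := fun x : ℝ => X (x + w.im * I))
      (hX.continuous.comp (by fun_prop))
      (fun x => by rw [ofReal_add, ofReal_one, add_right_comm, hX.map_add_one]) w.re
    refine ⟨x + w.im * I, Complex.ext ((stripExtension_re _).trans hx) ?_⟩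
    rw [hφ.stripExtension_im_of_notMem_strip fun h => hw (by simpa [strip] using h)]
    simp

lemma exists_homeomorph_eq_stripExtension : ∃ F : ℂ ≃ₜ ℂ, ⇑F = stripExtension φ X := by
  have hc := hX.continuous_stripExtension hφ
  have hcompact : IsCompact (range fun z => stripExtension φ X z - z) :=
    isCompact_range_of_periodic_of_clampStrip (hc.sub continuous_id)
      (fun z => by simp [hX.stripExtension_add_one]) fun z => (hX.stripExtension_sub_self z).symm
  obtain ⟨C, hC⟩ := hcompact.isBounded.exists_norm_le
  exact ⟨Equiv.toHomeomorphOfContinuousClosed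
    (Equiv.ofBijective _ ⟨hX.stripExtension_injective hφ, hX.stripExtension_surjective hφ⟩) hc
    (isClosedMap_of_norm_sub_self_le hc fun z => hC _ (mem_range_self z)), rfl⟩

end IsBlowupAngle

end StripExtension

section Area

open MeasureTheory

lemma addHaar_image_eq_mul_of_abs_det_eq {E : Type*} [NormedAddCommGroup E] [NormedSpace ℝ E]
    [FiniteDimensional ℝ E] [MeasurableSpace E] [BorelSpace E] (μ : Measure E) [μ.IsAddHaarMeasure]
    {f : E → E} {f' : E → E →L[ℝ] E} {s : Set E} {c : ℝ} (hs : MeasurableSet s)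
    (hf' : ∀ x ∈ s, HasFDerivWithinAt f (f' x) s x) (hf : InjOn f s)
    (hdet : ∀ x ∈ s, |(f' x).det| = c) : μ (f '' s) = ENNReal.ofReal c * μ s := by
  rw [← lintegral_abs_det_fderiv_eq_addHaar_image μ hs hf' hf,
    setLIntegral_congr_fun hs fun x hx => by rw [hdet x hx], setLIntegral_const]

lemma hasFDerivAt_polar {z : ℂ} (hz : 0 < z.im) :
    HasFDerivAt polar ((√z.im : ℂ) • reCLM.smulRight (2 * Real.pi * I * 𝐞 z.re) +
      ((1 / (2 * √z.im)) • imCLM).smulRight (𝐞 z.re : ℂ)) z := by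
  have hsqrt := (Real.hasDerivAt_sqrt hz.ne').comp_hasFDerivAt z imCLM.hasFDerivAt
  have hchar := (Real.hasDerivAt_fourierChar z.re).hasFDerivAt.comp z reCLM.hasFDerivAt
  refine (hsqrt.smul hchar).congr_fderiv (ContinuousLinearMap.ext fun v => ?_)
  simp

lemma abs_det_fderiv_polar {z : ℂ} (hz : 0 < z.im) : |(fderiv ℝ polar z).det| = Real.pi := by
  have hnorm : (𝐞 z.re : ℂ).re ^ 2 + (𝐞 z.re : ℂ).im ^ 2 = 1 := by
    rw [sq, sq, ← normSq_apply, Circle.normSq_coe]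
  have hsqrt := (Real.sqrt_pos.mpr hz).ne'
  have hdet : (fderiv ℝ polar z).det = -Real.pi := by
    rw [(hasFDerivAt_polar hz).fderiv, ContinuousLinearMap.det,
      ← LinearMap.det_toMatrix basisOneI, Matrix.det_fin_two]
    simp [LinearMap.toMatrix_apply]
    field_simp
    linear_combination (-1 : ℝ) * hnorm
  rw [hdet, abs_neg, abs_of_pos Real.pi_pos]

lemma volume_image_polar {B : Set ℂ} (hB : MeasurableSet B) (hBs : B ⊆ strip)
    (hinj : InjOn polar B) : volume (polar '' B) = ENNReal.ofReal Real.pi * volume B :=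
  addHaar_image_eq_mul_of_abs_det_eq volume hB
    (fun _ hz => (hasFDerivAt_polar (hBs hz).1).differentiableAt.hasFDerivAt.hasFDerivWithinAt)
    hinj fun _ hz => abs_det_fderiv_polar (hBs hz).1

lemma volume_image_eq_of_injOn_polar {φ : ℂ → ℂ} {F : ℂ ≃ₜ ℂ}
    (hvol : ∀ B ⊆ Disk, MeasurableSet B → volume (φ '' B) = volume B) (hinj : InjOn φ Disk)
    (hF : MapsTo F strip strip) (hconj : ∀ z ∈ strip, polar (F z) = φ (polar z)) {B : Set ℂ}
    (hB : MeasurableSet B) (hBs : B ⊆ strip) (hBinj : InjOn polar B) :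
    volume (F '' B) = volume B := by
  have hdisk : MapsTo polar B Disk := fun z hz => polar_mem_disk (hBs hz).2.le
  have hFinj : InjOn polar (F '' B) := by
    rintro _ ⟨z, hz, rfl⟩ _ ⟨w, hw, rfl⟩ h
    rw [hconj z (hBs hz), hconj w (hBs hw)] at h
    rw [hBinj hz hw (hinj (hdisk hz) (hdisk hw) h)]
  have hFB : MeasurableSet (F '' B) := F.toMeasurableEquiv.measurableSet_image.mpr hB
  have himage : polar '' (F '' B) = φ '' (polar '' B) := by
    rw [image_image, image_image]
    exact image_congr fun z hz => hconj z (hBs hz)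
  refine (ENNReal.mul_right_inj (ENNReal.ofReal_pos.mpr Real.pi_pos).ne'
    ENNReal.ofReal_ne_top).mp ?_
  rw [← volume_image_polar hFB ((hF.mono_left hBs).image_subset) hFinj, himage,
    hvol _ hdisk.image_subset (hB.image_of_continuousOn_injOn continuous_polar.continuousOn hBinj),
    volume_image_polar hB hBs hBinj]

lemma volume_image_eq_of_polar_conj {φ : ℂ → ℂ} {F : ℂ ≃ₜ ℂ}
    (hvol : ∀ B ⊆ Disk, MeasurableSet B → volume (φ '' B) = volume B) (hinj : InjOn φ Disk)
    (hF : MapsTo F strip strip) (hconj : ∀ z ∈ strip, polar (F z) = φ (polar z)) {B : Set ℂ}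
    (hB : MeasurableSet B) (hBs : B ⊆ strip) : volume (F '' B) = volume B := by
  let C (n : ℤ) : Set ℂ := re ⁻¹' Ico (n : ℝ) (n + 1)
  have hC (n : ℤ) : MeasurableSet (C n) := measurable_re measurableSet_Ico
  have hdisj : Pairwise (Function.onFun Disjoint fun n => B ∩ C n) := fun m n hmn =>
    ((pairwise_disjoint_Ico_intCast ℝ hmn).preimage re).mono inter_subset_right inter_subset_right
  have hcover : B = ⋃ n, B ∩ C n := by
    rw [← inter_iUnion, ← preimage_iUnion, iUnion_Ico_intCast, preimage_univ, inter_univ]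
  have hpiece (n : ℤ) : volume (F '' (B ∩ C n)) = volume (B ∩ C n) :=
    volume_image_eq_of_injOn_polar hvol hinj hF hconj (hB.inter (hC n))
      (inter_subset_left.trans hBs) ((injOn_polar n).mono (inter_subset_inter_left _ hBs))
  rw [hcover, image_iUnion, measure_iUnion hdisj fun n => hB.inter (hC n),
    measure_iUnion (fun m n hmn => (disjoint_image_iff F.injective).mpr (hdisj hmn))
      fun n => F.toMeasurableEquiv.measurableSet_image.mpr (hB.inter (hC n))]
  exact tsum_congr hpiece

lemma measurePreserving_restrict_of_volume_image_eq {F : ℂ ≃ₜ ℂ} {S : Set ℂ}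
    (hS : MeasurableSet S) (hF : ∀ z, F z ∈ S ↔ z ∈ S)
    (hvol : ∀ B ⊆ S, MeasurableSet B → volume (F '' B) = volume B) :
    MeasurePreserving F (volume.restrict S) (volume.restrict S) := by
  refine ⟨F.continuous.measurable, Measure.ext fun B hB => ?_⟩
  have hpre : MeasurableSet (F ⁻¹' B) := F.continuous.measurable hB
  have himage : F '' (F ⁻¹' B ∩ S) = B ∩ S := by
    have hFS : F ⁻¹' S = S := ext hF
    nth_rewrite 1 [← hFS]
    rw [← preimage_inter, image_preimage_eq _ F.surjective]
  rw [Measure.map_apply F.continuous.measurable hB, Measure.restrict_apply hpre,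
    Measure.restrict_apply hB, ← hvol _ inter_subset_right (hpre.inter hS), himage]

end Area

section Dynamics

open CircleDeg1Lift

variable {φ : ℂ → ℂ} {A : ℂ →L[ℝ] ℂ} {f : ℝ → ℝ} {X : ℂ → ℝ} {F : ℂ ≃ₜ ℂ}

lemma IsBlowupAngle.isStripMap (hX : IsBlowupAngle φ A f X) (hφ : IsAreaPreservingDiskHomeo φ A f)
    (hF : ⇑F = stripExtension φ X) : IsStripMap F := by
  have him (z : ℂ) (hz : z ∉ strip) : (F z).im = z.im :=
    hF ▸ hφ.stripExtension_im_of_notMem_strip hz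
  have hmaps : MapsTo F strip strip := hF ▸ hφ.mapsTo_stripExtension
  refine ⟨hF ▸ hX.stripExtension_add_one, hF ▸ hX.stripExtension_sub_self, him, hmaps,
    measurePreserving_restrict_of_volume_image_eq isOpen_strip.measurableSet
      (fun z => map_mem_strip_iff him hmaps) fun B hBs hB =>
      volume_image_eq_of_polar_conj hφ.volume_image hφ.bijOn.injOn hmaps (fun z hz => ?_) hB hBs⟩
  rw [hF, hX.polar_stripExtension hφ.map_zero (Ioo_subset_Icc_self hz)]

lemma polar_iterate {G : ℂ → ℂ} (hG : MapsTo G strip strip)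
    (hconj : ∀ z ∈ strip, polar (G z) = φ (polar z)) {z : ℂ} (hz : z ∈ strip) (n : ℕ) :
    polar (G^[n] z) = φ^[n] (polar z) := by
  induction n with
  | zero => rfl
  | succ n ih =>
    rw [Function.iterate_succ_apply', Function.iterate_succ_apply', hconj _ (hG.iterate n hz), ih]

lemma translationNumber_eq_of_tendsto {g : CircleDeg1Lift} {x₀ α : ℝ}
    (h : Tendsto (fun n : ℕ => (g^[n] x₀ - x₀) / n) atTop (nhds α)) : translationNumber g = α :=
  tendsto_nhds_unique (by simpa only [coe_pow] using g.tendsto_translationNumber x₀) h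

namespace IsAreaPreservingDiskHomeo

variable (hφ : IsAreaPreservingDiskHomeo φ A f)
include hφ

theorem exists_stripMap : ∃ F : stripGroup,
    (∀ z : ℂ, z.im ∈ Icc (0 : ℝ) 1 → polar (F.1 z) = φ (polar z)) ∧
    (∀ x, HasAngle (A (𝐞 x)) (lowerLift F x)) ∧ ∀ x, upperLift F x = f x := by
  obtain ⟨X, hX⟩ := hφ.exists_isBlowupAngle
  obtain ⟨F, hF⟩ := hX.exists_homeomorph_eq_stripExtension hφ
  let F' : stripGroup := ⟨F, hX.isStripMap hφ hF⟩
  refine ⟨F', fun z hz => ?_, fun x => ?_, fun x => ?_⟩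
  · change polar (F z) = _
    rw [hF, hX.polar_stripExtension hφ.map_zero hz]
  · have h := hX.hasAngle x
    rw [clampStrip_of_im_mem (by simp), blowup_of_im_nonpos (by simp), ofReal_re] at h
    change HasAngle _ (F (x + (0 : ℝ) * I)).re
    rwa [ofReal_zero, zero_mul, add_zero, hF, stripExtension_re]
  · change (F (x + (1 : ℝ) * I)).re = _
    rw [ofReal_one, one_mul, hF, stripExtension_re, hX.map_ofReal_add_I]

variable (hper : ∀ p ∈ Disk, p ≠ 0 → ∀ n : ℕ, 1 ≤ n → φ^[n] p ≠ p)
include hper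

lemma mul_ne_intCast {x₀ α : ℝ}
    (hα : Tendsto (fun n : ℕ => (f^[n] x₀ - x₀) / n) atTop (nhds α)) {q : ℕ} (hq : 1 ≤ q) (p : ℤ) :
    q * α ≠ p := by
  intro hαp
  let L := circleDeg1LiftOfInjective f hφ.continuous_lift hφ.lift_injective hφ.lift_add_one
  have hL : translationNumber (L ^ q) = p := by
    rw [translationNumber_pow, translationNumber_eq_of_tendsto (g := L) hα, hαp]
  have hLq : ⇑(L ^ q) = f^[q] := coe_pow L q
  obtain ⟨x, hx⟩ := (translationNumber_eq_int_iff _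
    (hLq ▸ hφ.continuous_lift.iterate q)).mp hL
  have hsemi : Function.Semiconj (fun x => (𝐞 x : ℂ)) f φ := fun x => (hφ.map_fourierChar x).symm
  refine hper (𝐞 x) (fourierChar_mem_disk x) (Circle.coe_ne_zero _) q hq ?_
  rw [← hsemi.iterate_right q x, ← hLq, hx]
  exact congrArg Subtype.val (fourierChar_add_int x p)

theorem exists_lift_derivative {x₀ α : ℝ}
    (hα : Tendsto (fun n : ℕ => (f^[n] x₀ - x₀) / n) atTop (nhds α)) :
    ∃ g : CircleDeg1Lift, Continuous g ∧ (∀ x, HasAngle (A (𝐞 x)) (g x)) ∧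
      translationNumber g = α := by
  obtain ⟨F, hconj, hlow, hup⟩ := hφ.exists_stripMap
  have hpow (q : ℕ) : ⇑(F.1 ^ q) = F.1^[q] := hom_coe_pow _ rfl (fun _ _ => rfl) F.1 q
  refine ⟨lowerLift F, continuous_re.comp (F.1.continuous.comp (by fun_prop)), hlow, ?_⟩
  rw [translationNumber_lowerLift_eq_upperLift F fun z hz q hq p hzp => ?_]
  · exact translationNumber_eq_of_tendsto (funext hup ▸ hα)
  · refine hper (polar z) (polar_mem_disk hz.2.le) (polar_ne_zero hz.1) q hq ?_
    rw [← polar_iterate F.2.mapsTo_strip (fun z hz => hconj z (Ioo_subset_Icc_self hz)) hz, ← hpow,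
      hzp, polar_add_int]

end IsAreaPreservingDiskHomeo

end Dynamics

section LinearMaps

open CircleDeg1Lift ComplexConjugate

lemma charpoly_eq_of_finrank_eq_two {K V : Type*} [Field K] [AddCommGroup V] [Module K V]
    [FiniteDimensional K V] (hV : Module.finrank K V = 2) (T : V →ₗ[K] V) :
    T.charpoly = X ^ 2 - C (LinearMap.trace K V T) * X + C T.det := by
  let b := Module.finBasisOfFinrankEq K V hV
  rw [← LinearMap.charpoly_toMatrix T b, Matrix.charpoly_fin_two, LinearMap.det_toMatrix,
    LinearMap.trace_eq_matrix_trace K b]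

lemma setOf_isRoot_charpoly_eq_pair {K V : Type*} [Field K] [AddCommGroup V] [Module K V]
    [FiniteDimensional K V] (hV : Module.finrank K V = 2) {L ι : Type*} [Field L] [Algebra K L]
    [Fintype ι] [DecidableEq ι] (b : Module.Basis ι K V) {T : V →ₗ[K] V} {μ ν : L}
    (htr : algebraMap K L (LinearMap.trace K V T) = μ + ν) (hdet : algebraMap K L T.det = μ * ν) :
    {x : L | ((LinearMap.toMatrix b b T).map (algebraMap K L)).charpoly.IsRoot x} = {μ, ν} := by
  ext x
  rw [mem_ofPred_eq, Matrix.charpoly_map, LinearMap.charpoly_toMatrix,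
    charpoly_eq_of_finrank_eq_two hV]
  simp only [Polynomial.map_add, Polynomial.map_sub, Polynomial.map_mul, Polynomial.map_pow, map_X,
    map_C, IsRoot.def, eval_add, eval_sub, eval_mul, eval_pow, eval_X, eval_C, htr, hdet]
  rw [show x ^ 2 - (μ + ν) * x + μ * ν = (x - μ) * (x - ν) by ring, mul_eq_zero, sub_eq_zero,
    sub_eq_zero, mem_insert_iff, mem_singleton_iff]

lemma exists_hasEigenvalue_of_four_le_trace_sq {V : Type*} [AddCommGroup V] [Module ℝ V]
    [FiniteDimensional ℝ V] (hV : Module.finrank ℝ V = 2) {T : V →ₗ[ℝ] V} (hdet : T.det = 1)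
    (htr : 4 ≤ LinearMap.trace ℝ V T ^ 2) : ∃ μ, Module.End.HasEigenvalue T μ := by
  obtain ⟨μ, hμ⟩ := exists_quadratic_eq_zero (b := -LinearMap.trace ℝ V T) (c := 1)
    (one_ne_zero (α := ℝ)) ⟨_, (Real.mul_self_sqrt (by rw [discrim]; linarith)).symm⟩
  refine ⟨μ, (Module.End.hasEigenvalue_iff_isRoot_charpoly _ _).mpr ?_⟩
  rw [charpoly_eq_of_finrank_eq_two hV, hdet]
  simp only [IsRoot.def, eval_add, eval_sub, eval_pow, eval_X, eval_mul, eval_C]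
  linear_combination hμ

lemma exists_eq_mul_add_mul_conj (T : ℂ →ₗ[ℝ] ℂ) :
    ∃ a b : ℂ, (∀ v, T v = a * v + b * conj v) ∧ LinearMap.trace ℝ ℂ T = 2 * a.re ∧
      T.det = normSq a - normSq b := by
  have hT (v : ℂ) : T v = v.re * T 1 + v.im * T I := by
    conv_lhs => rw [← re_add_im v, ← real_smul, ← mul_one (v.re : ℂ), ← real_smul]
    rw [map_add, map_smul, map_smul, real_smul, real_smul]
  refine ⟨(T 1 - I * T I) / 2, (T 1 + I * T I) / 2, fun v => ?_, ?_, ?_⟩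
  · rw [hT, re_eq_add_conj, im_eq_sub_conj]
    field_simp
    linear_combination (v - conj v) * T I * I_sq
  · rw [LinearMap.trace_eq_matrix_trace ℝ basisOneI, Matrix.trace_fin_two]
    simp [LinearMap.toMatrix_apply]
    ring
  · rw [← LinearMap.det_toMatrix basisOneI, Matrix.det_fin_two]
    simp [LinearMap.toMatrix_apply, normSq_apply]
    ring

-- Looking for `c` with `a + c * conj b = u` and `b + c * conj a = u * c`, one finds that `u` is an
-- eigenvalue of `v ↦ a * v + b * conj v`; the choice of the sign of `Im u` makes `‖c‖ < 1`.
lemma exists_conj_rotation {a b : ℂ} (hdet : normSq a - normSq b = 1) (ha : a.re ^ 2 < 1) :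
    ∃ u c : ℂ, ‖u‖ = 1 ∧ u.re = a.re ∧ ‖c‖ < 1 ∧
      ∀ v, (a * v + b * conj v) + c * conj (a * v + b * conj v) = u * (v + c * conj v) := by
  rw [normSq_apply a] at hdet
  obtain ⟨s, hs, hpos⟩ : ∃ s : ℝ, s ^ 2 = 1 - a.re ^ 2 ∧ 0 < a.im * s := by
    have hsqrt := Real.sqrt_pos.mpr (sub_pos.mpr ha)
    have him : a.im ≠ 0 := fun h => by nlinarith [normSq_nonneg b]
    rcases him.lt_or_gt with him | him
    · exact ⟨-√(1 - a.re ^ 2), by rw [neg_sq, Real.sq_sqrt (sub_pos.mpr ha).le], by nlinarith⟩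
    · exact ⟨√(1 - a.re ^ 2), Real.sq_sqrt (sub_pos.mpr ha).le, by positivity⟩
  have hne : a.im + s ≠ 0 := fun h => by nlinarith [sq_nonneg s]
  have hneC : ((a.im + s : ℝ) : ℂ) ≠ 0 := ofReal_ne_zero.mpr hne
  obtain ⟨c, rfl⟩ : ∃ c : ℂ, b = I * c * (a.im + s : ℝ) :=
    ⟨-I * (b / (a.im + s : ℝ)), by
      field_simp
      linear_combination b * I_sq⟩
  rw [normSq_mul, normSq_mul, normSq_I, normSq_ofReal] at hdet
  have hc : normSq c * (a.im + s) = a.im - s :=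
    mul_right_cancel₀ hne (by linear_combination -hdet + hs)
  have hcc : c * conj c * (a.im + s) = a.im - s := by rw [mul_conj]; exact_mod_cast hc
  have hconj : conj a = a.re - a.im * I := by apply Complex.ext <;> simp
  refine ⟨a.re + s * I, c, ?_, by simp, ?_, fun v => ?_⟩
  · rw [norm_add_mul_I, hs, add_sub_cancel, Real.sqrt_one]
  · rw [← sq_lt_one_iff₀ (norm_nonneg c), ← normSq_eq_norm_sq]
    nlinarith
  · simp only [map_add, map_mul, conj_conj, conj_I, conj_ofReal]
    push_cast
    linear_combination -v * re_add_im a - v * I * hcc + conj v * c * hconj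

lemma HasAngle.conj_eq {v : ℂ} {x : ℝ} (h : HasAngle v x) : conj v = v * 𝐞 (-(2 * x)) := by
  rw [h, map_mul, conj_ofReal, ← Circle.coe_inv_eq_conj, ← AddChar.map_neg_eq_inv, mul_assoc,
    ← Circle.coe_mul, ← AddChar.map_add_eq_mul]
  congr 3
  ring

/-- The angle of `v + c * conj v` when `x` is an angle of `v`, chosen continuously in `x` provided
that `‖c‖ < 1`. -/
noncomputable def shearedAngle (c : ℂ) (x : ℝ) : ℝ :=
  x + (1 + c * 𝐞 (-(2 * x))).arg / (2 * Real.pi)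

lemma HasAngle.add_mul_conj {v : ℂ} {x : ℝ} (h : HasAngle v x) (c : ℂ) :
    HasAngle (v + c * conj v) (shearedAngle c x) := by
  have hv : v + c * conj v = v * (1 + c * 𝐞 (-(2 * x))) := by rw [h.conj_eq]; ring
  exact hv ▸ h.mul (hasAngle_arg _)

lemma continuous_shearedAngle {c : ℂ} (hc : ‖c‖ < 1) : Continuous (shearedAngle c) := by
  refine continuous_id.add ((continuous_arg_comp ?_ fun x => ?_).div_const _)
  · have := Real.continuous_fourierChar
    fun_prop
  · exact mem_slitPlane_of_norm_lt_one (by rwa [norm_mul, Circle.norm_coe, mul_one])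

lemma abs_shearedAngle_sub_le (c : ℂ) (x : ℝ) : |shearedAngle c x - x| ≤ 1 / 2 := by
  rw [shearedAngle, add_sub_cancel_left, abs_div, abs_of_pos Real.two_pi_pos,
    div_le_iff₀ Real.two_pi_pos]
  linarith [abs_arg_le_pi (1 + c * 𝐞 (-(2 * x)))]

lemma add_mul_conj_ne_zero {c v : ℂ} (hc : ‖c‖ < 1) (hv : v ≠ 0) : v + c * conj v ≠ 0 := by
  intro h
  have hnorm : ‖v‖ = ‖c‖ * ‖v‖ := by
    rw [← norm_conj v, ← norm_mul, ← norm_neg (c * _), ← eq_neg_of_add_eq_zero_left h, norm_conj]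
  nlinarith [norm_pos_iff.mpr hv]

lemma translationNumber_eq_of_semiconj_add {g : CircleDeg1Lift} {k : ℝ → ℝ} {ω C : ℝ}
    (hk : ∀ x, |k x - x| ≤ C) (hkg : ∀ x, k (g x) = k x + ω) : translationNumber g = ω := by
  have hiter (n : ℕ) : k ((g ^ n) 0) = k 0 + n * ω := by
    rw [coe_pow]
    induction n with
    | zero => simp
    | succ n ih => rw [Function.iterate_succ_apply', hkg, ih]; push_cast; ring
  rw [← translationNumber_translate ω]
  refine translationNumber_eq_of_dist_bounded (C + C) fun n => ?_
  have htrans : ((translate (Multiplicative.ofAdd ω) : CircleDeg1Lift) ^ n) 0 = n * ω := by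
    rw [coe_pow]
    induction n with
    | zero => simp
    | succ n ih =>
      rw [Function.iterate_succ_apply', ih]
      simp [translate_apply]
      ring
  have h₀ := abs_le.mp (hk 0)
  have hₙ := abs_le.mp (hk ((g ^ n) 0))
  rw [hiter] at hₙ
  rw [htrans, Real.dist_eq, abs_le]
  constructor <;> linarith

section LiftedAngleMap

variable {T : ℂ →ₗ[ℝ] ℂ} {g : CircleDeg1Lift} (hg : ∀ x, HasAngle (T (𝐞 x)) (g x))
include hg

lemma HasAngle.map {v : ℂ} {x : ℝ} (h : HasAngle v x) : HasAngle (T v) (g x) := by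
  refine hasAngle_of_eq_real_mul (r := ‖v‖ * ‖T (𝐞 x)‖) (by positivity) ?_
  conv_lhs => rw [h, ← real_smul, map_smul, hg x, real_smul]
  push_cast
  ring

lemma exists_two_mul_translationNumber_eq_int_of_hasEigenvalue
    (hT : Function.Injective T) {μ : ℝ} (hμ : Module.End.HasEigenvalue T μ) :
    ∃ n : ℤ, 2 * translationNumber g = n := by
  obtain ⟨v, hv⟩ := hμ.exists_hasEigenvector
  have hTv : T v = μ • v := hv.apply_eq_smul
  have hTTv : T (T v) = (μ ^ 2 : ℝ) * v := by
    rw [hTv, map_smul, hTv, smul_smul, ← sq, real_smul]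
  have hx := hasAngle_arg v
  set x := v.arg / (2 * Real.pi)
  have hx' : HasAngle (T (T v)) x := by
    rw [hTTv]
    refine hasAngle_of_eq_real_mul (r := μ ^ 2 * ‖v‖) (by positivity) ?_
    nth_rewrite 1 [hx]
    push_cast
    ring
  obtain ⟨n, hn⟩ := HasAngle.exists_int ((hx.map hg).map hg) hx'
    ((map_ne_zero_iff T hT).mpr ((map_ne_zero_iff T hT).mpr hv.2))
  refine ⟨n, ?_⟩
  rw [← translationNumber_of_eq_add_int (f := g ^ 2) (x := x) (by rw [coe_pow]; exact hn),
    translationNumber_pow]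
  norm_num

lemma exists_translationNumber_eq_add_int_of_conj_rotation (hgc : Continuous g)
    (hT : Function.Injective T) {u c : ℂ} {θ : ℝ} (hu : HasAngle u θ) (hc : ‖c‖ < 1)
    (hTu : ∀ v, T v + c * conj (T v) = u * (v + c * conj v)) :
    ∃ m : ℤ, translationNumber g = θ + m := by
  have hZ (x : ℝ) : ∃ m : ℤ, shearedAngle c (g x) - (shearedAngle c x + θ) = m := by
    have hTx : T (𝐞 x) ≠ 0 := (map_ne_zero_iff T hT).mpr (Circle.coe_ne_zero _)
    have h := (hg x).add_mul_conj c
    have h' := hu.mul ((hasAngle_fourierChar x).add_mul_conj c)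
    rw [← hTu, add_comm θ] at h'
    obtain ⟨m, hm⟩ := h.exists_int h' (add_mul_conj_ne_zero hc hTx)
    exact ⟨m, by linear_combination hm⟩
  have hkc := continuous_shearedAngle hc
  obtain ⟨m, hm⟩ := hZ 0
  refine ⟨m, translationNumber_eq_of_semiconj_add (abs_shearedAngle_sub_le c) fun x => ?_⟩
  have h : shearedAngle c (g x) - (shearedAngle c x + θ) =
      shearedAngle c (g 0) - (shearedAngle c 0 + θ) := eq_of_continuous_of_forall_int
    ((hkc.comp hgc).sub (hkc.add_const θ)) hZ x 0
  rw [hm] at h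
  linear_combination h

theorem trace_eq_two_mul_cos_translationNumber (hdet : T.det = 1) (hgc : Continuous g)
    (hτ : ∀ n : ℤ, 2 * translationNumber g ≠ n) :
    LinearMap.trace ℝ ℂ T = 2 * Real.cos (2 * Real.pi * translationNumber g) := by
  have hinj : Function.Injective T :=
    (T.equivOfDetNeZero (hdet ▸ one_ne_zero)).injective
  obtain ⟨a, b, hab, htr, hdet'⟩ := exists_eq_mul_add_mul_conj T
  have ha : a.re ^ 2 < 1 := by
    by_contra! ha
    obtain ⟨μ, hμ⟩ := exists_hasEigenvalue_of_four_le_trace_sq finrank_real_complex hdet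
      (by rw [htr]; linarith)
    obtain ⟨n, hn⟩ := exists_two_mul_translationNumber_eq_int_of_hasEigenvalue hg hinj hμ
    exact hτ n hn
  obtain ⟨u, c, hu, hure, hc, hconj⟩ := exists_conj_rotation (hdet' ▸ hdet) ha
  have huθ := hasAngle_arg u
  obtain ⟨m, hm⟩ := exists_translationNumber_eq_add_int_of_conj_rotation hg hgc hinj huθ hc
    fun v => by rw [hab, hconj]
  have hu_eq : u = 𝐞 (translationNumber g) := by
    rw [hm, fourierChar_add_int]
    nth_rewrite 1 [huθ]
    rw [hu, ofReal_one, one_mul]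
  rw [htr, ← hure, hu_eq, Real.fourierChar_apply, exp_ofReal_mul_I_re]

end LiftedAngleMap

end LinearMaps

namespace SmoothDiskDiffeo

variable (φ : SmoothDiskDiffeo)

lemma bijOn : BijOn φ.toFun Disk Disk :=
  InvOn.bijOn ⟨φ.left_inv, φ.right_inv⟩ φ.mapsTo φ.mapsTo_inv

lemma hasFDerivWithinAt {z : ℂ} (hz : z ∈ Disk) :
    HasFDerivWithinAt φ.toFun (fderivWithin ℝ φ.toFun Disk z) Disk z :=
  (φ.smooth.differentiableOn (by simp) z hz).hasFDerivWithinAt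

lemma isAreaPreservingDiskHomeo
    (harea : ∀ z ∈ Disk, (fderivWithin ℝ φ.toFun Disk z).det = 1) (hfix : φ.toFun 0 = 0)
    {f : ℝ → ℝ} (hf_cont : Continuous f) (hf_lift : ∀ x, f (x + 1) = f x + 1)
    (hf_proj : ∀ x, φ.toFun (𝐞 x) = 𝐞 (f x)) :
    IsAreaPreservingDiskHomeo φ.toFun (fderivWithin ℝ φ.toFun Disk 0) f where
  continuousOn := φ.smooth.continuousOn
  bijOn := φ.bijOn
  volume_image B hB hBmeas := by
    rw [addHaar_image_eq_mul_of_abs_det_eq MeasureTheory.volume hBmeas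
      (fun z hz => (φ.hasFDerivWithinAt (hB hz)).mono hB) (φ.bijOn.injOn.mono hB)
      (fun z hz => by rw [harea z (hB hz), abs_one]), ENNReal.ofReal_one, one_mul]
  map_zero := hfix
  hasFDerivAt := (φ.hasFDerivWithinAt (mem_closedBall_self zero_le_one)).hasFDerivAt
    (closedBall_mem_nhds 0 one_pos)
  det_eq_one := harea 0 (mem_closedBall_self zero_le_one)
  continuous_lift := hf_cont
  lift_add_one := hf_lift
  map_fourierChar := hf_proj

end SmoothDiskDiffeo

theorem eigenvalues_of_pseudorotation_general {φ : ℂ → ℂ} {A : ℂ →L[ℝ] ℂ} {f : ℝ → ℝ} {x₀ α : ℝ}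
    (hφ : IsAreaPreservingDiskHomeo φ A f)
    (hper : ∀ z ∈ Disk, z ≠ 0 → ∀ n : ℕ, 1 ≤ n → φ^[n] z ≠ z)
    (hα : Tendsto (fun n : ℕ => (f^[n] x₀ - x₀) / n) atTop (nhds α)) :
    {μ : ℂ | ((LinearMap.toMatrix Complex.basisOneI Complex.basisOneI
        (A : ℂ →ₗ[ℝ] ℂ)).map (algebraMap ℝ ℂ)).charpoly.IsRoot μ} =
      {cexp ((2 * Real.pi * α) * I), cexp (-((2 * Real.pi * α)) * I)} := by
  obtain ⟨g, hg_cont, hg, hgα⟩ := hφ.exists_lift_derivative hper hα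
  have hirr (n : ℤ) : 2 * g.translationNumber ≠ n := by
    rw [hgα]
    exact hφ.mul_ne_intCast hper hα one_le_two n
  have htr := trace_eq_two_mul_cos_translationNumber hg hφ.det_eq_one hg_cont hirr
  refine setOf_isRoot_charpoly_eq_pair finrank_real_complex Complex.basisOneI ?_ ?_
  · rw [htr, hgα, ← Complex.two_cos]
    simp
  · have hdet : LinearMap.det (A : ℂ →ₗ[ℝ] ℂ) = 1 := hφ.det_eq_one
    rw [hdet, map_one, ← exp_add, neg_mul, add_neg_cancel, exp_zero]

/-- **The eigenvalues of the linearization of an irrational pseudo-rotation at its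
fixed point are `e^{±2πiα}`, where `α` is the translation number of (any lift of)
the boundary restriction.** -/
theorem eigenvalues_of_pseudorotation (φ : SmoothDiskDiffeo)
    (harea : ∀ z ∈ Disk, (fderivWithin ℝ φ.toFun Disk z).det = 1)
    (hfix : φ.toFun 0 = 0)
    (hper : ∀ z ∈ Disk, z ≠ 0 → ∀ n : ℕ, 1 ≤ n → φ.toFun^[n] z ≠ z)
    (f : ℝ → ℝ) (α : ℝ)
    (hf_cont : Continuous f)
    (hf_lift : ∀ x : ℝ, f (x + 1) = f x + 1)
    (hf_proj : ∀ x : ℝ,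
      φ.toFun (Complex.exp ((2 * Real.pi * x) * Complex.I)) =
        Complex.exp ((2 * Real.pi * f x) * Complex.I))
    (hα : ∀ x : ℝ, Tendsto (fun n : ℕ => (f^[n] x - x) / n) atTop (nhds α)) :
    {μ : ℂ | ((derivMatrix φ).map (algebraMap ℝ ℂ)).charpoly.IsRoot μ} =
      {Complex.exp ((2 * Real.pi * α) * Complex.I),
       Complex.exp (-((2 * Real.pi * α)) * Complex.I)} := by
  have hφ := φ.isAreaPreservingDiskHomeo harea hfix hf_cont hf_lift fun x => by
    simpa [Real.fourierChar_apply] using hf_proj x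
  exact eigenvalues_of_pseudorotation_general hφ hper (hα 0)
end
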